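/- Let d ≥ 2 and α ∈ (0, 1/3), and let u be the vector field of the main anomalous-diffusion theorem. There exists a sequence κ_j → 0 of positive numbers, depending only on α and d (not on the initial datum), such that, setting 𝒦 := ∪_{j≥1} [κ_j/2, 2κ_j], for every zero-mean θ_in ∈ H¹(T^d) with its associated constant ϱ > 0 one has inf_{κ ∈ 𝒦} κ ∫_0^1 ∫_{T^d} |∇θ^κ(t,x)|² dx dt ≥ ϱ ‖θ_in‖²_{L²(T^d)}, where θ^κ denotes the solution of the advection–diffusion equation ∂_t θ^κ + u·∇θ^κ = κΔθ^κ with θ^κ(0,·) = θ_in. -/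

import Mathlib

open MeasureTheory Real Topology Filter

noncomputable section

/-- Spatial partial derivative `∂_i f` (via the Fréchet derivative). -/
def pd {d : ℕ} (f : (Fin d → ℝ) → ℝ) (i : Fin d) (x : Fin d → ℝ) : ℝ :=
  fderiv ℝ f x (Pi.single i 1)

/-- The unit box `[0,1]^d`, a fundamental domain for the torus `T^d = ℝ^d/ℤ^d`. -/
def box (d : ℕ) : Set (Fin d → ℝ) := Set.Icc 0 1

/-- `ℤ^d`-periodicity in the space variable (functions on the torus `T^d`). -/
def SpacePeriodic {d : ℕ} (f : (Fin d → ℝ) → ℝ) : Prop :=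
  ∀ (x : Fin d → ℝ) (k : Fin d → ℤ), f (x + fun i => (k i : ℝ)) = f x

/-- Squared length of the spatial gradient, `|∇f|²(x)`. -/
def gradSq {d : ℕ} (f : (Fin d → ℝ) → ℝ) (x : Fin d → ℝ) : ℝ :=
  ∑ i, (pd f i x) ^ 2

/-- Squared `L²(T^d)` norm. -/
def l2sq {d : ℕ} (f : (Fin d → ℝ) → ℝ) : ℝ := ∫ x in box d, (f x) ^ 2

/-- The dissipation `∫_0^t ‖∇θ(s,·)‖²_{L²(T^d)} ds`. -/
def dissipUpTo {d : ℕ} (θ : ℝ → (Fin d → ℝ) → ℝ) (t : ℝ) : ℝ :=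
  ∫ s in Set.Icc (0:ℝ) t, ∫ x in box d, gradSq (θ s) x

/-- The dissipation `∫_0^1 ∫_{T^d} |∇θ|² dx dt`. -/
def dissip {d : ℕ} (θ : ℝ → (Fin d → ℝ) → ℝ) : ℝ := dissipUpTo θ 1

/-- A solution of the advection–diffusion equation `∂_t θ + u·∇θ = κΔθ` on
`(0,1] × T^d` with initial datum `θ_in`: continuous on `[0,1] × T^d`, spatially
periodic, `C¹` in time and `C²` in space on `(0,1] × T^d`, solving the equation
pointwise there. -/
structure IsAdvDiffSol {d : ℕ} (u : ℝ → (Fin d → ℝ) → Fin d → ℝ) (κ : ℝ)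
    (θin : (Fin d → ℝ) → ℝ) (θ : ℝ → (Fin d → ℝ) → ℝ) : Prop where
  periodic : ∀ t, SpacePeriodic (θ t)
  cont : ContinuousOn (fun p : ℝ × (Fin d → ℝ) => θ p.1 p.2)
    (Set.Icc 0 1 ×ˢ Set.univ)
  init : ∀ x, θ 0 x = θin x
  timeDiff : ∀ t ∈ Set.Ioc (0:ℝ) 1, ∀ x, DifferentiableAt ℝ (fun s => θ s x) t
  spaceC2 : ∀ t ∈ Set.Ioc (0:ℝ) 1, ContDiff ℝ 2 (θ t)
  eqn : ∀ t ∈ Set.Ioc (0:ℝ) 1, ∀ x,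
    deriv (fun s => θ s x) t + ∑ i, u t x i * pd (θ t) i x
      = κ * ∑ i, pd (pd (θ t) i) i x

/-- `u ∈ C^0_t C^α_x ∩ C^α_t C^0_x` on `[0,1] × T^d`: continuity plus uniform
Hölder bounds in space and in time. -/
def HolderVF {d : ℕ} (α : ℝ) (u : ℝ → (Fin d → ℝ) → Fin d → ℝ) : Prop :=
  Continuous (fun p : ℝ × (Fin d → ℝ) => u p.1 p.2) ∧
  ∃ A : ℝ, ∀ s ∈ Set.Icc (0:ℝ) 1, ∀ t ∈ Set.Icc (0:ℝ) 1, ∀ x y : Fin d → ℝ,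
    ‖u t x - u t y‖ ≤ A * ‖x - y‖ ^ α ∧ ‖u t x - u s x‖ ≤ A * |t - s| ^ α

/-- `u(t,·)` is divergence-free on `T^d` in the sense of distributions:
`∫_{T^d} u(t,x)·∇φ(x) dx = 0` for every smooth periodic `φ`. -/
def WeakDivFree {d : ℕ} (u : ℝ → (Fin d → ℝ) → Fin d → ℝ) : Prop :=
  ∀ t ∈ Set.Icc (0:ℝ) 1, ∀ φ : (Fin d → ℝ) → ℝ, ContDiff ℝ (⊤ : ℕ∞) φ →
    SpacePeriodic φ → (∫ x in box d, ∑ i, u t x i * pd φ i x) = 0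

/-- `g` is the (square-integrable) weak gradient of `f` on `T^d`:
`∫ f div ψ = −∫ g·ψ` for all smooth periodic vector fields `ψ`. -/
def HasWeakGradient {d : ℕ} (f : (Fin d → ℝ) → ℝ)
    (g : (Fin d → ℝ) → Fin d → ℝ) : Prop :=
  ∀ ψ : (Fin d → ℝ) → Fin d → ℝ,
    (∀ i, ContDiff ℝ (⊤ : ℕ∞) fun x => ψ x i) →
    (∀ i, SpacePeriodic fun x => ψ x i) →
    (∫ x in box d, f x * ∑ i, pd (fun y => ψ y i) i x)
      = - ∫ x in box d, ∑ i, g x i * ψ x i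

abbrev ee {d : ℕ} (i : Fin d) : Fin d → ℝ := Pi.single i 1

/-- integral over the box -/
def bI {d : ℕ} (g : (Fin d → ℝ) → ℝ) : ℝ := ∫ x in box d, g x

lemma box_compact (d : ℕ) : IsCompact (box d) := by
  unfold box; exact isCompact_Icc

lemma box_meas (d : ℕ) : MeasurableSet (box d) := by
  unfold box; exact measurableSet_Icc

lemma box_vol (d : ℕ) : volume (box d) = 1 := by
  unfold box
  rw [Real.volume_Icc_pi]; simp

lemma box_int {d : ℕ} {g : (Fin d → ℝ) → ℝ} (hg : Continuous g) : IntegrableOn g (box d) :=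
  hg.continuousOn.integrableOn_compact (box_compact d)

lemma bI_add {d : ℕ} {f g : (Fin d → ℝ) → ℝ} (hf : Continuous f) (hg : Continuous g) :
    bI (fun x => f x + g x) = bI f + bI g := integral_add (box_int hf) (box_int hg)

lemma bI_sub {d : ℕ} {f g : (Fin d → ℝ) → ℝ} (hf : Continuous f) (hg : Continuous g) :
    bI (fun x => f x - g x) = bI f - bI g := integral_sub (box_int hf) (box_int hg)

lemma bI_mul {d : ℕ} (c : ℝ) (f : (Fin d → ℝ) → ℝ) :
    bI (fun x => c * f x) = c * bI f := integral_const_mul c f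

lemma bI_neg {d : ℕ} (f : (Fin d → ℝ) → ℝ) :
    bI (fun x => - f x) = - bI f := integral_neg f

lemma bI_const {d : ℕ} (c : ℝ) : bI (fun _ : Fin d → ℝ => c) = c := by
  unfold bI; simp [Measure.real, box_vol]

lemma bI_sum {d : ℕ} {ι : Type*} (s : Finset ι) {f : ι → (Fin d → ℝ) → ℝ}
    (hf : ∀ i, Continuous (f i)) :
    bI (fun x => ∑ i ∈ s, f i x) = ∑ i ∈ s, bI (f i) :=
  integral_finsetSum s (fun i _ => box_int (hf i))

lemma bI_mono {d : ℕ} {f g : (Fin d → ℝ) → ℝ} (hf : Continuous f) (hg : Continuous g)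
    (h : ∀ x, f x ≤ g x) : bI f ≤ bI g :=
  integral_mono (box_int hf) (box_int hg) h

lemma bI_nonneg {d : ℕ} {f : (Fin d → ℝ) → ℝ} (h : ∀ x, 0 ≤ f x) : 0 ≤ bI f :=
  integral_nonneg h

/-- continuity of an integral in one direction -/
lemma cont_avg {d : ℕ} {G : (Fin d → ℝ) → ℝ → ℝ}
    (hG : Continuous (fun p : (Fin d → ℝ) × ℝ => G p.1 p.2)) :
    Continuous (fun x => ∫ r in (0:ℝ)..1, G x r) :=
  intervalIntegral.continuous_parametric_intervalIntegral_of_continuous' hG 0 1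

lemma bI_swap {d : ℕ} {G : (Fin d → ℝ) → ℝ → ℝ}
    (hG : Continuous (fun p : (Fin d → ℝ) × ℝ => G p.1 p.2)) :
    bI (fun x => ∫ r in (0:ℝ)..1, G x r) = ∫ r in (0:ℝ)..1, bI (fun x => G x r) := by
  unfold bI
  simp_rw [intervalIntegral.integral_of_le (zero_le_one : (0:ℝ) ≤ 1)]
  apply integral_integral_swap
  rw [Measure.prod_restrict]
  have : IntegrableOn (fun p : (Fin d → ℝ) × ℝ => G p.1 p.2) (box d ×ˢ Set.Icc (0:ℝ) 1) :=
    hG.continuousOn.integrableOn_compact ((box_compact d).prod isCompact_Icc)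
  exact this.mono_set (Set.prod_mono le_rfl Set.Ioc_subset_Icc_self)

lemma bI_slice {n : ℕ} (i : Fin (n+1)) {g : (Fin (n+1) → ℝ) → ℝ} (hg : Continuous g) :
    bI g = bI (fun y : Fin n → ℝ => ∫ r in (0:ℝ)..1, g (i.insertNth r y)) := by
  have hc : Continuous (fun p : (Fin n → ℝ) × ℝ => g (i.insertNth p.2 p.1)) := by
    apply hg.comp
    exact Continuous.finInsertNth i continuous_snd continuous_fst
  have e := (volume_preserving_piFinSuccAbove (fun _ : Fin (n+1) => ℝ) i)
  have hs : box (n+1) = (MeasurableEquiv.piFinSuccAbove (fun _ : Fin (n+1) => ℝ) i) ⁻¹'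
      (Set.Icc (0:ℝ) 1 ×ˢ box n) := by
    ext x
    simp only [box, Set.mem_Icc, Set.mem_preimage, Set.mem_prod, Pi.le_def]
    simp only [MeasurableEquiv.piFinSuccAbove_apply, Fin.insertNthEquiv]
    rw [Fin.forall_iff_succAbove i, Fin.forall_iff_succAbove (P := fun j => x j ≤ (1 : Fin (n+1) → ℝ) j) i]
    simp [Fin.removeNth]
    tauto
  have h1 : bI g = ∫ p in (Set.Icc (0:ℝ) 1 ×ˢ box n), g (i.insertNth p.1 p.2) := by
    unfold bI
    rw [hs]
    rw [← e.setIntegral_preimage_emb (MeasurableEquiv.measurableEmbedding _)]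
    apply integral_congr_ae
    apply Eventually.of_forall
    intro x
    simp [Fin.insertNthEquiv]
  have hc2 : Continuous (fun p : ℝ × (Fin n → ℝ) => g (i.insertNth p.1 p.2)) := by
    apply hg.comp
    exact Continuous.finInsertNth i continuous_fst continuous_snd
  have hint : IntegrableOn (fun p : ℝ × (Fin n → ℝ) => g (i.insertNth p.1 p.2))
      (Set.Icc (0:ℝ) 1 ×ˢ box n) (volume.prod volume) :=
    hc2.continuousOn.integrableOn_compact (isCompact_Icc.prod (box_compact n))
  rw [h1, bI_swap (G := fun y r => g (i.insertNth r y)) hc]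
  have := setIntegral_prod _ hint
  rw [intervalIntegral.integral_of_le zero_le_one, ← integral_Icc_eq_integral_Ioc]
  exact this

lemma insertNth_add {n : ℕ} (i : Fin (n+1)) (r s : ℝ) (y : Fin n → ℝ) :
    (i.insertNth r y : Fin (n+1) → ℝ) + s • ee i = i.insertNth (r + s) y := by
  ext j
  rcases Fin.eq_self_or_eq_succAbove i j with h | ⟨k, rfl⟩
  · subst h; simp
  · simp [Fin.succAbove_ne]

lemma per_one {d : ℕ} {g : (Fin d → ℝ) → ℝ} (hp : SpacePeriodic g) (i : Fin d) (x) (r : ℝ) :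
    g (x + (r + 1) • ee i) = g (x + r • ee i) := by
  have := hp (x + r • ee i) (Pi.single i 1)
  rw [← this]
  congr 1
  ext j
  by_cases h : j = i
  · subst h; simp; ring
  · simp [h]

lemma per_int {d : ℕ} {g : (Fin d → ℝ) → ℝ} (hp : SpacePeriodic g) (i : Fin d) (x) (c : ℝ) :
    ∫ r in (0:ℝ)..1, g (x + (r + c) • ee i) = ∫ r in (0:ℝ)..1, g (x + r • ee i) := by
  have hper : Function.Periodic (fun r : ℝ => g (x + r • ee i)) 1 := fun r => per_one hp i x r
  rw [intervalIntegral.integral_comp_add_right (fun r => g (x + r • ee i))]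
  have := hper.intervalIntegral_add_eq c 0
  simpa [add_comm] using this

lemma bI_shift1 {d : ℕ} (i : Fin d) {g : (Fin d → ℝ) → ℝ} (hg : Continuous g)
    (hp : SpacePeriodic g) (c : ℝ) : bI (fun x => g (x + c • ee i)) = bI g := by
  obtain ⟨n, rfl⟩ : ∃ n, d = n + 1 := ⟨d - 1, by have := i.2; omega⟩
  rw [bI_slice i hg, bI_slice i (g := fun x => g (x + c • ee i)) (by fun_prop)]
  congr 1
  ext y
  have h := per_int hp i (i.insertNth 0 y) c
  simp only [insertNth_add, zero_add] at h ⊢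
  exact h

lemma bI_avg {d : ℕ} (i : Fin d) {g : (Fin d → ℝ) → ℝ} (hg : Continuous g)
    (hp : SpacePeriodic g) : bI (fun x => ∫ r in (0:ℝ)..1, g (x + r • ee i)) = bI g := by
  rw [bI_swap (G := fun x r => g (x + r • ee i)) (hg.comp (by fun_prop))]
  simp_rw [bI_shift1 i hg hp]
  simp

/-- shear invariance -/
lemma bI_shear {d : ℕ} (i : Fin d) {g : (Fin d → ℝ) → ℝ} (hg : Continuous g)
    (hp : SpacePeriodic g) {c : (Fin d → ℝ) → ℝ} (hc : Continuous c) (hcp : SpacePeriodic c)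
    (hci : ∀ x (r : ℝ), c (x + r • ee i) = c x) :
    bI (fun x => g (x + c x • ee i)) = bI g := by
  have hp2 : SpacePeriodic (fun x => g (x + c x • ee i)) := by
    intro x k
    simp only [hcp x k]
    rw [show x + (fun i => (k i:ℝ)) + c x • ee i = (x + c x • ee i) + fun i => (k i : ℝ) by abel]
    exact hp _ k
  rw [← bI_avg i (g := fun x => g (x + c x • ee i)) (by fun_prop) hp2, ← bI_avg i hg hp]
  congr 1
  ext x
  rw [← per_int hp i x (c x)]
  apply intervalIntegral.integral_congr
  intro r _
  simp only
  rw [hci, add_smul, add_assoc]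

lemma sp_shift {d : ℕ} {g : (Fin d → ℝ) → ℝ} (hp : SpacePeriodic g) (v : Fin d → ℝ) :
    SpacePeriodic (fun x => g (x + v)) := by
  intro x k
  simp only
  rw [add_right_comm]
  exact hp _ k

lemma sp_mul {d : ℕ} {f g : (Fin d → ℝ) → ℝ} (hf : SpacePeriodic f) (hg : SpacePeriodic g) :
    SpacePeriodic (fun x => f x * g x) := by
  intro x k; simp only [hf x k, hg x k]

lemma sp_add {d : ℕ} {f g : (Fin d → ℝ) → ℝ} (hf : SpacePeriodic f) (hg : SpacePeriodic g) :
    SpacePeriodic (fun x => f x + g x) := by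
  intro x k; simp only [hf x k, hg x k]

lemma sp_sub {d : ℕ} {f g : (Fin d → ℝ) → ℝ} (hf : SpacePeriodic f) (hg : SpacePeriodic g) :
    SpacePeriodic (fun x => f x - g x) := by
  intro x k; simp only [hf x k, hg x k]

lemma sp_pow {d : ℕ} {f : (Fin d → ℝ) → ℝ} (hf : SpacePeriodic f) (n : ℕ) :
    SpacePeriodic (fun x => f x ^ n) := by
  intro x k; simp only [hf x k]

lemma sp_const {d : ℕ} (c : ℝ) : SpacePeriodic (fun _ : Fin d → ℝ => c) := by
  intro x k; rfl

lemma sp_cmul {d : ℕ} {f : (Fin d → ℝ) → ℝ} (hf : SpacePeriodic f) (c : ℝ) :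
    SpacePeriodic (fun x => c * f x) := by
  intro x k; simp only [hf x k]

lemma sp_pd {d : ℕ} {f : (Fin d → ℝ) → ℝ} (hf : SpacePeriodic f) (i : Fin d) :
    SpacePeriodic (pd f i) := by
  intro x k
  unfold pd
  have : (fun y => f (y + fun i => (k i : ℝ))) = f := funext fun y => hf y k
  conv_rhs => rw [← this]
  rw [fderiv_comp_add_right]

lemma sp_avg {d : ℕ} {f : (Fin d → ℝ) → ℝ} (hf : SpacePeriodic f) (i : Fin d) (c : ℝ → ℝ) :
    SpacePeriodic (fun x => ∫ r in (0:ℝ)..1, c r * f (x + r • ee i)) := by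
  intro x k
  simp only
  congr 1
  ext r
  have h := sp_shift hf (r • ee i) x k
  simp only at h
  rw [h]

lemma sp_coord {d : ℕ} {F : ℝ → ℝ} (hF : Function.Periodic F 1) (j : Fin d) (N : ℕ) :
    SpacePeriodic (fun x : Fin d → ℝ => F (N * x j)) := by
  intro x k
  simp only [Pi.add_apply, mul_add]
  have := hF.int_mul ((N:ℤ) * k j) ((N:ℝ) * x j)
  simpa using this

lemma cp_pd {d : ℕ} {f : (Fin d → ℝ) → ℝ} (hf : ContDiff ℝ 1 f) (i : Fin d) :
    Continuous (pd f i) := by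
  unfold pd
  exact (hf.continuous_fderiv (by norm_num)).clm_apply continuous_const

lemma pd_c1 {d : ℕ} {f : (Fin d → ℝ) → ℝ} (hf : ContDiff ℝ 2 f) (i : Fin d) :
    ContDiff ℝ 1 (pd f i) := by
  unfold pd
  exact (hf.fderiv_right (m := 1) (by norm_num)).clm_apply contDiff_const

/-- directional derivative -/
lemma pd_line {d : ℕ} {f : (Fin d → ℝ) → ℝ} (hf : Differentiable ℝ f) (i : Fin d) (x) (s : ℝ) :
    HasDerivAt (fun r : ℝ => f (x + r • ee i)) (pd f i (x + s • ee i)) s := by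
  have h1 : HasDerivAt (fun r : ℝ => x + r • ee i) (ee i) s := by
    have := ((hasDerivAt_id s).smul_const (ee i)).const_add x
    simpa using this
  exact (hf _).hasFDerivAt.comp_hasDerivAt s h1

lemma int_pd_line {d : ℕ} {f : (Fin d → ℝ) → ℝ} (hf : ContDiff ℝ 1 f) (hp : SpacePeriodic f)
    (i : Fin d) (x) : ∫ r in (0:ℝ)..1, pd f i (x + r • ee i) = 0 := by
  rw [intervalIntegral.integral_eq_sub_of_hasDerivAt
    (fun r _ => pd_line (hf.differentiable (by norm_num)) i x r)]
  · have := per_one hp i x 0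
    rw [zero_add] at this
    rw [this, sub_self]
  · have h := cp_pd hf i
    exact Continuous.intervalIntegrable (by fun_prop) _ _

lemma bI_avg_c {d : ℕ} (i : Fin d) {g : (Fin d → ℝ) → ℝ} (hg : Continuous g)
    (hp : SpacePeriodic g) (h : ∀ x, ∫ r in (0:ℝ)..1, g (x + r • ee i) = 0) : bI g = 0 := by
  rw [← bI_avg i hg hp]
  simp_rw [h]
  exact bI_const 0

/-- weighted by a function independent of x_i -/
lemma bI_pd_indep {d : ℕ} {f c : (Fin d → ℝ) → ℝ} (hf : ContDiff ℝ 1 f) (hp : SpacePeriodic f)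
    (i : Fin d) (hc : Continuous c) (hcp : SpacePeriodic c)
    (hci : ∀ x (r : ℝ), c (x + r • ee i) = c x) : bI (fun x => c x * pd f i x) = 0 := by
  have h := cp_pd hf i
  apply bI_avg_c i (by fun_prop) (sp_mul hcp (sp_pd hp i))
  intro x
  simp_rw [hci x]
  rw [intervalIntegral.integral_const_mul, int_pd_line hf hp, mul_zero]

lemma bI_pd {d : ℕ} {f : (Fin d → ℝ) → ℝ} (hf : ContDiff ℝ 1 f) (hp : SpacePeriodic f)
    (i : Fin d) : bI (pd f i) = 0 := by
  have := bI_pd_indep hf hp i (c := fun _ => 1) continuous_const (sp_const 1) (fun _ _ => rfl)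
  simpa using this

lemma pd_mul {d : ℕ} {f g : (Fin d → ℝ) → ℝ} (hf : Differentiable ℝ f) (hg : Differentiable ℝ g)
    (i : Fin d) (x) : pd (fun x => f x * g x) i x = f x * pd g i x + g x * pd f i x := by
  unfold pd
  rw [fderiv_fun_mul (hf x) (hg x)]
  simp

lemma pd_sub {d : ℕ} {f g : (Fin d → ℝ) → ℝ} (hf : Differentiable ℝ f) (hg : Differentiable ℝ g)
    (i : Fin d) (x) : pd (fun x => f x - g x) i x = pd f i x - pd g i x := by
  unfold pd
  rw [fderiv_fun_sub (hf x) (hg x)]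
  simp

lemma pd_shift {d : ℕ} (f : (Fin d → ℝ) → ℝ) (v : Fin d → ℝ)
    (i : Fin d) (x) : pd (fun x => f (x + v)) i x = pd f i (x + v) := by
  unfold pd
  rw [fderiv_comp_add_right]

lemma bI_ibp {d : ℕ} {f g : (Fin d → ℝ) → ℝ} (hf : ContDiff ℝ 1 f) (hg : ContDiff ℝ 1 g)
    (hpf : SpacePeriodic f) (hpg : SpacePeriodic g) (i : Fin d) :
    bI (fun x => f x * pd g i x) = - bI (fun x => g x * pd f i x) := by
  have h1 := bI_pd (hf.mul hg) (sp_mul hpf hpg) i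
  have h2 : (pd (fun x => f x * g x) i) = fun x => f x * pd g i x + g x * pd f i x :=
    funext fun x => pd_mul (hf.differentiable (by norm_num)) (hg.differentiable (by norm_num)) i x
  rw [h2, bI_add] at h1
  · linarith
  · exact hf.continuous.mul (cp_pd hg i)
  · exact hg.continuous.mul (cp_pd hf i)

/-- L2 norm -/
def nr {d : ℕ} (f : (Fin d → ℝ) → ℝ) : ℝ := √(bI (fun x => f x ^ 2))

lemma nr_nonneg {d : ℕ} (f : (Fin d → ℝ) → ℝ) : 0 ≤ nr f := Real.sqrt_nonneg _

lemma nr_sq {d : ℕ} (f : (Fin d → ℝ) → ℝ) : nr f ^ 2 = bI (fun x => f x ^ 2) :=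
  Real.sq_sqrt (bI_nonneg fun _ => sq_nonneg _)

lemma bI_cs {d : ℕ} {f g : (Fin d → ℝ) → ℝ} (hf : Continuous f) (hg : Continuous g) :
    |bI (fun x => f x * g x)| ≤ nr f * nr g := by
  have key : ∀ s : ℝ, 0 ≤ bI (fun x => g x ^ 2) * (s * s) + (2 * bI (fun x => f x * g x)) * s
      + bI (fun x => f x ^ 2) := by
    intro s
    have h : 0 ≤ bI (fun x => (f x + s * g x) ^ 2) := bI_nonneg fun _ => sq_nonneg _
    have e : (fun x => (f x + s * g x) ^ 2)
      = fun x => (s * s) * g x ^ 2 + ((2 * s) * (f x * g x) + f x ^ 2) := by ext x; ring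
    rw [e, bI_add (by fun_prop) (by fun_prop), bI_add (by fun_prop) (by fun_prop), bI_mul, bI_mul] at h
    linarith
  have hd := discrim_le_zero key
  unfold discrim at hd
  rw [← nr_sq, ← nr_sq] at hd
  apply abs_le_of_sq_le_sq _ (mul_nonneg (nr_nonneg _) (nr_nonneg _))
  nlinarith

lemma nr_add {d : ℕ} {f g : (Fin d → ℝ) → ℝ} (hf : Continuous f) (hg : Continuous g) :
    nr (fun x => f x + g x) ≤ nr f + nr g := by
  apply abs_le_of_sq_le_sq' _ (add_nonneg (nr_nonneg _) (nr_nonneg _)) |>.2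
  have e : (fun x => (f x + g x) ^ 2)
      = fun x => g x ^ 2 + ((2) * (f x * g x) + f x ^ 2) := by ext x; ring
  rw [nr_sq, e, bI_add (by fun_prop) (by fun_prop), bI_add (by fun_prop) (by fun_prop), bI_mul]
  have h := le_of_abs_le (bI_cs hf hg)
  rw [← nr_sq, ← nr_sq]
  nlinarith

lemma nr_cmul {d : ℕ} (c : ℝ) (f : (Fin d → ℝ) → ℝ) :
    nr (fun x => c * f x) = |c| * nr f := by
  unfold nr
  simp_rw [mul_pow]
  rw [bI_mul, Real.sqrt_mul (sq_nonneg c), Real.sqrt_sq_eq_abs]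

lemma nr_neg {d : ℕ} (f : (Fin d → ℝ) → ℝ) :
    nr (fun x => - f x) = nr f := by
  unfold nr
  simp_rw [neg_sq]

lemma nr_sub {d : ℕ} {f g : (Fin d → ℝ) → ℝ} (hf : Continuous f) (hg : Continuous g) :
    nr (fun x => f x - g x) ≤ nr f + nr g := by
  have h := nr_add hf (g := fun x => - g x) (by fun_prop)
  have e : (fun x => f x + - g x) = fun x => f x - g x := by ext x; ring
  rwa [nr_neg, e] at h

lemma nr_mono {d : ℕ} {f g : (Fin d → ℝ) → ℝ} (hf : Continuous f) (hg : Continuous g)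
    (h : ∀ x, |f x| ≤ g x) : nr f ≤ nr g := by
  apply Real.sqrt_le_sqrt
  apply bI_mono (by fun_prop) (by fun_prop)
  intro x
  exact sq_le_sq' (neg_le_of_abs_le (h x)) (le_of_abs_le (h x))

lemma nr_const {d : ℕ} (c : ℝ) : nr (fun _ : Fin d → ℝ => c) = |c| := by
  unfold nr
  rw [bI_const, Real.sqrt_sq_eq_abs]

lemma nr_le_sup {d : ℕ} {f : (Fin d → ℝ) → ℝ} (hf : Continuous f) {c : ℝ} 
    (h : ∀ x, |f x| ≤ c) : nr f ≤ c := by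
  have := nr_mono hf (continuous_const (y := c)) h
  rw [nr_const] at this
  rwa [abs_of_nonneg ((abs_nonneg _).trans (h 0))] at this

lemma nr_shear {d : ℕ} (i : Fin d) {g : (Fin d → ℝ) → ℝ} (hg : Continuous g)
    (hp : SpacePeriodic g) {c : (Fin d → ℝ) → ℝ} (hc : Continuous c) (hcp : SpacePeriodic c)
    (hci : ∀ x (r : ℝ), c (x + r • ee i) = c x) :
    nr (fun x => g (x + c x • ee i)) = nr g := by
  unfold nr
  rw [bI_shear i (g := fun x => g x ^ 2) (by fun_prop) (sp_pow hp 2) hc hcp hci]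

lemma nr_shift1 {d : ℕ} (i : Fin d) {g : (Fin d → ℝ) → ℝ} (hg : Continuous g)
    (hp : SpacePeriodic g) (c : ℝ) : nr (fun x => g (x + c • ee i)) = nr g :=
  nr_shear i hg hp continuous_const (sp_const c) (fun _ _ => rfl)

/-- Jensen in one dimension -/
lemma sq_int_le {h : ℝ → ℝ} (hh : Continuous h) :
    (∫ r in (0:ℝ)..1, h r) ^ 2 ≤ ∫ r in (0:ℝ)..1, h r ^ 2 := by
  set m := ∫ r in (0:ℝ)..1, h r with hm
  have h0 : 0 ≤ ∫ r in (0:ℝ)..1, (h r - m) ^ 2 :=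
    intervalIntegral.integral_nonneg (by norm_num) (fun r _ => sq_nonneg _)
  have e : (fun r => (h r - m) ^ 2) = fun r => (h r ^ 2 - (2 * m) * h r) + m ^ 2 := by
    ext r; ring
  rw [e, intervalIntegral.integral_add, intervalIntegral.integral_sub,
    intervalIntegral.integral_const_mul, ← hm] at h0
  · simp at h0; nlinarith
  all_goals exact Continuous.intervalIntegrable (by fun_prop) _ _

/-- weighted averaging along direction i -/
def Lc {d : ℕ} (c : ℝ → ℝ) (i : Fin d) (f : (Fin d → ℝ) → ℝ) (x : Fin d → ℝ) : ℝ :=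
  ∫ r in (0:ℝ)..1, c r * f (x + r • ee i)

lemma Lc_cont {d : ℕ} {c : ℝ → ℝ} (hc : Continuous c) (i : Fin d) {f : (Fin d → ℝ) → ℝ}
    (hf : Continuous f) : Continuous (Lc c i f) :=
  cont_avg (G := fun x r => c r * f (x + r • ee i)) (by fun_prop)

lemma Lc_per {d : ℕ} {c : ℝ → ℝ} (i : Fin d) {f : (Fin d → ℝ) → ℝ}
    (hf : SpacePeriodic f) : SpacePeriodic (Lc c i f) := sp_avg hf i c

lemma Lc_nr {d : ℕ} {c : ℝ → ℝ} (hc : Continuous c) (i : Fin d) {f : (Fin d → ℝ) → ℝ}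
    (hf : Continuous f) (hp : SpacePeriodic f) (h1 : ∀ r ∈ Set.Icc (0:ℝ) 1, |c r| ≤ 1) :
    nr (Lc c i f) ≤ nr f := by
  apply Real.sqrt_le_sqrt
  have h := Lc_cont hc i hf
  calc bI (fun x => Lc c i f x ^ 2) ≤ bI (fun x => ∫ r in (0:ℝ)..1, (f (x + r • ee i)) ^ 2) := by
        apply bI_mono (by fun_prop)
          (cont_avg (G := fun x r => f (x + r • ee i) ^ 2) (by fun_prop))
        intro x
        refine (sq_int_le (by fun_prop)).trans ?_
        apply intervalIntegral.integral_mono_on (by norm_num)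
        · exact Continuous.intervalIntegrable (by fun_prop) _ _
        · exact Continuous.intervalIntegrable (by fun_prop) _ _
        · intro r hr
          rw [mul_pow]
          have := h1 r hr
          have h2 : c r ^ 2 ≤ 1 := by
            rw [← sq_abs]; nlinarith [abs_nonneg (c r)]
          nlinarith [sq_nonneg (f (x + r • ee i))]
    _ = _ := bI_avg i (g := fun x => f x ^ 2) (by fun_prop) (sp_pow hp 2)

lemma bI_coord {d : ℕ} (j : Fin d) {F : ℝ → ℝ} (hF : Continuous F)
    (hp : Function.Periodic F 1) (N : ℕ) (hN : 0 < N) :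
    bI (fun x : Fin d → ℝ => F (N * x j)) = ∫ r in (0:ℝ)..1, F r := by
  rw [← bI_avg j (g := fun x : Fin d → ℝ => F (N * x j)) (by fun_prop) (sp_coord hp j N)]
  have : ∀ x : Fin d → ℝ, ∫ r in (0:ℝ)..1, F (N * (x + r • ee j) j) = ∫ r in (0:ℝ)..1, F r := by
    intro x
    have hN' : (N:ℝ) ≠ 0 := by positivity
    simp only [Pi.add_apply, Pi.smul_apply, Pi.single_eq_same, smul_eq_mul, mul_one, mul_add]
    have := intervalIntegral.integral_comp_add_mul F hN' ((N:ℝ) * x j) (a := 0) (b := 1)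
    rw [this]
    have h2 := hp.intervalIntegral_add_zsmul_eq (N:ℤ) ((N:ℝ) * x j) 
    simp at h2
    simp
    rw [h2 (fun _ _ => hF.intervalIntegrable _ _)]
    have h3 := hp.intervalIntegral_add_eq ((N:ℝ) * x j) 0
    simp at h3
    rw [h3]
    field_simp
  simp_rw [this]
  exact bI_const _

/-- second derivative test at a maximum, one variable -/
lemma dd_nonpos_of_max {f : ℝ → ℝ} (hf : Differentiable ℝ f) {c : ℝ}
    (hmax : ∀ s, f s ≤ f c) : deriv (deriv f) c ≤ 0 := by
  by_contra hcon
  push Not at hcon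
  have hmaxl : IsLocalMax f c := Eventually.of_forall hmax
  have h0 : deriv f c = 0 := hmaxl.deriv_eq_zero
  have hmin := isLocalMin_of_deriv_deriv_pos hcon h0 hf.continuous.continuousAt
  have hev : f =ᶠ[𝓝 c] fun _ => f c := by
    filter_upwards [hmin] with s hs
    exact le_antisymm (hmax s) hs
  have h2 : deriv f =ᶠ[𝓝 c] deriv (fun _ => f c) := hev.deriv
  have h3 := h2.deriv_eq
  simp at h3
  linarith

lemma exists_box_rep {d : ℕ} (x : Fin d → ℝ) :
    ∃ y ∈ box d, ∀ g : (Fin d → ℝ) → ℝ, SpacePeriodic g → g x = g y := by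
  refine ⟨fun i => Int.fract (x i), ?_, ?_⟩
  · simp only [box, Set.mem_Icc, Pi.le_def]
    exact ⟨fun i => Int.fract_nonneg _, fun i => (Int.fract_lt_one _).le⟩
  · intro g hg
    rw [← hg (fun i => Int.fract (x i)) (fun i => ⌊x i⌋)]
    congr 1
    ext i
    simp [Int.fract_add_floor]

lemma cp_bdd {d : ℕ} {g : (Fin d → ℝ) → ℝ} (hg : Continuous g) (hp : SpacePeriodic g) :
    ∃ K, 0 < K ∧ ∀ x, |g x| ≤ K := by
  obtain ⟨K, hK⟩ := (box_compact d).exists_bound_of_continuousOn hg.continuousOn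
  refine ⟨max K 1, by positivity, fun x => ?_⟩
  obtain ⟨y, hy, h⟩ := exists_box_rep x
  rw [h g hp]
  exact (hK y hy).trans (le_max_left _ _)

lemma mp_upper {d : ℕ} {z : ℝ → (Fin d → ℝ) → ℝ} {a b κ K m : ℝ}
    (u : ℝ → (Fin d → ℝ) → Fin d → ℝ) (hκ : 0 ≤ κ)
    (hper : ∀ t, SpacePeriodic (z t))
    (hcont : ContinuousOn (fun p : ℝ × (Fin d → ℝ) => z p.1 p.2) (Set.Icc a b ×ˢ Set.univ))
    (hC2 : ∀ t ∈ Set.Ioc a b, ContDiff ℝ 2 (z t))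
    (hdiff : ∀ t ∈ Set.Ioc a b, ∀ x, DifferentiableAt ℝ (fun s => z s x) t)
    (heq : ∀ t ∈ Set.Ioc a b, ∀ x, deriv (fun s => z s x) t + ∑ l, u t x l * pd (z t) l x
      ≤ κ * ∑ l, pd (pd (z t) l) l x + K)
    (hinit : ∀ x, z a x ≤ m) : ∀ t ∈ Set.Icc a b, ∀ x, z t x ≤ m + K * (t - a) := by
  intro t1 ht1 x1
  have main : ∀ ε > 0, z t1 x1 ≤ m + (K + ε) * (t1 - a) := by
    intro ε hε
    by_contra hcon
    push Not at hcon
    obtain ⟨y1, hy1, hrep1⟩ := exists_box_rep x1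
    have hcont2 : ContinuousOn (fun p : ℝ × (Fin d → ℝ) => z p.1 p.2 - (K + ε) * (p.1 - a))
        (Set.Icc a b ×ˢ box d) := by
      apply ContinuousOn.sub
      · exact hcont.mono (Set.prod_mono le_rfl (Set.subset_univ _))
      · fun_prop
    obtain ⟨⟨t, x⟩, ⟨ht, hx⟩, hmax⟩ := (isCompact_Icc.prod (box_compact d)).exists_isMaxOn
      ⟨(t1, y1), ht1, hy1⟩ hcont2
    simp only at ht hx
    have hmax' : ∀ s ∈ Set.Icc a b, ∀ y, z s y - (K + ε) * (s - a) ≤ z t x - (K+ε) * (t - a) := by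
      intro s hs y
      obtain ⟨y', hy', hrep⟩ := exists_box_rep y
      rw [hrep _ (hper s)]
      exact hmax (Set.mk_mem_prod hs hy')
    have hgt : m < z t x - (K+ε) * (t - a) := by
      have := hmax' t1 ht1 x1
      linarith
    have hta : a < t := by
      rcases eq_or_lt_of_le ht.1 with h | h
      · subst h
        have := hinit x
        simp at hgt
        linarith
      · exact h
    have ht' : t ∈ Set.Ioc a b := ⟨hta, ht.2⟩
    have hspace : ∀ y, z t y ≤ z t x := fun y => by have := hmax' t ht y; linarith
    have hgrad : ∀ l, pd (z t) l x = 0 := by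
      intro l
      have : IsLocalMax (z t) x := Eventually.of_forall hspace
      unfold pd
      rw [this.fderiv_eq_zero]; simp
    have hlap : ∀ l, pd (pd (z t) l) l x ≤ 0 := by
      intro l
      have hD : Differentiable ℝ (z t) := (hC2 t ht').differentiable (by norm_num)
      have hD2 : Differentiable ℝ (pd (z t) l) := (pd_c1 (hC2 t ht') l).differentiable (by norm_num)
      have h1 : ∀ s, HasDerivAt (fun r : ℝ => z t (x + r • ee l)) (pd (z t) l (x + s • ee l)) s :=
        fun s => pd_line hD l x s
      have h2 := pd_line hD2 l x 0
      have h3 : deriv (fun r : ℝ => z t (x + r • ee l)) = fun s => pd (z t) l (x + s • ee l) :=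
        funext fun s => (h1 s).deriv
      have h4 := dd_nonpos_of_max (f := fun r : ℝ => z t (x + r • ee l))
        (fun s => (h1 s).differentiableAt) (c := 0) (by intro s; simpa using hspace _)
      rw [h3, h2.deriv] at h4
      simpa using h4
    have htime : K + ε ≤ deriv (fun s => z s x) t := by
      have hd := (hdiff t ht' x).hasDerivAt
      have hs := hd.tendsto_slope
      have hs2 : Tendsto (slope (fun s => z s x) t) (𝓝[<] t) (𝓝 (deriv (fun s => z s x) t)) :=
        hs.mono_left (nhdsWithin_mono t (fun y hy => ne_of_lt hy))
      apply ge_of_tendsto hs2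
      have : Set.Ioo a t ∈ 𝓝[<] t := Ioo_mem_nhdsLT hta
      filter_upwards [this] with s hs
      rw [slope_def_field]
      have h5 := hmax' s ⟨hs.1.le, hs.2.le.trans ht.2⟩ x
      rw [← neg_sub (z t x), ← neg_sub t s, neg_div_neg_eq, le_div_iff₀ (by linarith [hs.2])]
      linarith
    have h6 := heq t ht' x
    have h7 : ∑ l, u t x l * pd (z t) l x = 0 := Finset.sum_eq_zero fun l _ => by rw [hgrad l, mul_zero]
    have h8 : κ * ∑ l, pd (pd (z t) l) l x ≤ 0 :=
      mul_nonpos_of_nonneg_of_nonpos hκ (Finset.sum_nonpos fun l _ => hlap l)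
    linarith
  by_contra hcon
  push Not at hcon
  have hta := ht1.1
  set δ := z t1 x1 - (m + K * (t1 - a)) with hδ
  have hδ0 : 0 < δ := by linarith
  have := main (δ / (2 * (t1 - a + 1))) (by have : 0 < t1 - a + 1 := by linarith
                                            positivity)
  have h9 : δ / (2 * (t1 - a + 1)) * (t1 - a) ≤ δ / 2 := by
    rw [div_mul_eq_mul_div, div_le_div_iff₀ (by linarith) (by norm_num)]
    nlinarith
  nlinarith

lemma pd_neg {d : ℕ} (f : (Fin d → ℝ) → ℝ) (i : Fin d) :
    pd (fun x => - f x) i = fun x => - pd f i x := by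
  ext x; unfold pd; rw [fderiv_fun_neg]; simp

lemma mp_abs {d : ℕ} {z : ℝ → (Fin d → ℝ) → ℝ} {a b κ K m : ℝ}
    (u : ℝ → (Fin d → ℝ) → Fin d → ℝ) (hκ : 0 ≤ κ)
    (hper : ∀ t, SpacePeriodic (z t))
    (hcont : ContinuousOn (fun p : ℝ × (Fin d → ℝ) => z p.1 p.2) (Set.Icc a b ×ˢ Set.univ))
    (hC2 : ∀ t ∈ Set.Ioc a b, ContDiff ℝ 2 (z t))
    (hdiff : ∀ t ∈ Set.Ioc a b, ∀ x, DifferentiableAt ℝ (fun s => z s x) t)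
    (heq : ∀ t ∈ Set.Ioc a b, ∀ x, |deriv (fun s => z s x) t + ∑ l, u t x l * pd (z t) l x
      - κ * ∑ l, pd (pd (z t) l) l x| ≤ K)
    (hinit : ∀ x, |z a x| ≤ m) : ∀ t ∈ Set.Icc a b, ∀ x, |z t x| ≤ m + K * (t - a) := by
  intro t ht x
  rw [abs_le']
  constructor
  · refine mp_upper u hκ hper hcont hC2 hdiff ?_ (fun x => le_of_abs_le (hinit x)) t ht x
    intro t ht x
    have := le_of_abs_le (heq t ht x)
    linarith
  · refine mp_upper (z := fun t x => - z t x) u hκ ?_ hcont.neg (fun t ht => (hC2 t ht).neg)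
      (fun t ht x => (hdiff t ht x).neg) ?_ (fun x => neg_le_of_neg_le (neg_le_of_abs_le (hinit x))) t ht x
    · intro t x k
      simp only [hper t x k]
    · intro t ht x
      have := neg_le_of_abs_le (heq t ht x)
      rw [deriv.fun_neg]
      simp only [pd_neg, Finset.sum_neg_distrib, mul_neg]
      linarith

lemma pd_sub' {d : ℕ} {f g : (Fin d → ℝ) → ℝ} (hf : Differentiable ℝ f) (hg : Differentiable ℝ g)
    (i : Fin d) : pd (fun x => f x - g x) i = fun x => pd f i x - pd g i x :=
  funext fun x => pd_sub hf hg i x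

lemma pd_shift' {d : ℕ} (f : (Fin d → ℝ) → ℝ) (v : Fin d → ℝ)
    (i : Fin d) : pd (fun x => f (x + v)) i = fun x => pd f i (x + v) :=
  funext fun x => pd_shift f v i x

lemma pdpd_sub {d : ℕ} {f g : (Fin d → ℝ) → ℝ} (hf : ContDiff ℝ 2 f) (hg : ContDiff ℝ 2 g)
    (i : Fin d) (x) : pd (pd (fun x => f x - g x) i) i x = pd (pd f i) i x - pd (pd g i) i x := by
  rw [pd_sub' (hf.differentiable (by norm_num)) (hg.differentiable (by norm_num)),
    pd_sub ((pd_c1 hf i).differentiable (by norm_num)) ((pd_c1 hg i).differentiable (by norm_num))]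

lemma lip_of_pd {d : ℕ} {f : (Fin d → ℝ) → ℝ} (hf : Differentiable ℝ f) (i : Fin d) {K : ℝ}
    (hK : ∀ x, |pd f i x| ≤ K) (x) (h : ℝ) : |f (x + h • ee i) - f x| ≤ K * |h| := by
  have := Convex.norm_image_sub_le_of_norm_hasDerivWithin_le (s := Set.univ)
    (fun s _ => (pd_line hf i x s).hasDerivWithinAt) (fun s _ => hK _) convex_univ
    (Set.mem_univ (0:ℝ)) (Set.mem_univ h)
  simpa using this

lemma pd_of_lip {d : ℕ} {f : (Fin d → ℝ) → ℝ} (hf : Differentiable ℝ f) (i : Fin d) {K : ℝ}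
    (x) (hK : ∀ h : ℝ, |f (x + h • ee i) - f x| ≤ K * |h|) : |pd f i x| ≤ K := by
  have h1 := (pd_line hf i x 0)
  have h2 := h1.tendsto_slope
  simp only [zero_smul, add_zero] at h2
  apply le_of_tendsto (continuous_abs.continuousAt.tendsto.comp h2)
  filter_upwards [self_mem_nhdsWithin] with s hs
  have hs' : s ≠ 0 := hs
  simp only [Function.comp, slope_def_field, zero_smul, add_zero, sub_zero]
  rw [abs_div, div_le_iff₀ (abs_pos.mpr hs')]
  exact hK s

/-- uniform Lipschitz-in-time estimate during one shear stage -/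
lemma lip_time {d : ℕ} {u : ℝ → (Fin d → ℝ) → Fin d → ℝ} {κ : ℝ}
    {θin : (Fin d → ℝ) → ℝ} {θ : ℝ → (Fin d → ℝ) → ℝ} (sol : IsAdvDiffSol u κ θin θ)
    (hκ : 0 ≤ κ) {a b : ℝ} (ha : 0 < a) (hab : a ≤ b) (hb : b ≤ 1) (i : Fin d)
    (η : ℝ → ℝ) (F : (Fin d → ℝ) → ℝ) {Lη MF : ℝ} (hη : ∀ s t, |η t - η s| ≤ Lη * |t - s|)
    (hMF : ∀ x, |F x| ≤ MF) (hFi : ∀ x (r : ℝ), F (x + r • ee i) = F x)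
    (hu : ∀ t ∈ Set.Icc a b, ∀ x (q : Fin d → ℝ), ∑ l, u t x l * q l = η t * F x * q i) :
    ∃ K, 0 ≤ K ∧ ∀ s ∈ Set.Icc a b, ∀ t ∈ Set.Icc a b, ∀ x, |θ t x - θ s x| ≤ K * |t - s| := by
  have hmem : ∀ t ∈ Set.Icc a b, t ∈ Set.Ioc (0:ℝ) 1 := fun t ht => ⟨ha.trans_le ht.1, ht.2.trans hb⟩
  have hmem' : ∀ t ∈ Set.Ioc a b, t ∈ Set.Icc a b := fun t ht => ⟨ht.1.le, ht.2⟩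
  have haa : a ∈ Set.Icc a b := ⟨le_rfl, hab⟩
  have hC2 : ∀ t ∈ Set.Icc a b, ContDiff ℝ 2 (θ t) := fun t ht => sol.spaceC2 t (hmem t ht)
  have hD : ∀ t ∈ Set.Icc a b, Differentiable ℝ (θ t) := fun t ht =>
    (hC2 t ht).differentiable (by norm_num)
  have hcont : ContinuousOn (fun p : ℝ × (Fin d → ℝ) => θ p.1 p.2) (Set.Icc a b ×ˢ Set.univ) :=
    sol.cont.mono (Set.prod_mono (Set.Icc_subset_Icc ha.le hb) le_rfl)
  have heqn : ∀ t ∈ Set.Icc a b, ∀ x, deriv (fun s => θ s x) t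
      = κ * ∑ l, pd (pd (θ t) l) l x - η t * F x * pd (θ t) i x := by
    intro t ht x
    have := sol.eqn t (hmem t ht) x
    rw [hu t ht x (fun l => pd (θ t) l x)] at this
    linarith
  have hMF0 : 0 ≤ MF := (abs_nonneg _).trans (hMF 0)
  have hLη0 : 0 ≤ Lη := by
    have := (abs_nonneg _).trans (hη 0 1)
    simpa using this
  -- gradient bound in direction i
  obtain ⟨K1, hK1, hK1b⟩ := cp_bdd (cp_pd ((hC2 a haa).of_le (by norm_num)) i) (sp_pd (sol.periodic a) i)
  have hgrad : ∀ t ∈ Set.Icc a b, ∀ x, |pd (θ t) i x| ≤ K1 := by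
    intro t ht x
    apply pd_of_lip (hD t ht) i
    intro h
    have := mp_abs (z := fun t x => θ t (x + h • ee i) - θ t x) (a := a) (b := b) (κ := κ) (K := 0)
      (m := K1 * |h|) u hκ (fun t => sp_sub (sp_shift (sol.periodic t) _) (sol.periodic t)) ?_ ?_ ?_ ?_
      (lip_of_pd (hD a haa) i hK1b · h) t ht x
    · simpa using this
    · apply ContinuousOn.sub _ hcont
      exact hcont.comp (f := fun p : ℝ × (Fin d → ℝ) => (p.1, p.2 + h • ee i))
        (by fun_prop) (fun p hp => ⟨hp.1, trivial⟩)
    · intro t ht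
      exact ((hC2 t (hmem' t ht)).comp (contDiff_id.add contDiff_const)).sub (hC2 t (hmem' t ht))
    · intro t ht x
      exact (sol.timeDiff t (hmem t (hmem' t ht)) _).sub (sol.timeDiff t (hmem t (hmem' t ht)) _)
    · intro t ht0 x
      have ht := hmem' t ht0
      have hsC : ContDiff ℝ 2 (fun x => θ t (x + h • ee i)) :=
        (hC2 t ht).comp (contDiff_id.add contDiff_const)
      rw [hu t ht x]
      rw [deriv_fun_sub (sol.timeDiff t (hmem t ht) _) (sol.timeDiff t (hmem t ht) _),
        heqn t ht, heqn t ht]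
      simp only [pdpd_sub hsC (hC2 t ht), pd_sub (hsC.differentiable (by norm_num)) (hD t ht),
        pd_shift', hFi, Finset.sum_sub_distrib]
      apply le_of_eq
      rw [abs_eq_zero]
      ring
  -- bound of the initial increments
  have hηb : ∀ t ∈ Set.Icc a b, |η t| ≤ |η a| + Lη * (b - a) := by
    intro t ht
    have h1 := hη a t
    rw [abs_of_nonneg (sub_nonneg.mpr ht.1)] at h1
    have h2 : |η t| ≤ |η a| + |η t - η a| := by
      have := abs_add_le (η a) (η t - η a)
      simpa using this
    have : Lη * (t - a) ≤ Lη * (b - a) := mul_le_mul_of_nonneg_left (by linarith [ht.2]) hLη0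
    linarith
  have hlapc : Continuous (fun x => ∑ l, pd (pd (θ a) l) l x) :=
    continuous_finsetSum _ (fun l _ => cp_pd (pd_c1 (hC2 a haa) l) l)
  have hlapp : SpacePeriodic (fun x => ∑ l, pd (pd (θ a) l) l x) := by
    intro x k
    simp only
    exact Finset.sum_congr rfl (fun l _ => sp_pd (sp_pd (sol.periodic a) l) l x k)
  obtain ⟨K2, hK2, hK2b⟩ := cp_bdd hlapc hlapp
  set C0 := κ * K2 + (|η a| + Lη * (b - a)) * MF * K1 with hC0
  have hba : 0 ≤ b - a := sub_nonneg.mpr hab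
  have hC00 : 0 ≤ C0 := by positivity
  have hinc : ∀ t ∈ Set.Icc a b, ∀ x, |θ t x - θ a x| ≤ C0 * (t - a) := by
    intro t ht x
    have := mp_abs (z := fun t x => θ t x - θ a x) (a := a) (b := b) (κ := κ) (K := C0)
      (m := 0) u hκ (fun t => sp_sub (sol.periodic t) (sol.periodic a)) ?_ ?_ ?_ ?_
      (by intro x; simp) t ht x
    · simpa using this
    · apply ContinuousOn.sub hcont
      exact hcont.comp (f := fun p : ℝ × (Fin d → ℝ) => (a, p.2))
        (by fun_prop) (fun p hp => ⟨haa, trivial⟩)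
    · intro t ht
      exact (hC2 t (hmem' t ht)).sub (hC2 a haa)
    · intro t ht x
      exact (sol.timeDiff t (hmem t (hmem' t ht)) _).sub (differentiableAt_const _)
    · intro t ht0 x
      have ht := hmem' t ht0
      rw [hu t ht x]
      rw [deriv_fun_sub (sol.timeDiff t (hmem t ht) _) (differentiableAt_const _), heqn t ht]
      simp only [pdpd_sub (hC2 t ht) (hC2 a haa), pd_sub (hD t ht) (hD a haa), 
        Finset.sum_sub_distrib, deriv_const]
      have e : ∀ A B c p q : ℝ, κ * A - c * p - 0 + c * (p - q) - κ * (A - B) = κ * B - c * q := by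
        intros; ring
      rw [e]
      refine (abs_sub _ _).trans ?_
      rw [abs_mul, abs_mul, abs_mul, abs_of_nonneg hκ, hC0]
      gcongr
      · exact hK2b x
      · exact hηb t ht
      · exact hMF x
      · exact hK1b x
  refine ⟨C0 + Lη * MF * K1 * (b - a), by positivity, ?_⟩
  have key : ∀ s ∈ Set.Icc a b, ∀ t ∈ Set.Icc a b, s ≤ t → ∀ x,
      |θ t x - θ s x| ≤ (C0 + Lη * MF * K1 * (b - a)) * (t - s) := by
    intro s hs t ht hst x
    set h := t - s with hh
    have hh0 : 0 ≤ h := sub_nonneg.mpr hst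
    have hmh : ∀ r ∈ Set.Icc a (b - h), r ∈ Set.Icc a b := fun r hr => ⟨hr.1, by linarith [hr.2]⟩
    have hmh2 : ∀ r ∈ Set.Icc a (b - h), r + h ∈ Set.Icc a b :=
      fun r hr => ⟨by linarith [hr.1], by linarith [hr.2]⟩
    have hbh : a ≤ b - h := by linarith [hs.1, ht.2]
    have := mp_abs (z := fun t x => θ (t + h) x - θ t x) (a := a) (b := b - h) (κ := κ)
      (K := Lη * MF * K1 * h)
      (m := C0 * h) u hκ (fun t => sp_sub (sol.periodic _) (sol.periodic _)) ?_ ?_ ?_ ?_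
      ?_ s ⟨hs.1, by linarith [ht.2]⟩ x
    · rw [show s + h = t by rw [hh]; ring] at this
      refine this.trans ?_
      have h1 : Lη * MF * K1 * h * (s - a) ≤ Lη * MF * K1 * h * (b - a) := by
        have : 0 ≤ Lη * MF * K1 * h := by positivity
        exact mul_le_mul_of_nonneg_left (by linarith [hs.2]) this
      linarith
    · apply ContinuousOn.sub
      · exact hcont.comp (f := fun p : ℝ × (Fin d → ℝ) => (p.1 + h, p.2))
          (by fun_prop) (fun p hp => ⟨hmh2 _ hp.1, trivial⟩)
      · exact hcont.mono (Set.prod_mono (fun r hr => hmh r hr) le_rfl)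
    · intro r hr
      exact (hC2 _ (hmh2 r ⟨hr.1.le, hr.2⟩)).sub (hC2 _ (hmh r ⟨hr.1.le, hr.2⟩))
    · intro r hr x
      have h1 := sol.timeDiff _ (hmem _ (hmh2 r ⟨hr.1.le, hr.2⟩)) x
      have h2 : DifferentiableAt ℝ (fun s => θ (s + h) x) r :=
        DifferentiableAt.comp (f := fun s => s + h) (g := fun s => θ s x) r h1 (by fun_prop)
      exact h2.sub (sol.timeDiff _ (hmem _ (hmh r ⟨hr.1.le, hr.2⟩)) x)
    · intro r hr0 x
      have hr := hmh r ⟨hr0.1.le, hr0.2⟩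
      have hrh := hmh2 r ⟨hr0.1.le, hr0.2⟩
      have h1 := sol.timeDiff _ (hmem _ hrh) x
      have h2 : DifferentiableAt ℝ (fun s => θ (s + h) x) r :=
        DifferentiableAt.comp (f := fun s => s + h) (g := fun s => θ s x) r h1 (by fun_prop)
      rw [hu r hr x]
      rw [deriv_fun_sub h2 (sol.timeDiff r (hmem r hr) _),
        deriv_comp_add_const (f := fun s => θ s x), heqn r hr, heqn _ hrh]
      simp only [pdpd_sub (hC2 _ hrh) (hC2 r hr), pd_sub (hD _ hrh) (hD r hr), 
        Finset.sum_sub_distrib]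
      have e : ∀ A B c c' f p q : ℝ, κ * A - c' * f * p - (κ * B - c * f * q)
        + c * f * (p - q) - κ * (A - B) = - ((c' - c) * f * p) := by
        intros; ring
      rw [e, abs_neg, abs_mul, abs_mul]
      have h3 := hη r (r + h)
      rw [show r + h - r = h by ring, abs_of_nonneg hh0] at h3
      calc _ ≤ Lη * h * MF * K1 := by
            gcongr
            · exact hMF x
            · exact hgrad _ hrh x
        _ = _ := by ring
    · intro y
      have := hinc (a + h) ⟨by linarith, by linarith⟩ y
      simpa using this
  intro s hs t ht x
  rcases le_total s t with h | h
  · rw [abs_of_nonneg (sub_nonneg.mpr h)]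
    exact key s hs t ht h x
  · rw [abs_sub_comm, abs_sub_comm t s, abs_of_nonneg (sub_nonneg.mpr h)]
    exact key t ht s hs h x

/-- abstract description of the alternating shear structure -/
structure Stg {d : ℕ} (u : ℝ → (Fin d → ℝ) → Fin d → ℝ) (T : ℕ → ℝ) (η A : ℕ → ℝ → ℝ)
    (F : ℕ → (Fin d → ℝ) → ℝ) (ix : ℕ → Fin d) : Prop where
  T0 : T 0 = 0
  Tmono : StrictMono T
  Tlt : ∀ k, T k < 1
  Tlim : Tendsto T atTop (𝓝 1)
  etalip : ∀ k, ∃ L, ∀ s t, |η k t - η k s| ≤ L * |t - s|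
  Ader : ∀ k t, HasDerivAt (A k) (η k t) t
  Alip : ∀ k, ∃ L, 0 ≤ L ∧ ∀ s t, |A k t - A k s| ≤ L * |t - s|
  FC : ∀ k, ContDiff ℝ 1 (F k)
  Fper : ∀ k, SpacePeriodic (F k)
  Find : ∀ k x (r : ℝ), F k (x + r • ee (ix k)) = F k x
  hu : ∀ k, ∀ t ∈ Set.Icc (T k) (T (k+1)), ∀ x (q : Fin d → ℝ),
    ∑ l, u t x l * q l = η k t * F k x * q (ix k)

lemma bI_cont {d : ℕ} {z : ℝ → (Fin d → ℝ) → ℝ} {S : Set ℝ} (hS : IsCompact S)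
    (hz : ContinuousOn (fun p : ℝ × (Fin d → ℝ) => z p.1 p.2) (S ×ˢ Set.univ)) :
    ContinuousOn (fun t => bI (z t)) S := by
  obtain ⟨K, hK⟩ := (hS.prod (box_compact d)).exists_bound_of_continuousOn
    (hz.mono (Set.prod_mono le_rfl (Set.subset_univ _)))
  have hc : ∀ t ∈ S, Continuous (z t) := by
    intro t ht
    rw [← continuousOn_univ]
    exact hz.comp (f := fun x : Fin d → ℝ => (t, x)) (by fun_prop) (fun x _ => ⟨ht, trivial⟩)
  apply continuousOn_of_dominated (bound := fun _ => K)
  · intro t ht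
    exact (hc t ht).aestronglyMeasurable
  · intro t ht
    exact (ae_restrict_iff' (box_meas d)).mpr (Eventually.of_forall fun x hx => hK (t, x) ⟨ht, hx⟩)
  · exact box_int continuous_const
  · exact Eventually.of_forall fun x =>
      hz.comp (f := fun t : ℝ => (t, x)) (by fun_prop) (fun t ht => ⟨ht, trivial⟩)

lemma sq_deriv {d : ℕ} {z : ℝ → (Fin d → ℝ) → ℝ} {z' : (Fin d → ℝ) → ℝ} {t0 ε K : ℝ} (hε : 0 < ε)
    (hK : 0 ≤ K) (hc : ∀ t ∈ Metric.ball t0 ε, Continuous (z t)) (hp : SpacePeriodic (z t0))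
    (hlip : ∀ s ∈ Metric.ball t0 ε, ∀ t ∈ Metric.ball t0 ε, ∀ x, |z t x - z s x| ≤ K * |t - s|)
    (hd : ∀ x, HasDerivAt (fun t => z t x) (z' x) t0) (hz' : Continuous z') :
    HasDerivAt (fun t => bI (fun x => z t x ^ 2)) (bI (fun x => 2 * (z t0 x * z' x))) t0 := by
  have h0 : t0 ∈ Metric.ball t0 ε := Metric.mem_ball_self hε
  obtain ⟨M, hM, hMb⟩ := cp_bdd (hc t0 h0) hp
  have hb : ∀ t ∈ Metric.ball t0 ε, ∀ x, |z t x| ≤ M + K * ε := by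
    intro t ht x
    have h1 := hlip t0 h0 t ht x
    have h2 : |t - t0| ≤ ε := by rw [Metric.mem_ball, Real.dist_eq] at ht; exact ht.le
    have h3 : |z t x| ≤ |z t0 x| + |z t x - z t0 x| := by
      have := abs_add_le (z t0 x) (z t x - z t0 x)
      simpa using this
    have := mul_le_mul_of_nonneg_left h2 hK
    linarith [hMb x]
  refine (hasDerivAt_integral_of_dominated_loc_of_lip (μ := volume.restrict (box d))
    (F := fun t x => z t x ^ 2) (F' := fun x => 2 * (z t0 x * z' x))
    (bound := fun _ => 2 * (M + K * ε) * K) (Metric.ball_mem_nhds t0 hε) ?_ ?_ ?_ ?_ ?_ ?_).2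
  · filter_upwards [Metric.ball_mem_nhds t0 hε] with t ht
    exact ((hc t ht).pow 2).aestronglyMeasurable
  · exact box_int ((hc t0 h0).pow 2)
  · have := hc t0 h0
    exact (by fun_prop : Continuous fun x => 2 * (z t0 x * z' x)).aestronglyMeasurable
  · apply Eventually.of_forall
    intro x
    apply LipschitzOnWith.of_dist_le_mul
    intro s hs t ht
    have h5 : 0 ≤ 2 * (M + K * ε) * K := by positivity
    simp only [Real.dist_eq, Real.coe_nnabs, abs_of_nonneg h5]
    rw [sq_sub_sq, abs_mul]
    have h6 : |z s x + z t x| ≤ 2 * (M + K * ε) := by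
      have := abs_add_le (z s x) (z t x)
      linarith [hb s hs x, hb t ht x]
    calc _ ≤ 2 * (M + K * ε) * (K * |s - t|) := by
          gcongr
          exact hlip t ht s hs x
      _ = _ := by ring
  · exact box_int continuous_const
  · apply Eventually.of_forall
    intro x
    refine ((hd x).fun_pow 2).congr_deriv ?_
    simp; ring

lemma lip_all {d : ℕ} {u : ℝ → (Fin d → ℝ) → Fin d → ℝ} {T η A F} {ix : ℕ → Fin d}
    (hS : Stg u T η A F ix) {κ : ℝ}
    {θin : (Fin d → ℝ) → ℝ} {θ : ℝ → (Fin d → ℝ) → ℝ} (sol : IsAdvDiffSol u κ θin θ)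
    (hκ : 0 ≤ κ) {a : ℝ} (ha : 0 < a) (ha1 : a ≤ T 1) (n : ℕ) :
    ∃ K, 0 ≤ K ∧ ∀ s ∈ Set.Icc a (T (n+1)), ∀ t ∈ Set.Icc a (T (n+1)), ∀ x,
      |θ t x - θ s x| ≤ K * |t - s| := by
  have stage : ∀ k a, 0 < a → T k ≤ a → a ≤ T (k+1) →
      ∃ K, 0 ≤ K ∧ ∀ s ∈ Set.Icc a (T (k+1)), ∀ t ∈ Set.Icc a (T (k+1)), ∀ x,
      |θ t x - θ s x| ≤ K * |t - s| := by
    intro k a ha h1 h2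
    obtain ⟨L, hL⟩ := hS.etalip k
    obtain ⟨MF, _, hMF⟩ := cp_bdd (hS.FC k).continuous (hS.Fper k)
    exact lip_time sol hκ ha h2 (hS.Tlt (k+1)).le (ix k) (η k) (F k) hL hMF (hS.Find k)
      (fun t ht => hS.hu k t ⟨h1.trans ht.1, ht.2⟩)
  induction n with
  | zero => exact stage 0 a ha (by rw [hS.T0]; exact ha.le) ha1
  | succ n ih =>
    obtain ⟨K1, hK1, h1⟩ := ih
    have hTa : a ≤ T (n+1) := ha1.trans (hS.Tmono.monotone (by omega))
    obtain ⟨K2, hK2, h2⟩ := stage (n+1) (T (n+1)) (ha.trans_le hTa) le_rfl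
      (hS.Tmono.monotone (by omega))
    refine ⟨max K1 K2, le_max_of_le_left hK1, ?_⟩
    have hm : T (n+1) ∈ Set.Icc a (T (n+1)) := ⟨hTa, le_rfl⟩
    have hm2 : T (n+1) ∈ Set.Icc (T (n+1)) (T (n+1+1)) := ⟨le_rfl, hS.Tmono.monotone (by omega)⟩
    have key : ∀ s ∈ Set.Icc a (T (n+1+1)), ∀ t ∈ Set.Icc a (T (n+1+1)), s ≤ t → ∀ x,
        |θ t x - θ s x| ≤ max K1 K2 * |t - s| := by
      intro s hs t ht hst x
      rcases le_total t (T (n+1)) with htT | htT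
      · refine (h1 s ⟨hs.1, hst.trans htT⟩ t ⟨ht.1, htT⟩ x).trans ?_
        gcongr; exact le_max_left _ _
      · rcases le_total (T (n+1)) s with hsT | hsT
        · refine (h2 s ⟨hsT, hs.2⟩ t ⟨htT, ht.2⟩ x).trans ?_
          gcongr; exact le_max_right _ _
        · have e1 := h1 s ⟨hs.1, hsT⟩ _ hm x
          have e2 := h2 _ hm2 t ⟨htT, ht.2⟩ x
          have e3 := abs_add_le (θ t x - θ (T (n+1)) x) (θ (T (n+1)) x - θ s x)
          rw [sub_add_sub_cancel] at e3
          rw [abs_of_nonneg (sub_nonneg.mpr htT)] at e2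
          rw [abs_of_nonneg (sub_nonneg.mpr hsT)] at e1
          rw [abs_of_nonneg (sub_nonneg.mpr hst)]
          have e4 : K1 * (T (n+1) - s) ≤ max K1 K2 * (T (n+1) - s) :=
            mul_le_mul_of_nonneg_right (le_max_left _ _) (sub_nonneg.mpr hsT)
          have e5 : K2 * (t - T (n+1)) ≤ max K1 K2 * (t - T (n+1)) :=
            mul_le_mul_of_nonneg_right (le_max_right _ _) (sub_nonneg.mpr htT)
          linarith
    intro s hs t ht x
    rcases le_total s t with h | h
    · exact key s hs t ht h x
    · rw [abs_sub_comm, abs_sub_comm t s]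
      exact key t ht s hs h x

lemma lip_loc {d : ℕ} {u : ℝ → (Fin d → ℝ) → Fin d → ℝ} {T η A F} {ix : ℕ → Fin d}
    (hS : Stg u T η A F ix) {κ : ℝ}
    {θin : (Fin d → ℝ) → ℝ} {θ : ℝ → (Fin d → ℝ) → ℝ} (sol : IsAdvDiffSol u κ θin θ)
    (hκ : 0 ≤ κ) {t0 : ℝ} (h0 : 0 < t0) (h1 : t0 < 1) :
    ∃ ε K, 0 < ε ∧ 0 ≤ K ∧ Metric.ball t0 ε ⊆ Set.Ioo 0 1 ∧
      ∀ s ∈ Metric.ball t0 ε, ∀ t ∈ Metric.ball t0 ε, ∀ x,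
      |θ t x - θ s x| ≤ K * |t - s| := by
  obtain ⟨n, hn⟩ := ((hS.Tlim.eventually (lt_mem_nhds h1))).exists
  have hT1 : 0 < T 1 := by rw [← hS.T0]; exact hS.Tmono (by norm_num)
  set a := min (t0 / 2) (T 1) with ha
  have ha0 : 0 < a := lt_min (by linarith) hT1
  obtain ⟨K, hK, hl⟩ := lip_all hS sol hκ ha0 (min_le_right _ _) n
  have hTn : T n < T (n+1) := hS.Tmono (by omega)
  have hTn1 := hS.Tlt (n+1)
  have hsub : Metric.ball t0 (min (t0/2) (T (n+1) - t0)) ⊆ Set.Icc a (T (n+1)) := by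
    intro s hs
    rw [Metric.mem_ball, Real.dist_eq, lt_min_iff] at hs
    have h2 := abs_lt.mp hs.1
    have h3 := abs_lt.mp hs.2
    have h4 : a ≤ t0 / 2 := min_le_left _ _
    constructor <;> linarith
  refine ⟨min (t0/2) (T (n+1) - t0), K, lt_min (by linarith) (by linarith), hK, ?_, ?_⟩
  · intro s hs
    have := hsub hs
    exact ⟨ha0.trans_le this.1, this.2.trans_lt hTn1⟩
  · intro s hs t ht x
    exact hl s (hsub hs) t (hsub ht) x

lemma G_deriv {d : ℕ} {u : ℝ → (Fin d → ℝ) → Fin d → ℝ} {T η A F} {ix : ℕ → Fin d}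
    (hS : Stg u T η A F ix) {κ : ℝ}
    {θin : (Fin d → ℝ) → ℝ} {θ : ℝ → (Fin d → ℝ) → ℝ} (sol : IsAdvDiffSol u κ θin θ)
    (hκ : 0 ≤ κ) {t0 : ℝ} (h0 : 0 < t0) (h1 : t0 < 1) (k : ℕ) (hk : t0 ∈ Set.Icc (T k) (T (k+1)))
    (w : ℝ → (Fin d → ℝ) → ℝ) (hwc : ∀ t, Continuous (w t)) (hw1 : ContDiff ℝ 1 (w t0))
    (hwp : SpacePeriodic (w t0)) {Kw : ℝ} (hKw : 0 ≤ Kw)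
    (hwl : ∀ s t x, |w t x - w s x| ≤ Kw * |t - s|)
    (hwd : ∀ x, HasDerivAt (fun t => w t x) (-(η k t0 * F k x * pd (w t0) (ix k) x)) t0) :
    HasDerivAt (fun t => bI (fun x => (θ t x - w t x) ^ 2))
      (- (2 * κ * bI (fun x => ∑ l, pd (θ t0) l x * (pd (θ t0) l x - pd (w t0) l x)))) t0 := by
  obtain ⟨ε, K, hε, hK, hsub, hl⟩ := lip_loc hS sol hκ h0 h1
  have hIoc : ∀ t ∈ Metric.ball t0 ε, t ∈ Set.Ioc (0:ℝ) 1 := fun t ht =>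
    ⟨(hsub ht).1, (hsub ht).2.le⟩
  have ht0 : t0 ∈ Set.Ioc (0:ℝ) 1 := ⟨h0, h1.le⟩
  have hC2 := sol.spaceC2 t0 ht0
  have hC1 : ContDiff ℝ 1 (θ t0) := hC2.of_le (by norm_num)
  have hcp : ∀ l, Continuous (pd (θ t0) l) := fun l => cp_pd hC1 l
  have hcpp : ∀ l, Continuous (pd (pd (θ t0) l) l) := fun l => cp_pd (pd_c1 hC2 l) l
  have hcw : ∀ l, Continuous (pd (w t0) l) := fun l => cp_pd hw1 l
  have hF := (hS.FC k).continuous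
  have hzd : Differentiable ℝ (θ t0) := hC1.differentiable (by norm_num)
  have hwdf : Differentiable ℝ (w t0) := hw1.differentiable (by norm_num)
  have hz1 : ContDiff ℝ 1 (fun x => θ t0 x - w t0 x) := hC1.sub hw1
  have hzp : SpacePeriodic (fun x => θ t0 x - w t0 x) := sp_sub (sol.periodic t0) hwp
  have hzc := hz1.continuous
  have hcθ := hC1.continuous
  have main := sq_deriv (z := fun t x => θ t x - w t x) (K := K + Kw)
    (z' := fun x => (κ * ∑ l, pd (pd (θ t0) l) l x - η k t0 * F k x * pd (θ t0) (ix k) x)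
      - (-(η k t0 * F k x * pd (w t0) (ix k) x))) hε (by positivity)
    (fun t ht => (sol.spaceC2 t (hIoc t ht)).continuous.sub (hwc t)) hzp ?_ ?_ ?_
  · convert main using 1
    have hpz : ∀ l, pd (fun x => θ t0 x - w t0 x) l = fun x => pd (θ t0) l x - pd (w t0) l x :=
      fun l => pd_sub' hzd hwdf l
    have e1 : ∀ l, bI (fun x => (θ t0 x - w t0 x) * pd (pd (θ t0) l) l x)
        = - bI (fun x => pd (θ t0) l x * (pd (θ t0) l x - pd (w t0) l x)) := by
      intro l
      rw [bI_ibp hz1 (pd_c1 hC2 l) hzp (sp_pd (sol.periodic t0) l) l, hpz l]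
    have e2 : bI (fun x => F k x * pd (fun x => (θ t0 x - w t0 x) * (θ t0 x - w t0 x)) (ix k) x) = 0 :=
      bI_pd_indep (hz1.mul hz1) (sp_mul hzp hzp) (ix k) hF (hS.Fper k) (hS.Find k)
    have e3 : (fun x => 2 * ((θ t0 x - w t0 x) *
        ((κ * ∑ l, pd (pd (θ t0) l) l x - η k t0 * F k x * pd (θ t0) (ix k) x)
      - (-(η k t0 * F k x * pd (w t0) (ix k) x))))) =
      fun x => (2 * κ) * ∑ l, (θ t0 x - w t0 x) * pd (pd (θ t0) l) l x
        - η k t0 * (F k x * pd (fun x => (θ t0 x - w t0 x) * (θ t0 x - w t0 x)) (ix k) x) := by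
      ext x
      rw [pd_mul (hz1.differentiable (by norm_num)) (hz1.differentiable (by norm_num)), hpz,
        ← Finset.mul_sum]
      ring
    simp only [e3]
    have hpc : Continuous (pd (fun x => (θ t0 x - w t0 x) * (θ t0 x - w t0 x)) (ix k)) :=
      cp_pd (hz1.mul hz1) _
    rw [bI_sub (by fun_prop) (by fun_prop), bI_mul, bI_mul, e2, bI_sum _ (by fun_prop),
      bI_sum _ (by fun_prop)]
    simp_rw [e1]
    simp
  · intro s hs t ht x
    have a1 := hl s hs t ht x
    have a2 := hwl s t x
    have a3 := abs_sub (θ t x - θ s x) (w t x - w s x)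
    have e : θ t x - w t x - (θ s x - w s x) = θ t x - θ s x - (w t x - w s x) := by ring
    rw [e]
    linarith
  · intro x
    have a1 := (sol.timeDiff t0 ht0 x).hasDerivAt
    have a2 := sol.eqn t0 ht0 x
    rw [hS.hu k t0 hk x (fun l => pd (θ t0) l x)] at a2
    have a3 : deriv (fun s => θ s x) t0
      = κ * ∑ l, pd (pd (θ t0) l) l x - η k t0 * F k x * pd (θ t0) (ix k) x := by linarith
    rw [a3] at a1
    exact a1.sub (hwd x)
  · fun_prop

lemma exists_stage {T : ℕ → ℝ} (T0 : T 0 = 0) (Tlim : Tendsto T atTop (𝓝 1)) {t : ℝ}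
    (h0 : 0 ≤ t) (h1 : t < 1) : ∃ k, t ∈ Set.Ico (T k) (T (k+1)) := by
  classical
  have hex : ∃ n, t < T n := ((Tlim.eventually (lt_mem_nhds h1))).exists
  have hn := Nat.find_spec hex
  have hmin := fun m => Nat.find_min hex (m := m)
  cases hc : Nat.find hex with
  | zero => rw [hc, T0] at hn; linarith
  | succ m =>
    rw [hc] at hn
    exact ⟨m, not_lt.mp (hmin m (by omega)), hn⟩

lemma E_deriv {d : ℕ} {u : ℝ → (Fin d → ℝ) → Fin d → ℝ} {T η A F} {ix : ℕ → Fin d}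
    (hS : Stg u T η A F ix) {κ : ℝ}
    {θin : (Fin d → ℝ) → ℝ} {θ : ℝ → (Fin d → ℝ) → ℝ} (sol : IsAdvDiffSol u κ θin θ)
    (hκ : 0 ≤ κ) {t0 : ℝ} (h0 : 0 < t0) (h1 : t0 < 1) :
    HasDerivAt (fun t => bI (fun x => θ t x ^ 2)) (- (2 * κ * bI (gradSq (θ t0)))) t0 := by
  obtain ⟨k, hk⟩ := exists_stage hS.T0 hS.Tlim h0.le h1
  have hp0 : ∀ l x, pd (fun _ : Fin d → ℝ => (0:ℝ)) l x = 0 := by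
    intro l x; simp [pd]
  have := G_deriv hS sol hκ h0 h1 k ⟨hk.1, hk.2.le⟩ (fun _ _ => 0) (fun _ => continuous_const)
    contDiff_const (sp_const 0) (Kw := 0) le_rfl (by simp)
    (by intro x; rw [hp0]; simpa using hasDerivAt_const t0 (0:ℝ))
  simp only [sub_zero, hp0] at this
  rw [show gradSq (θ t0) = fun x => ∑ l, pd (θ t0) l x * pd (θ t0) l x from
    funext fun x => by simp [gradSq, sq]]
  exact this

lemma E_cont {d : ℕ} {u : ℝ → (Fin d → ℝ) → Fin d → ℝ} {κ : ℝ}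
    {θin : (Fin d → ℝ) → ℝ} {θ : ℝ → (Fin d → ℝ) → ℝ} (sol : IsAdvDiffSol u κ θin θ) :
    ContinuousOn (fun t => bI (fun x => θ t x ^ 2)) (Set.Icc 0 1) :=
  bI_cont (z := fun t x => θ t x ^ 2) isCompact_Icc (sol.cont.pow 2)

lemma gradSq_nonneg {d : ℕ} (f : (Fin d → ℝ) → ℝ) (x) : 0 ≤ gradSq f x :=
  Finset.sum_nonneg fun _ _ => sq_nonneg _

lemma energy {d : ℕ} {u : ℝ → (Fin d → ℝ) → Fin d → ℝ} {T η A F} {ix : ℕ → Fin d}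
    (hS : Stg u T η A F ix) {κ : ℝ}
    {θin : (Fin d → ℝ) → ℝ} {θ : ℝ → (Fin d → ℝ) → ℝ} (sol : IsAdvDiffSol u κ θin θ)
    (hκ : 0 < κ) :
    IntegrableOn (fun t => bI (gradSq (θ t))) (Set.Icc 0 1) ∧
    bI (fun x => θ 0 x ^ 2) - bI (fun x => θ 1 x ^ 2) = 2 * (κ * dissip θ) := by
  have hder : ∀ t ∈ Set.Ioo (0:ℝ) 1, HasDerivAt (fun t => - bI (fun x => θ t x ^ 2))
      (2 * κ * bI (gradSq (θ t))) t := by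
    intro t ht
    have := (E_deriv hS sol hκ.le ht.1 ht.2).neg
    simp only [neg_neg] at this
    exact this
  have hc : ContinuousOn (fun t => - bI (fun x => θ t x ^ 2)) (Set.Icc 0 1) := (E_cont sol).neg
  have hint := intervalIntegral.integrableOn_deriv_of_nonneg hc hder (by
    intro t ht
    have := bI_nonneg (gradSq_nonneg (θ t))
    positivity)
  have hint2 : IntervalIntegrable (fun t => 2 * κ * bI (gradSq (θ t))) volume 0 1 :=
    (intervalIntegrable_iff_integrableOn_Ioc_of_le zero_le_one).mpr hint
  have hft := intervalIntegral.integral_eq_sub_of_hasDerivAt_of_le zero_le_one hc hder hint2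
  constructor
  · rw [integrableOn_Icc_iff_integrableOn_Ioc]
    have := hint.const_mul (2 * κ)⁻¹
    have e : (fun t => (2 * κ)⁻¹ * (2 * κ * bI (gradSq (θ t)))) = fun t => bI (gradSq (θ t)) := by
      ext t; field_simp
    rw [e] at this
    exact this
  · rw [intervalIntegral.integral_const_mul] at hft
    have e : dissip θ = ∫ t in (0:ℝ)..1, bI (gradSq (θ t)) := by
      rw [intervalIntegral.integral_of_le zero_le_one, ← integral_Icc_eq_integral_Ioc]
      rfl
    rw [e]
    linarith

/-- transported test function during stage -/
def tr {d : ℕ} (W F : (Fin d → ℝ) → ℝ) (i : Fin d) (A : ℝ) (x : Fin d → ℝ) : ℝ :=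
  W (x + (-(A * F x)) • ee i)

lemma tr_c1 {d : ℕ} {W F : (Fin d → ℝ) → ℝ} (hW : ContDiff ℝ 1 W) (hF : ContDiff ℝ 1 F)
    (i : Fin d) (A : ℝ) : ContDiff ℝ 1 (tr W F i A) := by
  unfold tr
  exact hW.comp (contDiff_id.add ((contDiff_const.mul hF).neg.smul contDiff_const))

lemma tr_cont {d : ℕ} {W F : (Fin d → ℝ) → ℝ} (hW : Continuous W) (hF : Continuous F)
    (i : Fin d) (A : ℝ) : Continuous (tr W F i A) := by
  unfold tr
  fun_prop

lemma tr_per {d : ℕ} {W F : (Fin d → ℝ) → ℝ} (hW : SpacePeriodic W) (hF : SpacePeriodic F)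
    (i : Fin d) (A : ℝ) : SpacePeriodic (tr W F i A) := by
  intro x k
  unfold tr
  simp only [hF x k]
  exact sp_shift hW _ x k

lemma tr_pd {d : ℕ} {W F : (Fin d → ℝ) → ℝ} (hW : Differentiable ℝ W) (hF : Differentiable ℝ F)
    (i : Fin d) (A : ℝ) (l : Fin d) (x) : pd (tr W F i A) l x
      = tr (pd W l) F i A x - A * pd F l x * tr (pd W i) F i A x := by
  have h1 : HasFDerivAt (fun x => x + (-(A * F x)) • ee i)
      (ContinuousLinearMap.id ℝ (Fin d → ℝ) + (-(A • fderiv ℝ F x)).smulRight (ee i)) x :=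
    (hasFDerivAt_id x).add ((((hF x).hasFDerivAt).const_mul A).neg.smul_const (ee i))
  have h2 := ((hW (x + (-(A * F x)) • ee i)).hasFDerivAt).comp x h1
  unfold pd tr
  have h3 : fderiv ℝ (fun x => W (x + (-(A * F x)) • ee i)) x = _ := h2.fderiv
  rw [h3]
  simp
  ring

lemma tr_zero {d : ℕ} (W F : (Fin d → ℝ) → ℝ) (i : Fin d) : tr W F i 0 = W := by
  ext x; simp [tr]

/-- iterated transport -/
def Wt {d : ℕ} (F : ℕ → (Fin d → ℝ) → ℝ) (ix : ℕ → Fin d) (a : ℕ → ℝ) (w0 : (Fin d → ℝ) → ℝ) :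
    ℕ → (Fin d → ℝ) → ℝ
  | 0 => w0
  | k+1 => tr (Wt F ix a w0 k) (F k) (ix k) (a k)

lemma Wt_c1 {d : ℕ} {F : ℕ → (Fin d → ℝ) → ℝ} {ix : ℕ → Fin d} {a : ℕ → ℝ} {w0 : (Fin d → ℝ) → ℝ}
    (hF : ∀ k, ContDiff ℝ 1 (F k)) (h0 : ContDiff ℝ 1 w0) (k : ℕ) :
    ContDiff ℝ 1 (Wt F ix a w0 k) := by
  induction k with
  | zero => exact h0
  | succ k ih => exact tr_c1 ih (hF k) _ _

lemma Wt_cont {d : ℕ} {F : ℕ → (Fin d → ℝ) → ℝ} {ix : ℕ → Fin d} {a : ℕ → ℝ} {w0 : (Fin d → ℝ) → ℝ}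
    (hF : ∀ k, Continuous (F k)) (h0 : Continuous w0) (k : ℕ) :
    Continuous (Wt F ix a w0 k) := by
  induction k with
  | zero => exact h0
  | succ k ih => exact tr_cont ih (hF k) _ _

lemma Wt_per {d : ℕ} {F : ℕ → (Fin d → ℝ) → ℝ} {ix : ℕ → Fin d} {a : ℕ → ℝ} {w0 : (Fin d → ℝ) → ℝ}
    (hF : ∀ k, SpacePeriodic (F k)) (h0 : SpacePeriodic w0) (k : ℕ) :
    SpacePeriodic (Wt F ix a w0 k) := by
  induction k with
  | zero => exact h0
  | succ k ih => exact tr_per ih (hF k) _ _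

lemma pd_indep {d : ℕ} {F : (Fin d → ℝ) → ℝ} (hF : Differentiable ℝ F) {i : Fin d}
    (h : ∀ x (r : ℝ), F (x + r • ee i) = F x) (x) : pd F i x = 0 := by
  have h1 := pd_line hF i x 0
  simp only [h, zero_smul, add_zero] at h1
  exact h1.unique (hasDerivAt_const _ _)

lemma stage_ineq {d : ℕ} {u : ℝ → (Fin d → ℝ) → Fin d → ℝ} {T η A F} {ix : ℕ → Fin d}
    (hS : Stg u T η A F ix) {κ : ℝ}
    {θin : (Fin d → ℝ) → ℝ} {θ : ℝ → (Fin d → ℝ) → ℝ} (sol : IsAdvDiffSol u κ θin θ)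
    (hκ : 0 < κ) (k : ℕ) {W : (Fin d → ℝ) → ℝ} (hW : ContDiff ℝ 1 W) (hWp : SpacePeriodic W)
    {B lam : ℝ} (hlam : 0 < lam)
    (hB : ∀ t ∈ Set.Icc (T k) (T (k+1)), bI (gradSq (tr W (F k) (ix k) (A k t))) ≤ B) :
    ∀ s ∈ Set.Icc (T k) (T (k+1)),
      bI (fun x => (θ s x - tr W (F k) (ix k) (A k s) x) ^ 2) + lam / 2 * bI (fun x => θ s x ^ 2)
      ≤ bI (fun x => (θ (T k) x - tr W (F k) (ix k) (A k (T k)) x) ^ 2)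
        + lam / 2 * bI (fun x => θ (T k) x ^ 2) + κ / lam * (B * (s - T k)) := by
  have hT0 : 0 ≤ T k := by rw [← hS.T0]; exact hS.Tmono.monotone (Nat.zero_le k)
  have hsub : Set.Icc (T k) (T (k+1)) ⊆ Set.Icc 0 1 := Set.Icc_subset_Icc hT0 (hS.Tlt (k+1)).le
  have hAc : Continuous (A k) := continuous_iff_continuousAt.mpr fun t => (hS.Ader k t).continuousAt
  have hFc := (hS.FC k).continuous
  have hWc := hW.continuous
  set w : ℝ → (Fin d → ℝ) → ℝ := fun t => tr W (F k) (ix k) (A k t) with hw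
  have hwjoint : Continuous (fun p : ℝ × (Fin d → ℝ) => w p.1 p.2) := by
    simp only [hw, tr]
    fun_prop
  set G : ℝ → ℝ := fun s => bI (fun x => (θ s x - w s x) ^ 2) with hG
  set E : ℝ → ℝ := fun s => bI (fun x => θ s x ^ 2) with hE
  have hGc : ContinuousOn G (Set.Icc (T k) (T (k+1))) :=
    bI_cont (z := fun t x => (θ t x - w t x) ^ 2) isCompact_Icc
      (((sol.cont.mono (Set.prod_mono hsub le_rfl)).sub hwjoint.continuousOn).pow 2)
  have hEc : ContinuousOn E (Set.Icc (T k) (T (k+1))) := (E_cont sol).mono hsub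
  have hw1 : ∀ t, ContDiff ℝ 1 (w t) := fun t => tr_c1 hW (hS.FC k) _ _
  obtain ⟨LA, hLA0, hLA⟩ := hS.Alip k
  obtain ⟨MF, hMF0, hMF⟩ := cp_bdd hFc (hS.Fper k)
  obtain ⟨MW, hMW0, hMW⟩ := cp_bdd (cp_pd hW (ix k)) (sp_pd hWp (ix k))
  have hlip : ∀ s t x, |w t x - w s x| ≤ (MW * (LA * MF)) * |t - s| := by
    intro s t x
    have h1 := lip_of_pd (hW.differentiable (by norm_num)) (ix k) hMW
      (x + (-(A k s * F k x)) • ee (ix k)) (-(A k t * F k x) + (A k s * F k x))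
    have e : (x + (-(A k s * F k x)) • ee (ix k)) + (-(A k t * F k x) + (A k s * F k x)) • ee (ix k)
        = x + (-(A k t * F k x)) • ee (ix k) := by
      rw [add_assoc, ← add_smul]; congr 2; ring
    rw [e] at h1
    refine h1.trans ?_
    rw [show -(A k t * F k x) + (A k s * F k x) = -((A k t - A k s) * F k x) by ring, abs_neg, abs_mul]
    calc MW * (|A k t - A k s| * |F k x|) ≤ MW * ((LA * |t - s|) * MF) := by
          gcongr
          · exact hLA s t
          · exact hMF x
      _ = _ := by ring
  have hGd : ∀ t ∈ Set.Ioo (T k) (T (k+1)), HasDerivAt G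
      (- (2 * κ * bI (fun x => ∑ l, pd (θ t) l x * (pd (θ t) l x - pd (w t) l x)))) t := by
    intro t ht
    refine G_deriv hS sol hκ.le (hT0.trans_lt ht.1) (ht.2.trans (hS.Tlt (k+1))) k ⟨ht.1.le, ht.2.le⟩
      w (fun t => (hw1 t).continuous) (hw1 t) (tr_per hWp (hS.Fper k) _ _)
      (Kw := MW * (LA * MF)) (by positivity) hlip ?_
    intro x
    have hFd := (hS.FC k).differentiable (by norm_num)
    have hWd := hW.differentiable (by norm_num)
    have h3 := pd_line hWd (ix k) x (-(A k t * F k x))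
    have h4 : HasDerivAt (fun t => -(A k t * F k x)) (-(η k t * F k x)) t :=
      ((hS.Ader k t).mul_const (F k x)).neg
    have h5 := HasDerivAt.comp t h3 h4
    have h6 : pd (w t) (ix k) x = pd W (ix k) (x + (-(A k t * F k x)) • ee (ix k)) := by
      simp only [hw]
      rw [tr_pd hWd hFd, pd_indep hFd (hS.Find k)]
      simp [tr]
    rw [h6]
    refine h5.congr_deriv ?_
    ring
  set P : ℝ → ℝ := fun s => G s + lam / 2 * E s - κ / lam * B * s with hP
  have hanti : AntitoneOn P (Set.Icc (T k) (T (k+1))) := by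
    have hPd : ∀ t ∈ Set.Ioo (T k) (T (k+1)), HasDerivAt P
      (- (2 * κ * bI (fun x => ∑ l, pd (θ t) l x * (pd (θ t) l x - pd (w t) l x)))
        + lam / 2 * (- (2 * κ * bI (gradSq (θ t)))) - κ / lam * B) t := by
      intro t ht
      have h1 := E_deriv hS sol hκ.le (hT0.trans_lt ht.1) (ht.2.trans (hS.Tlt (k+1)))
      have h2 := (((hGd t ht).add (h1.const_mul (lam/2))).sub
        ((hasDerivAt_id t).const_mul (κ / lam * B)))
      refine h2.congr_deriv ?_
      simp
    apply antitoneOn_of_deriv_nonpos (convex_Icc _ _)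
    · exact (hGc.add (continuousOn_const.mul hEc)).sub (by fun_prop)
    · rw [interior_Icc]
      intro t ht
      exact (hPd t ht).differentiableAt.differentiableWithinAt
    · rw [interior_Icc]
      intro t ht
      rw [(hPd t ht).deriv]
      have ht1 : t ∈ Set.Ioc (0:ℝ) 1 := ⟨hT0.trans_lt ht.1, (ht.2.trans (hS.Tlt (k+1))).le⟩
      have hC1 : ContDiff ℝ 1 (θ t) := (sol.spaceC2 t ht1).of_le (by norm_num)
      have hcp : ∀ l, Continuous (pd (θ t) l) := fun l => cp_pd hC1 l
      have hcw : ∀ l, Continuous (pd (w t) l) := fun l => cp_pd (hw1 t) l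
      have hg1 : Continuous (gradSq (θ t)) := by unfold gradSq; fun_prop
      have hg2 : Continuous (gradSq (w t)) := by unfold gradSq; fun_prop
      have hyoung : bI (fun x => (1 - lam / 2) * gradSq (θ t) x - 1 / (2 * lam) * gradSq (w t) x)
          ≤ bI (fun x => ∑ l, pd (θ t) l x * (pd (θ t) l x - pd (w t) l x)) := by
        apply bI_mono (by fun_prop) (by fun_prop)
        intro x
        unfold gradSq
        rw [Finset.mul_sum, Finset.mul_sum, ← Finset.sum_sub_distrib]
        apply Finset.sum_le_sum
        intro l _
        have : pd (θ t) l x * (pd (θ t) l x - pd (w t) l x)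
          - ((1 - lam / 2) * pd (θ t) l x ^ 2 - 1 / (2 * lam) * pd (w t) l x ^ 2)
          = (lam * pd (θ t) l x - pd (w t) l x) ^ 2 / (2 * lam) := by
          field_simp; ring
        have h2 : 0 ≤ (lam * pd (θ t) l x - pd (w t) l x) ^ 2 / (2 * lam) := by positivity
        linarith
      rw [bI_sub (by fun_prop) (by fun_prop), bI_mul, bI_mul] at hyoung
      have hBt := hB t ⟨ht.1.le, ht.2.le⟩
      have hg0 := bI_nonneg (gradSq_nonneg (θ t))
      have h3 : 1 / (2 * lam) * bI (gradSq (w t)) ≤ 1 / (2 * lam) * B := by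
        gcongr
      have h4 : 2 * κ * ((1 - lam / 2) * bI (gradSq (θ t)) - 1 / (2 * lam) * B)
          ≤ 2 * κ * bI (fun x => ∑ l, pd (θ t) l x * (pd (θ t) l x - pd (w t) l x)) := by
        gcongr; linarith
      have h5 : 2 * κ * (1 / (2 * lam) * B) = κ / lam * B := by field_simp
      have h6 : 0 ≤ κ * bI (gradSq (θ t)) := by positivity
      nlinarith
  intro s hs
  have := hanti ⟨le_rfl, hs.1.trans hs.2⟩ hs hs.1
  simp only [hP] at this
  simp only [hG, hE] at this
  linarith

lemma accum {d : ℕ} {u : ℝ → (Fin d → ℝ) → Fin d → ℝ} {T η A F} {ix : ℕ → Fin d}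
    (hS : Stg u T η A F ix) (hA0 : ∀ k, A k (T k) = 0) {κ : ℝ}
    {θin : (Fin d → ℝ) → ℝ} {θ : ℝ → (Fin d → ℝ) → ℝ} (sol : IsAdvDiffSol u κ θin θ)
    (hκ : 0 < κ) {w0 : (Fin d → ℝ) → ℝ} (hW : ContDiff ℝ 1 w0) (hWp : SpacePeriodic w0)
    {B : ℕ → ℝ} (hB0 : ∀ k, 0 ≤ B k) {lam : ℝ} (hlam : 0 < lam)
    (hB : ∀ k, ∀ t ∈ Set.Icc (T k) (T (k+1)),
      bI (gradSq (tr (Wt F ix (fun k => A k (T (k+1))) w0 k) (F k) (ix k) (A k t))) ≤ B k) (k : ℕ) :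
    ∀ s ∈ Set.Icc (T k) (T (k+1)),
      nr (fun x => θ s x - tr (Wt F ix (fun k => A k (T (k+1))) w0 k) (F k) (ix k) (A k s) x) ^ 2
      ≤ nr (fun x => θin x - w0 x) ^ 2
        + lam * (κ * dissip θ) + κ / lam * ∑ m ∈ Finset.range (k+1), B m * (T (m+1) - T m) := by
  set W := Wt F ix (fun k => A k (T (k+1))) w0 with hWdef
  have hT0 : ∀ k, 0 ≤ T k := fun k => by rw [← hS.T0]; exact hS.Tmono.monotone (Nat.zero_le k)
  have hWk : ∀ k, ContDiff ℝ 1 (W k) := Wt_c1 hS.FC hW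
  have hWkp : ∀ k, SpacePeriodic (W k) := Wt_per hS.Fper hWp
  have key : ∀ k, bI (fun x => (θ (T k) x - W k x) ^ 2) + lam / 2 * bI (fun x => θ (T k) x ^ 2)
      ≤ bI (fun x => (θin x - w0 x) ^ 2) + lam / 2 * bI (fun x => θ 0 x ^ 2)
       + κ / lam * ∑ m ∈ Finset.range k, B m * (T (m+1) - T m) := by
    intro k
    induction k with
    | zero =>
      rw [hS.T0]
      have : W 0 = w0 := rfl
      simp [this, sol.init]
    | succ k ih =>
      have := stage_ineq hS sol hκ k (hWk k) (hWkp k) hlam (hB k) (T (k+1))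
        ⟨hS.Tmono.monotone (by omega), le_rfl⟩
      rw [hA0, tr_zero] at this
      have e : W (k+1) = tr (W k) (F k) (ix k) (A k (T (k+1))) := rfl
      rw [← e] at this
      rw [Finset.sum_range_succ]
      linarith
  intro s hs
  have h1 := stage_ineq hS sol hκ k (hWk k) (hWkp k) hlam (hB k) s hs
  rw [hA0, tr_zero] at h1
  have h2 := key k
  have hE : bI (fun x => θ 1 x ^ 2) ≤ bI (fun x => θ s x ^ 2) := by
    have hs1 : s ∈ Set.Icc (0:ℝ) 1 := ⟨(hT0 k).trans hs.1, hs.2.trans (hS.Tlt _).le⟩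
    have hanti : AntitoneOn (fun t => bI (fun x => θ t x ^ 2)) (Set.Icc 0 1) := by
      apply antitoneOn_of_deriv_nonpos (convex_Icc _ _) (E_cont sol)
      · rw [interior_Icc]
        intro t ht
        exact (E_deriv hS sol hκ.le ht.1 ht.2).differentiableAt.differentiableWithinAt
      · rw [interior_Icc]
        intro t ht
        rw [(E_deriv hS sol hκ.le ht.1 ht.2).deriv]
        have := bI_nonneg (gradSq_nonneg (θ t))
        have : 0 ≤ 2 * κ * bI (gradSq (θ t)) := by positivity
        linarith
    exact hanti hs1 ⟨zero_le_one, le_rfl⟩ hs1.2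
  have hen := (energy hS sol hκ).2
  rw [nr_sq, nr_sq, Finset.sum_range_succ]
  have h3 : κ / lam * (B k * (s - T k)) ≤ κ / lam * (B k * (T (k+1) - T k)) := by
    have := hB0 k
    have := hs.2
    gcongr
  have h4 : lam / 2 * bI (fun x => θ 0 x ^ 2) - lam / 2 * bI (fun x => θ s x ^ 2)
      ≤ lam * (κ * dissip θ) := by
    have : lam / 2 * bI (fun x => θ 1 x ^ 2) ≤ lam / 2 * bI (fun x => θ s x ^ 2) := by gcongr
    have h5 : lam / 2 * (bI (fun x => θ 0 x ^ 2) - bI (fun x => θ 1 x ^ 2))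
      = lam * (κ * dissip θ) := by rw [hen]; ring
    linarith
  linarith

def fpr (w s : ℝ) : ℝ := -(1/(2*π)) * arcsin (cos w * cos (2*π*s))
def Hpr (w s : ℝ) : ℝ := cos w * sin (2*π*s) / √(1 - (cos w * cos (2*π*s))^2)

lemma pr_aux {w : ℝ} (s : ℝ) :
    (cos w * cos (2*π*s))^2 ≤ (cos w)^2 := by
  have := cos_sq_le_one (2*π*s)
  rw [mul_pow]; nlinarith [sq_nonneg (cos w)]

lemma pr_D {w : ℝ} (hw : w ∈ Set.Ioo 0 (π/2)) (s : ℝ) :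
    (sin w)^2 ≤ 1 - (cos w * cos (2*π*s))^2 := by
  have := pr_aux (w := w) s
  have := sin_sq_add_cos_sq w
  linarith

lemma pr_sin {w : ℝ} (hw : w ∈ Set.Ioo 0 (π/2)) : 0 < sin w :=
  sin_pos_of_pos_of_lt_pi hw.1 (by have := hw.2; have := pi_pos; linarith)

lemma pr_cos {w : ℝ} (hw : w ∈ Set.Ioo 0 (π/2)) : 0 < cos w :=
  cos_pos_of_mem_Ioo ⟨by have := hw.1; have := pi_pos; linarith, hw.2⟩

lemma pr_Dpos {w : ℝ} (hw : w ∈ Set.Ioo 0 (π/2)) (s : ℝ) :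
    0 < 1 - (cos w * cos (2*π*s))^2 := lt_of_lt_of_le (by have := pr_sin hw; positivity) (pr_D hw s)

lemma pr_ne {w : ℝ} (hw : w ∈ Set.Ioo 0 (π/2)) (s : ℝ) :
    cos w * cos (2*π*s) ≠ -1 ∧ cos w * cos (2*π*s) ≠ 1 := by
  have := pr_Dpos hw s
  constructor <;> intro h <;> rw [h] at this <;> norm_num at this

lemma fpr_der {w : ℝ} (hw : w ∈ Set.Ioo 0 (π/2)) (s : ℝ) : HasDerivAt (fpr w) (Hpr w s) s := by
  have h1 : HasDerivAt (fun s => cos w * cos (2*π*s)) (cos w * (-sin (2*π*s) * (2*π))) s := by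
    have : HasDerivAt (fun s:ℝ => 2*π*s) (2*π) s := by simpa using (hasDerivAt_id s).const_mul (2*π)
    exact (this.cos).const_mul _
  have h2 := (hasDerivAt_arcsin (pr_ne hw s).1 (pr_ne hw s).2).comp s h1
  have h3 := h2.const_mul (-(1/(2*π)))
  refine h3.congr_deriv ?_
  unfold Hpr
  have := pi_ne_zero
  field_simp

lemma Hpr_smooth {w : ℝ} (hw : w ∈ Set.Ioo 0 (π/2)) : ContDiff ℝ 1 (Hpr w) := by
  unfold Hpr
  refine ContDiff.div ?_ (ContDiff.sqrt ?_ ?_) ?_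
  · fun_prop
  · fun_prop
  · intro x; exact (pr_Dpos hw x).ne'
  · intro x; exact (sqrt_pos.2 (pr_Dpos hw x)).ne'

lemma fpr_smooth {w : ℝ} (hw : w ∈ Set.Ioo 0 (π/2)) : ContDiff ℝ 1 (fpr w) := by
  rw [contDiff_one_iff_deriv]
  refine ⟨fun s => (fpr_der hw s).differentiableAt, ?_⟩
  have : deriv (fpr w) = Hpr w := funext fun s => (fpr_der hw s).deriv
  rw [this]; exact (Hpr_smooth hw).continuous

lemma fpr_per (w : ℝ) : Function.Periodic (fpr w) 1 := by
  intro s; unfold fpr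
  rw [show 2*π*(s+1) = 2*π*s + 2*π by ring, cos_add_two_pi]

lemma Hpr_per (w : ℝ) : Function.Periodic (Hpr w) 1 := by
  intro s; unfold Hpr
  rw [show 2*π*(s+1) = 2*π*s + 2*π by ring, cos_add_two_pi, sin_add_two_pi]

lemma fpr_bd (w s : ℝ) : |fpr w s| ≤ 1/4 := by
  have h1 := neg_pi_div_two_le_arcsin (cos w * cos (2*π*s))
  have h2 := arcsin_le_pi_div_two (cos w * cos (2*π*s))
  have h3 : |arcsin (cos w * cos (2*π*s))| ≤ π/2 := abs_le.2 ⟨by linarith, h2⟩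
  unfold fpr
  have := pi_pos
  rw [abs_mul, abs_neg, abs_of_pos (by positivity : 0 < 1/(2*π))]
  calc _ ≤ 1/(2*π) * (π/2) := by gcongr
    _ = _ := by field_simp; norm_num

lemma Hpr_bd {w : ℝ} (hw : w ∈ Set.Ioo 0 (π/2)) (s : ℝ) : |Hpr w s| ≤ 1 := by
  unfold Hpr
  have hD := sqrt_pos.2 (pr_Dpos hw s)
  rw [abs_div, abs_of_pos hD, div_le_one hD]
  apply le_sqrt_of_sq_le
  rw [sq_abs]
  have a := sin_sq_add_cos_sq (2*π*s)
  have b := cos_sq_le_one w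
  nlinarith

lemma Hpr_der {w : ℝ} (hw : w ∈ Set.Ioo 0 (π/2)) (s : ℝ) : |deriv (Hpr w) s| ≤ π^2/w := by
  have hlin : HasDerivAt (fun s:ℝ => 2*π*s) (2*π) s := by simpa using (hasDerivAt_id s).const_mul (2*π)
  have h1 : HasDerivAt (fun s => cos w * cos (2*π*s)) (cos w * (-sin (2*π*s) * (2*π))) s :=
    (hlin.cos).const_mul _
  have h2 : HasDerivAt (fun s => cos w * sin (2*π*s)) (cos w * (cos (2*π*s) * (2*π))) s :=
    (hlin.sin).const_mul _
  have h3 := ((h1.pow 2).const_sub 1).sqrt (pr_Dpos hw s).ne'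
  have hD := sqrt_pos.2 (pr_Dpos hw s)
  have h4 := h2.div h3 hD.ne'
  have h5 : HasDerivAt (Hpr w) _ s := h4
  have hsin := pr_sin hw
  have hpi := pi_pos
  have hsq : √(1 - (cos w * cos (2*π*s))^2)^2 = 1 - (cos w * cos (2*π*s))^2 := sq_sqrt (pr_Dpos hw s).le
  have hDl : sin w ≤ √(1 - (cos w * cos (2*π*s))^2) := le_sqrt_of_sq_le (pr_D hw s)
  rw [h5.deriv]
  simp only [Pi.pow_apply]
  set D := √(1 - (cos w * cos (2*π*s))^2) with hDdef
  have key : ∀ e, e = 2*π*(cos w * cos (2*π*s)*(sin w)^2)/D^3 → |e| ≤ π^2/w := by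
    rintro e rfl
    rw [abs_div, abs_mul, abs_mul, abs_mul, abs_of_pos hpi, abs_of_pos (by positivity : 0 < D^3), abs_of_nonneg (sq_nonneg (sin w)), abs_two]
    have hc : |cos w * cos (2*π*s)| ≤ 1 := by
      rw [abs_mul]; exact mul_le_one₀ (abs_cos_le_one _) (abs_nonneg _) (abs_cos_le_one _)
    have hjor := mul_le_sin hw.1.le hw.2.le
    have hw0 := hw.1
    calc 2*π*(|cos w * cos (2*π*s)| * (sin w)^2)/D^3 ≤ 2*π*(1 * D^2)/D^3 := by gcongr
      _ = 2*π/D := by field_simp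
      _ ≤ 2*π/(2/π*w) := by gcongr; linarith
      _ = π^2/w := by field_simp
  apply key
  have := sin_sq_add_cos_sq (2*π*s)
  have := sin_sq_add_cos_sq w
  have hs' : (sin (2*π*s))^2 = 1 - (cos (2*π*s))^2 := by linarith
  have hs'' : (sin w)^2 = 1 - (cos w)^2 := by linarith
  field_simp
  simp only [Nat.cast_ofNat, hsq]
  norm_num
  ring_nf
  rw [show π * s * 2 = 2*π*s by ring, hs', hs'']
  ring

lemma pr_sgn {w : ℝ} (hw : w ∈ Set.Ioo 0 (π/2)) {s : ℝ} (h : 0 ≤ sin (2*π*s)) : 0 ≤ Hpr w s := by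
  unfold Hpr
  have := (pr_cos hw).le
  positivity
lemma pr_sgn' {w : ℝ} (hw : w ∈ Set.Ioo 0 (π/2)) {s : ℝ} (h : sin (2*π*s) ≤ 0) : Hpr w s ≤ 0 := by
  unfold Hpr
  have := (pr_cos hw).le
  apply div_nonpos_of_nonpos_of_nonneg
  · exact mul_nonpos_of_nonneg_of_nonpos this h
  · positivity

lemma pr_key {w v : ℝ} (hw : w ∈ Set.Ioo 0 (π/2)) (hv : v ∈ Set.Ioo 0 (π/2)) (s : ℝ) :
    (1 - Hpr w s * Hpr v s)^2 ≤ (1 - |Hpr w s|) + (1 - |Hpr v s|) := by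
  have e : Hpr w s * Hpr v s = |Hpr w s| * |Hpr v s| := by
    rcases le_total 0 (sin (2*π*s)) with h | h
    · rw [abs_of_nonneg (pr_sgn hw h), abs_of_nonneg (pr_sgn hv h)]
    · rw [abs_of_nonpos (pr_sgn' hw h), abs_of_nonpos (pr_sgn' hv h)]; ring
  rw [e]
  have a1 := Hpr_bd hw s
  have a2 := Hpr_bd hv s
  have b1 := abs_nonneg (Hpr w s)
  have b2 := abs_nonneg (Hpr v s)
  generalize |Hpr w s| = x at *
  generalize |Hpr v s| = y at *
  have h1 : 0 ≤ x*y := by positivity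
  have h2 : x*y ≤ 1 := by nlinarith
  nlinarith [mul_nonneg (sub_nonneg.2 a1) (sub_nonneg.2 a2)]

lemma pr_int {w : ℝ} (hw : w ∈ Set.Ioo 0 (π/2)) : ∫ s in (0:ℝ)..1, (1 - |Hpr w s|) = 2*w/π := by
  have hc : Continuous (fun s => |Hpr w s|) := (Hpr_smooth hw).continuous.abs
  have hcH := (Hpr_smooth hw).continuous
  have hpi := pi_pos
  have hac : arcsin (cos w) = π/2 - w := by
    rw [← sin_pi_div_two_sub]
    apply arcsin_sin <;> linarith [hw.1, hw.2]
  have v0 : fpr w 0 = -(1/(2*π)) * (π/2 - w) := by simp [fpr, hac]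
  have v1 : fpr w 1 = -(1/(2*π)) * (π/2 - w) := by simp [fpr, hac]
  have v2 : fpr w (1/2) = (1/(2*π)) * (π/2 - w) := by
    unfold fpr
    rw [show 2*π*(1/2) = π by ring, cos_pi, mul_neg_one, arcsin_neg, hac]; ring
  have i1 : ∫ s in (0:ℝ)..(1/2), |Hpr w s| = fpr w (1/2) - fpr w 0 := by
    rw [← intervalIntegral.integral_eq_sub_of_hasDerivAt (fun s _ => fpr_der hw s) (hcH.intervalIntegrable _ _)]
    apply intervalIntegral.integral_congr
    intro s hs
    rw [Set.uIcc_of_le (by norm_num)] at hs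
    apply abs_of_nonneg (pr_sgn hw _)
    apply sin_nonneg_of_nonneg_of_le_pi
    · have := hs.1; positivity
    · nlinarith [hs.2]
  have i2 : ∫ s in (1/2:ℝ)..1, |Hpr w s| = fpr w (1/2) - fpr w 1 := by
    have : ∫ s in (1/2:ℝ)..1, |Hpr w s| = ∫ s in (1/2:ℝ)..1, -Hpr w s := by
      apply intervalIntegral.integral_congr
      intro s hs
      rw [Set.uIcc_of_le (by norm_num)] at hs
      apply abs_of_nonpos (pr_sgn' hw _)
      rw [show sin (2*π*s) = sin (2*π*s - 2*π) by rw [sin_sub_two_pi]]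
      apply sin_nonpos_of_nonpos_of_neg_pi_le
      · nlinarith [hs.2]
      · nlinarith [hs.1]
    rw [this, intervalIntegral.integral_neg, intervalIntegral.integral_eq_sub_of_hasDerivAt (fun s _ => fpr_der hw s) (hcH.intervalIntegrable _ _)]
    ring
  rw [intervalIntegral.integral_sub (by simp) (hc.intervalIntegrable _ _),
    ← intervalIntegral.integral_add_adjacent_intervals (hc.intervalIntegrable 0 (1/2)) (hc.intervalIntegrable (1/2) 1), i1, i2, v0, v1, v2]
  simp
  field_simp
  ring

def ctr (s : ℝ) : ℝ := max 0 (min s (1/2))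
def ppr (s : ℝ) : ℝ := 24 * ctr s * (1 - 2 * ctr s)
def Spr (s : ℝ) : ℝ := ∫ r in (0:ℝ)..s, ppr r

lemma ctr_mem (s : ℝ) : 0 ≤ ctr s ∧ ctr s ≤ 1/2 :=
  ⟨le_max_left _ _, max_le (by norm_num) (min_le_right _ _)⟩
lemma ctr_lip (s t : ℝ) : |ctr s - ctr t| ≤ |s - t| := by
  unfold ctr
  rw [max_comm 0, max_comm 0]
  exact (abs_max_sub_max_le_abs _ _ _).trans (abs_inf_sub_inf_le_abs _ _ _)
lemma ppr_lip (s t : ℝ) : |ppr s - ppr t| ≤ 24 * |s - t| := by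
  have h := ctr_lip s t
  have e : ppr s - ppr t = 24 * (1 - 2 * (ctr s + ctr t)) * (ctr s - ctr t) := by unfold ppr; ring
  have h1 := ctr_mem s
  have h2 := ctr_mem t
  rw [e, abs_mul, abs_mul]
  have : |1 - 2 * (ctr s + ctr t)| ≤ 1 := abs_le.2 ⟨by linarith, by linarith⟩
  calc _ ≤ |(24:ℝ)| * 1 * |s - t| := by gcongr
    _ = _ := by norm_num
lemma ppr_nonneg (s : ℝ) : 0 ≤ ppr s := by
  have h1 := ctr_mem s
  unfold ppr
  exact mul_nonneg (by linarith) (by linarith)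
lemma ppr_bd (s : ℝ) : ppr s ≤ 3 := by
  unfold ppr; nlinarith [sq_nonneg (ctr s - 1/4)]
lemma ppr_abs (s : ℝ) : |ppr s| ≤ 3 := by rw [abs_of_nonneg (ppr_nonneg s)]; exact ppr_bd s
lemma ppr_left {s : ℝ} (h : s ≤ 0) : ppr s = 0 := by
  have : ctr s = 0 := by unfold ctr; rw [min_eq_left (by linarith), max_eq_left h]
  simp [ppr, this]
lemma ppr_right {s : ℝ} (h : 1/2 ≤ s) : ppr s = 0 := by
  have : ctr s = 1/2 := by unfold ctr; rw [min_eq_right h]; norm_num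
  simp [ppr, this]
lemma ppr_cont : Continuous ppr := by unfold ppr ctr; fun_prop
lemma Spr_der (s : ℝ) : HasDerivAt Spr (ppr s) s :=
  intervalIntegral.integral_hasDerivAt_right (ppr_cont.intervalIntegrable _ _)
    ppr_cont.stronglyMeasurable.stronglyMeasurableAtFilter ppr_cont.continuousAt
lemma Spr_zero : Spr 0 = 0 := by simp [Spr]
lemma Spr_half : Spr (1/2) = 1 := by
  unfold Spr
  have : ∫ r in (0:ℝ)..(1/2), ppr r = ∫ r in (0:ℝ)..(1/2), (24 * r - 48 * r^2) := by
    apply intervalIntegral.integral_congr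
    intro s hs
    rw [Set.uIcc_of_le (by norm_num)] at hs
    have : ctr s = s := by unfold ctr; rw [min_eq_left hs.2, max_eq_right hs.1]
    simp only [ppr, this]; ring
  rw [this, intervalIntegral.integral_sub (by apply Continuous.intervalIntegrable; fun_prop) (by apply Continuous.intervalIntegrable; fun_prop)]
  rw [intervalIntegral.integral_const_mul, intervalIntegral.integral_const_mul, integral_id, integral_pow]
  norm_num
lemma Spr_right {s : ℝ} (h : 1/2 ≤ s) : Spr s = 1 := by
  have := intervalIntegral.integral_add_adjacent_intervals (ppr_cont.intervalIntegrable 0 (1/2)) (ppr_cont.intervalIntegrable (μ := volume) (1/2) s)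
  have h0 : ∫ r in (1/2:ℝ)..s, ppr r = 0 := by
    rw [intervalIntegral.integral_congr (g := fun _ => 0)]
    · simp
    intro r hr
    rw [Set.uIcc_of_le h] at hr
    exact ppr_right hr.1
  rw [h0, add_zero] at this
  have h2 := Spr_half
  unfold Spr at *
  linarith
lemma Spr_mono : Monotone Spr := monotone_of_hasDerivAt_nonneg Spr_der (fun s => ppr_nonneg s)
lemma Spr_mem {s : ℝ} (h : 0 ≤ s) : 0 ≤ Spr s ∧ Spr s ≤ 1 := by
  refine ⟨Spr_zero ▸ Spr_mono h, ?_⟩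
  rcases le_total s (1/2) with h' | h'
  · exact Spr_half ▸ Spr_mono h'
  · exact (Spr_right h').le
lemma Spr_lip (s t : ℝ) : |Spr s - Spr t| ≤ 3 * |s - t| := by
  have := (convex_univ (𝕜 := ℝ) (E := ℝ)).norm_image_sub_le_of_norm_hasDerivWithin_le (f := Spr) (f' := ppr) (C := 3) (x := t) (y := s)
    (fun x _ => (Spr_der x).hasDerivWithinAt) (fun x _ => ppr_abs x) (Set.mem_univ _) (Set.mem_univ _)
  simpa using this

def Xs : ℕ → ℝ
  | 0 => 2^20
  | k+1 => Xs k * (1 + (1/8)^k * (⌊Xs k / 128^k⌋₊ : ℝ)^2)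
def ms (k : ℕ) : ℕ := ⌊Xs k / 128^k⌋₊
def Ns (k : ℕ) : ℝ := ((ms k)^3 : ℕ)
def as (k : ℕ) : ℝ := (1/8)^k / ms k
def bs (k : ℕ) : ℝ := (1/8)^k * (ms k : ℝ)^2
def ws (k : ℕ) : ℝ := 1 / Xs k ^ 4

lemma Xs_succ (k : ℕ) : Xs (k+1) = Xs k * (1 + bs k) := rfl

lemma Xs_aux (k : ℕ) (h : 2^(20*(k+1)) ≤ Xs k) :
    Xs k / (2 * 128^k) ≤ ms k ∧ Xs k * 2^18 * 8^k ≤ bs k := by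
  have h0 : (0:ℝ) < 128^k := by positivity
  have p2 : (2:ℝ)^(20*(k+1)) = 2^20 * (128^k * 8^k * 1024^k) := by
    rw [← mul_pow, ← mul_pow, pow_mul, pow_succ]; norm_num; ring
  have one8 : (1:ℝ) ≤ 8^k := one_le_pow₀ (by norm_num)
  have one10 : (1:ℝ) ≤ 1024^k := one_le_pow₀ (by norm_num)
  have hX : 2 * 128^k ≤ Xs k := by
    refine le_trans ?_ h
    rw [p2]
    have : (128:ℝ)^k * 1 * 1 ≤ 128^k * 8^k * 1024^k := by gcongr
    linarith
  have h1 : Xs k / (2 * 128^k) ≤ ms k := by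
    have := Nat.lt_floor_add_one (Xs k / 128^k)
    have e : Xs k / 128^k = 2 * (Xs k / (2 * 128^k)) := by field_simp
    have : 1 ≤ Xs k / (2 * 128^k) := by rw [one_le_div (by positivity)]; exact hX
    unfold ms
    linarith
  refine ⟨h1, ?_⟩
  have hXp : 0 < Xs k := lt_of_lt_of_le (by positivity) hX
  calc Xs k * 2^18 * 8^k = (1/8)^k * (Xs k * (2^20 * (128^k * 128^k)) / (2 * 128^k)^2) * (8^k*8^k) := by
        rw [one_div, inv_pow]; field_simp
    _ = (1/8)^k * (Xs k * (2^20 * (128^k * (128^k * (8^k * 8^k)))) / (2 * 128^k)^2) := by ring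
    _ ≤ (1/8)^k * (Xs k * (2^20 * (128^k * 8^k * 1024^k)) / (2 * 128^k)^2) := by
        have : (128:ℝ)^k * (8^k*8^k) ≤ 8^k * 1024^k := by
          rw [← mul_pow, ← mul_pow, ← mul_pow]; norm_num
        have e : (128:ℝ)^k * 8^k * 1024^k = 128^k * (8^k * 1024^k) := by ring
        rw [e]; gcongr
    _ ≤ (1/8)^k * (Xs k * Xs k / (2 * 128^k)^2) := by rw [← p2]; gcongr
    _ = (1/8)^k * (Xs k / (2 * 128^k))^2 := by rw [div_pow]; ring
    _ ≤ _ := by unfold bs; gcongr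

lemma Xs_big (k : ℕ) : 2^(20*(k+1)) ≤ Xs k := by
  induction k with
  | zero => norm_num [Xs]
  | succ k ih =>
    have := (Xs_aux k ih).2
    have hp : 0 ≤ Xs k := le_trans (by positivity) ih
    have one8 : (1:ℝ) ≤ 8^k := one_le_pow₀ (by norm_num)
    have p : (2:ℝ)^20 ≤ 2^(20*(k+1)) := pow_le_pow_right₀ (by norm_num) (by omega)
    have : 2^20 ≤ bs k := by
      calc (2:ℝ)^20 ≤ 2^20 * 2^18 * 1 := by norm_num
        _ ≤ Xs k * 2^18 * 8^k := by gcongr; linarith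
        _ ≤ _ := this
    rw [Xs_succ, show 20*(k+1+1) = 20*(k+1)+20 by ring, pow_add]
    exact mul_le_mul ih (by linarith) (by positivity) hp

lemma Xs_pos (k : ℕ) : 0 < Xs k := lt_of_lt_of_le (by positivity) (Xs_big k)
lemma ms_ge (k : ℕ) : Xs k / (2 * 128^k) ≤ ms k := (Xs_aux k (Xs_big k)).1
lemma bs_ge (k : ℕ) : Xs k * 2^18 * 8^k ≤ bs k := (Xs_aux k (Xs_big k)).2
lemma ms_pos (k : ℕ) : 0 < (ms k : ℝ) := lt_of_lt_of_le (by have := Xs_pos k; positivity) (ms_ge k)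
lemma ms_one (k : ℕ) : 1 ≤ (ms k : ℝ) := by exact_mod_cast ms_pos k
lemma as_pos (k : ℕ) : 0 < as k := by have := ms_pos k; unfold as; positivity
lemma as_le (k : ℕ) : as k ≤ (1/8)^k := div_le_self (by positivity) (ms_one k)
lemma Ns_pos (k : ℕ) : 0 < Ns k := by have := ms_pos k; unfold Ns; push_cast; positivity
lemma as_Ns (k : ℕ) : as k * Ns k = bs k := by
  have := ms_pos k
  unfold as Ns bs; push_cast; field_simp
lemma bs_pos (k : ℕ) : 0 < bs k := by have := ms_pos k; unfold bs; positivity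
lemma Xs_mono : Monotone Xs := monotone_nat_of_le_succ fun k => by
  rw [Xs_succ]; nlinarith [Xs_pos k, bs_pos k]
lemma as_Xs (k : ℕ) : 16^k ≤ as k * Xs k := by
  have h1 : (ms k : ℝ) ≤ Xs k / 128^k := Nat.floor_le (by have := Xs_pos k; positivity)
  have := ms_pos k
  rw [le_div_iff₀ (by positivity)] at h1
  unfold as
  rw [div_mul_eq_mul_div, le_div_iff₀ this]
  calc 16^k * (ms k : ℝ) = (1/8)^k * (ms k * 128^k) := by
        rw [show (128:ℝ)^k = 8^k * 16^k by rw [← mul_pow]; norm_num, one_div, inv_pow]; field_simp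
    _ ≤ _ := by gcongr
lemma Xs_one (k : ℕ) : 8^k ≤ Xs k := by
  refine le_trans ?_ (Xs_big k)
  rw [show (8:ℝ) = 2^3 by norm_num, ← pow_mul]
  exact pow_le_pow_right₀ (by norm_num) (by omega)
lemma Xs_ge (k : ℕ) : 2^20 * Xs k ≤ Xs (k+1) := by
  rw [Xs_succ]
  have one8 : (1:ℝ) ≤ 8^k := one_le_pow₀ (by norm_num)
  have p : (2:ℝ)^20 ≤ 2^(20*(k+1)) := pow_le_pow_right₀ (by norm_num) (by omega)
  have := Xs_big k
  have h2 := bs_ge k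
  have hp := Xs_pos k
  have : 2^20 ≤ bs k := by
    calc (2:ℝ)^20 ≤ 2^20 * 2^18 * 1 := by norm_num
      _ ≤ Xs k * 2^18 * 8^k := by gcongr; linarith
      _ ≤ _ := h2
  nlinarith
lemma ws_mem (k : ℕ) : ws k ∈ Set.Ioo 0 (π/2) := by
  have h := Xs_pos k
  have h1 : 1 ≤ Xs k := le_trans (one_le_pow₀ (by norm_num)) (Xs_one k)
  refine ⟨by unfold ws; positivity, ?_⟩
  have : ws k ≤ 1 := by unfold ws; rw [div_le_one (by positivity)]; exact one_le_pow₀ h1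
  linarith [pi_gt_three]
lemma loss1 {n k : ℕ} (h : n ≤ k) : Xs n * (2/(1+bs k) + √(ws k)) ≤ 3 * (1/8)^k := by
  have hX := Xs_mono h
  have h0 := Xs_pos k
  have h0' := Xs_pos n
  have hb := bs_pos k
  have one8 : (1:ℝ) ≤ 8^k := one_le_pow₀ (by norm_num)
  have e1 : Xs n * (2/(1+bs k)) ≤ 2 * (1/8)^k := by
    rw [mul_div_assoc', div_le_iff₀ (by positivity)]
    calc Xs n * 2 ≤ 2 * Xs k := by linarith
      _ ≤ 2 * (1/8)^k * (Xs k * 2^18 * 8^k) := by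
        rw [one_div, inv_pow]; field_simp; norm_num
      _ ≤ _ := by gcongr; have := bs_ge k; linarith
  have e2 : √(ws k) = 1/Xs k^2 := by
    unfold ws
    rw [show 1/Xs k^4 = (1/Xs k^2)^2 by field_simp]
    exact sqrt_sq (by positivity)
  have e3 : Xs n * √(ws k) ≤ (1/8)^k := by
    rw [e2]
    calc Xs n * (1/Xs k^2) ≤ Xs k * (1/Xs k^2) := by gcongr
      _ = 1/Xs k := by field_simp
      _ ≤ 1/8^k := by gcongr; exact Xs_one k
      _ = _ := by rw [one_div, one_div, inv_pow]
  linarith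

def κs (n : ℕ) : ℝ := 2^(n+1) / Xs (n+1)^2
lemma κs_pos (n : ℕ) : 0 < κs n := by have := Xs_pos (n+1); unfold κs; positivity
lemma κs_step (n : ℕ) : κs (n+1) ≤ κs n / 2 := by
  have h := Xs_ge (n+1)
  have h0 := Xs_pos (n+1)
  have h1 := Xs_pos (n+1+1)
  unfold κs
  rw [div_div, div_le_div_iff₀ (by positivity) (by positivity)]
  calc (2:ℝ)^(n+1+1) * (Xs (n+1)^2*2) = 2^(n+1) * (4 * Xs (n+1)^2) := by ring
    _ ≤ 2^(n+1) * ((2^20)^2 * Xs (n+1)^2) := by gcongr; norm_num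
    _ = 2^(n+1) * (2^20 * Xs (n+1))^2 := by ring
    _ ≤ _ := by gcongr
lemma κs_anti : Antitone κs := antitone_nat_of_succ_le fun n => by linarith [κs_step n, κs_pos n]
lemma κs_lim : Tendsto κs atTop (𝓝 0) := by
  have h : ∀ n, κs n ≤ κs 0 * (1/2)^n := by
    intro n; induction n with
    | zero => simp
    | succ n ih => rw [pow_succ]; linarith [κs_step n]
  have l : Tendsto (fun n : ℕ => κs 0 * (1/2:ℝ)^n) atTop (𝓝 0) := by
    simpa using (tendsto_pow_atTop_nhds_zero_of_lt_one (r := (1/2:ℝ)) (by norm_num) (by norm_num)).const_mul (κs 0)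
  exact squeeze_zero (fun n => (κs_pos n).le) h l
lemma κs_sum (n : ℕ) : κs n * ∑ m ∈ Finset.range (n+1), Xs (m+1)^2 * (1/2)^(m+1) ≤ 2 := by
  induction n with
  | zero =>
    have := Xs_pos 1
    simp [κs]; field_simp; norm_num
  | succ n ih =>
    rw [Finset.sum_range_succ, mul_add]
    have e : κs (n+1) * (Xs (n+1+1)^2 * (1/2)^(n+1+1)) = 1 := by
      have := Xs_pos (n+1+1)
      unfold κs; rw [one_div, inv_pow]; field_simp
    have h2 : 0 ≤ ∑ m ∈ Finset.range (n+1), Xs (m+1)^2 * (1/2)^(m+1) := Finset.sum_nonneg fun m _ => by positivity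
    have := mul_le_mul_of_nonneg_right (κs_step n) h2
    rw [e]; linarith

def Ts (k : ℕ) : ℝ := 1 - (1/2)^k
def ηs (k : ℕ) (t : ℝ) : ℝ := as k * 2^(k+1) * ppr ((t - Ts k) * 2^(k+1))
def As (k : ℕ) (t : ℝ) : ℝ := as k * Spr ((t - Ts k) * 2^(k+1))
def ixs {d : ℕ} (hd : 2 ≤ d) (k : ℕ) : Fin d := ⟨k % d, Nat.mod_lt _ (by omega)⟩
def Fs {d : ℕ} (hd : 2 ≤ d) (k : ℕ) (x : Fin d → ℝ) : ℝ := fpr (ws k) (Ns k * x (ixs hd (k+1)))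
def us {d : ℕ} (hd : 2 ≤ d) (t : ℝ) (x : Fin d → ℝ) (l : Fin d) : ℝ :=
  ∑' k, ηs k t * Fs hd k x * (if l = ixs hd k then 1 else 0)

lemma ixs_ne {d : ℕ} (hd : 2 ≤ d) (k : ℕ) : ixs hd (k+1) ≠ ixs hd k := by
  intro h
  simp only [ixs, Fin.mk.injEq] at h
  have h1 : (k+1) ≡ k [MOD d] := h
  have h2 : (k + 1) ≡ k + 0 [MOD d] := h1
  have h3 := Nat.ModEq.add_left_cancel' k h2
  have := (Nat.modEq_zero_iff_dvd.1 h3)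
  have := Nat.le_of_dvd one_pos this
  omega

lemma Ts_succ (k : ℕ) : Ts (k+1) - Ts k = (1/2)^(k+1) := by unfold Ts; ring
lemma Ts_mono : StrictMono Ts := strictMono_nat_of_lt_succ fun k => by
  have := Ts_succ k; have : (0:ℝ) < (1/2)^(k+1) := by positivity
  linarith
lemma pow_half (k : ℕ) : (1/2:ℝ)^k * 2^k = 1 := by rw [← mul_pow]; norm_num

lemma ηs_bd (k : ℕ) (t : ℝ) : |ηs k t| ≤ 3 * as k * 2^(k+1) := by
  unfold ηs
  have := as_pos k
  rw [abs_mul, abs_of_pos (by positivity)]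
  have := ppr_abs ((t - Ts k) * 2^(k+1))
  calc _ ≤ as k * 2^(k+1) * 3 := by gcongr
    _ = _ := by ring
lemma ηs_lip (k : ℕ) (s t : ℝ) : |ηs k t - ηs k s| ≤ 24 * as k * 4^(k+1) * |t - s| := by
  unfold ηs
  have := as_pos k
  rw [← mul_sub, abs_mul, abs_of_pos (by positivity)]
  calc _ ≤ as k * 2^(k+1) * (24 * |(t - Ts k) * 2^(k+1) - (s - Ts k) * 2^(k+1)|) := by
        gcongr; exact ppr_lip _ _
    _ = _ := by
        rw [← sub_mul, abs_mul, abs_of_pos (by positivity : (0:ℝ) < 2^(k+1)), show (4:ℝ)^(k+1) = 2^(k+1)*2^(k+1) by rw [← mul_pow]; norm_num, show t - Ts k - (s - Ts k) = t - s by ring]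
        ring
lemma ηs_zero_left {k : ℕ} {t : ℝ} (h : t ≤ Ts k) : ηs k t = 0 := by
  unfold ηs
  rw [ppr_left, mul_zero]
  exact mul_nonpos_of_nonpos_of_nonneg (by linarith) (by positivity)
lemma ηs_zero_right {k : ℕ} {t : ℝ} (h : Ts (k+1) ≤ t) : ηs k t = 0 := by
  unfold ηs
  rw [ppr_right, mul_zero]
  have : (1/2)^(k+1) ≤ t - Ts k := by linarith [Ts_succ k]
  calc (1/2:ℝ) ≤ 1 := by norm_num
    _ = (1/2)^(k+1) * 2^(k+1) := (pow_half _).symm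
    _ ≤ _ := by gcongr
lemma As_zero (k : ℕ) : As k (Ts k) = 0 := by simp [As, Spr_zero]
lemma As_rest {k : ℕ} {t : ℝ} (h : Ts k + (1/2)^(k+2) ≤ t) : As k t = as k := by
  unfold As
  rw [Spr_right, mul_one]
  have e : (1/2:ℝ) = (1/2)^(k+2) * 2^(k+1) := by
    have := pow_half (k+1); rw [pow_succ _ (k+1)]; linarith
  rw [e]; gcongr; linarith
lemma As_end (k : ℕ) : As k (Ts (k+1)) = as k := by
  apply As_rest
  have := Ts_succ k
  have : (0:ℝ) < (1/2)^(k+1) := by positivity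
  rw [pow_succ _ (k+1)]; linarith
lemma As_bd {k : ℕ} {t : ℝ} (h : Ts k ≤ t) : |As k t| ≤ as k := by
  unfold As
  have := as_pos k
  have h2 := Spr_mem (s := (t - Ts k) * 2^(k+1)) (mul_nonneg (by linarith) (by positivity))
  rw [abs_mul, abs_of_pos this, abs_of_nonneg h2.1]
  exact mul_le_of_le_one_right this.le h2.2
lemma As_der (k : ℕ) (t : ℝ) : HasDerivAt (As k) (ηs k t) t := by
  have h1 : HasDerivAt (fun t => (t - Ts k) * 2^(k+1)) (1 * 2^(k+1)) t :=
    ((hasDerivAt_id t).sub_const _).mul_const _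
  have := ((Spr_der ((t - Ts k) * 2^(k+1))).comp t h1).const_mul (as k)
  refine this.congr_deriv ?_
  unfold ηs; ring

lemma Fs_bd {d : ℕ} (hd : 2 ≤ d) (k : ℕ) (x : Fin d → ℝ) : |Fs hd k x| ≤ 1/4 := fpr_bd _ _
lemma Fs_C1 {d : ℕ} (hd : 2 ≤ d) (k : ℕ) : ContDiff ℝ 1 (Fs hd k) := by
  have := fpr_smooth (ws_mem k)
  unfold Fs; fun_prop
lemma Fs_per {d : ℕ} (hd : 2 ≤ d) (k : ℕ) : SpacePeriodic (Fs hd k) :=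
  sp_coord (fpr_per _) _ _
lemma Fs_ind {d : ℕ} (hd : 2 ≤ d) (k : ℕ) (x) (r : ℝ) : Fs hd k (x + r • ee (ixs hd k)) = Fs hd k x := by
  unfold Fs
  simp [Pi.single_eq_of_ne (ixs_ne hd k)]
lemma fpr_lip {w : ℝ} (hw : w ∈ Set.Ioo 0 (π/2)) (s t : ℝ) : |fpr w s - fpr w t| ≤ |s - t| := by
  have := (convex_univ (𝕜 := ℝ) (E := ℝ)).norm_image_sub_le_of_norm_hasDerivWithin_le (f := fpr w) (f' := Hpr w) (C := 1) (x := t) (y := s)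
    (fun x _ => (fpr_der hw x).hasDerivWithinAt) (fun x _ => Hpr_bd hw x) (Set.mem_univ _) (Set.mem_univ _)
  simpa using this
lemma Fs_hol {d : ℕ} (hd : 2 ≤ d) {α : ℝ} (hα : α ∈ Set.Ioo (0:ℝ) (1/3)) (k : ℕ) (x y : Fin d → ℝ) :
    |Fs hd k x - Fs hd k y| ≤ ms k * ‖x - y‖ ^ α := by
  set z := Ns k * ‖x - y‖ with hz
  have hN := Ns_pos k
  have hz0 : 0 ≤ z := by positivity
  have h1 : |Fs hd k x - Fs hd k y| ≤ z := by
    refine (fpr_lip (ws_mem k) _ _).trans ?_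
    rw [← mul_sub, abs_mul, abs_of_pos hN]
    exact mul_le_mul_of_nonneg_left (norm_le_pi_norm (x - y) _) hN.le
  have h2 : |Fs hd k x - Fs hd k y| ≤ 1 := by
    have a := abs_le.1 (Fs_bd hd k x)
    have b := abs_le.1 (Fs_bd hd k y)
    rw [abs_le]; constructor <;> linarith
  have h3 : |Fs hd k x - Fs hd k y| ≤ z ^ α := by
    rcases le_total z 1 with h | h
    · rcases hz0.eq_or_lt with h0 | h0
      · rw [← h0] at h1 ⊢
        exact h1.trans (rpow_nonneg le_rfl _)
      · refine h1.trans ?_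
        calc z = z^(1:ℝ) := (rpow_one z).symm
          _ ≤ _ := rpow_le_rpow_of_exponent_ge h0 h (by linarith [hα.2])
    · exact h2.trans (one_le_rpow h hα.1.le)
  refine h3.trans ?_
  rw [hz, mul_rpow hN.le (norm_nonneg _)]
  gcongr
  have h1N : (1:ℝ) ≤ Ns k := by
    unfold Ns; push_cast; exact one_le_pow₀ (ms_one k)
  calc Ns k ^ α ≤ Ns k ^ ((1:ℝ)/3) := rpow_le_rpow_of_exponent_le h1N hα.2.le
    _ = ms k := by
      unfold Ns; push_cast
      rw [← rpow_natCast, ← rpow_mul (ms_pos k).le]; norm_num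

lemma us_stage {d : ℕ} (hd : 2 ≤ d) {k : ℕ} {t : ℝ} (ht : t ∈ Set.Icc (Ts k) (Ts (k+1))) (x : Fin d → ℝ) (l) :
    us hd t x l = ηs k t * Fs hd k x * (if l = ixs hd k then 1 else 0) := by
  unfold us
  rw [tsum_eq_single k]
  intro m hm
  have : ηs m t = 0 := by
    rcases lt_or_gt_of_ne hm with h | h
    · exact ηs_zero_right ((Ts_mono.monotone h).trans ht.1)
    · exact ηs_zero_left (ht.2.trans (Ts_mono.monotone h))
  simp [this]

lemma us_Stg {d : ℕ} (hd : 2 ≤ d) : Stg (us hd) Ts ηs As (Fs hd) (ixs hd) where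
  T0 := by simp [Ts]
  Tmono := Ts_mono
  Tlt k := by unfold Ts; have : (0:ℝ) < (1/2)^k := by positivity
              linarith
  Tlim := by
    have := (tendsto_pow_atTop_nhds_zero_of_lt_one (r := (1/2:ℝ)) (by norm_num) (by norm_num)).const_sub 1
    have e : Ts = fun k => 1 - (1/2:ℝ)^k := rfl
    rw [e]
    simpa using this
  etalip k := ⟨_, fun s t => ηs_lip k s t⟩
  Ader := As_der
  Alip k := ⟨as k * (3 * 2^(k+1)), by have := as_pos k; positivity, fun s t => by
    have := as_pos k
    unfold As
    rw [← mul_sub, abs_mul, abs_of_pos this]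
    have := Spr_lip ((t - Ts k) * 2^(k+1)) ((s - Ts k) * 2^(k+1))
    rw [← sub_mul, abs_mul, abs_of_pos (by positivity : (0:ℝ) < 2^(k+1)), show t - Ts k - (s - Ts k) = t - s by ring] at this
    calc _ ≤ as k * (3 * (|t - s| * 2^(k+1))) := by gcongr
      _ = _ := by ring⟩
  FC := Fs_C1 hd
  Fper := Fs_per hd
  Find := Fs_ind hd
  hu k t ht x q := by
    simp only [us_stage hd ht]
    simp [mul_assoc]

lemma us_per {d : ℕ} (hd : 2 ≤ d) (t : ℝ) (i) : SpacePeriodic fun x => us hd t x i := by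
  intro x k
  unfold us
  simp only [Fs_per hd _ x k]

lemma us_div {d : ℕ} (hd : 2 ≤ d) : WeakDivFree (us hd) := by
  intro t ht φ hφ hp
  rcases ht.2.eq_or_lt with h | h
  · have : ∀ x l, us hd t x l = 0 := by
      intro x l
      unfold us
      have : ∀ k, ηs k t = 0 := fun k => ηs_zero_right (by rw [h]; exact ((us_Stg hd).Tlt _).le)
      simp [this]
    simp [this]
  · obtain ⟨k, hk⟩ := exists_stage (us_Stg hd).T0 (us_Stg hd).Tlim ht.1 h
    have hk' : t ∈ Set.Icc (Ts k) (Ts (k+1)) := by first | exact hk | exact ⟨hk.1, hk.2.le⟩ | exact ⟨hk.1.le, hk.2⟩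
    simp only [(us_Stg hd).hu k t hk']
    have := bI_pd_indep (hφ.of_le (by simp)) hp (ixs hd k) (c := fun x => ηs k t * Fs hd k x) (by have := (Fs_C1 hd k).continuous; fun_prop) (sp_cmul (Fs_per hd k) _) (fun x r => by rw [Fs_ind])
    exact this

lemma sm4 : HasSum (fun k : ℕ => 6 * (1/4:ℝ)^k) 8 := by
  have := (hasSum_geometric_of_lt_one (r := (1/4:ℝ)) (by norm_num) (by norm_num)).mul_left 6
  norm_num at this ⊢; exact this
lemma sm2 : HasSum (fun k : ℕ => 24 * (1/2:ℝ)^k) 48 := by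
  have := (hasSum_geometric_of_lt_one (r := (1/2:ℝ)) (by norm_num) (by norm_num)).mul_left 24
  norm_num at this ⊢; exact this

lemma bb1 (k : ℕ) : 3 * as k * 2^(k+1) ≤ 6 * (1/4)^k := by
  have := as_le k
  calc 3 * as k * 2^(k+1) ≤ 3 * (1/8)^k * 2^(k+1) := by gcongr
    _ = 6 * ((1/8)^k * 2^k) := by ring
    _ = _ := by rw [← mul_pow]; norm_num
lemma bb2 (k : ℕ) : 3 * as k * 2^(k+1) * ms k = 6 * (1/4)^k := by
  have := ms_pos k
  have e : as k * ms k = (1/8)^k := by unfold as; field_simp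
  calc _ = 6 * ((as k * ms k) * 2^k) := by ring
    _ = _ := by rw [e, ← mul_pow]; norm_num
lemma bb3 (k : ℕ) : 24 * as k * 4^(k+1) * (1/4) ≤ 24 * (1/2)^k := by
  have := as_le k
  calc 24 * as k * 4^(k+1) * (1/4) = 24 * (as k * 4^k) := by ring
    _ ≤ 24 * ((1/8)^k * 4^k) := by gcongr
    _ = _ := by rw [← mul_pow]; norm_num

lemma ite_bd {d : ℕ} (l i : Fin d) : |(if l = i then (1:ℝ) else 0)| ≤ 1 := by split_ifs <;> simp

lemma mul3 {a b c A B : ℝ} (ha : |a| ≤ A) (hb : |b| ≤ B) (hc : |c| ≤ 1) : ‖a * b * c‖ ≤ A * B := by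
  rw [norm_mul, norm_mul, ← mul_one (A * B)]
  exact mul_le_mul (mul_le_mul ha hb (abs_nonneg _) ((abs_nonneg _).trans ha)) hc (abs_nonneg _)
    (mul_nonneg ((abs_nonneg _).trans ha) ((abs_nonneg _).trans hb))

lemma us_sum {d : ℕ} (hd : 2 ≤ d) (t : ℝ) (x : Fin d → ℝ) (l) :
    Summable fun k => ηs k t * Fs hd k x * (if l = ixs hd k then 1 else 0) := by
  refine Summable.of_norm_bounded sm4.summable fun k => ?_
  exact (mul3 (ηs_bd k t) ((Fs_bd hd k x).trans (by norm_num : (1/4:ℝ) ≤ 1)) (ite_bd _ _)).trans (by linarith [bb1 k])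

lemma us_hol {d : ℕ} (hd : 2 ≤ d) {α : ℝ} (hα : α ∈ Set.Ioo (0:ℝ) (1/3)) : HolderVF α (us hd) := by
  constructor
  · refine continuous_pi fun l => ?_
    unfold us
    refine continuous_tsum (fun k => ?_) sm4.summable (fun k p => ?_)
    · have h1 := (Fs_C1 hd k).continuous
      have h2 : Continuous (ηs k) := by have := ppr_cont; unfold ηs; fun_prop
      fun_prop
    · exact (mul3 (ηs_bd k p.1) ((Fs_bd hd k p.2).trans (by norm_num : (1/4:ℝ) ≤ 1)) (ite_bd _ _)).trans (by linarith [bb1 k])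
  · refine ⟨48, fun s hs t ht x y => ⟨?_, ?_⟩⟩
    · have hn : 0 ≤ ‖x - y‖^α := by positivity
      rw [pi_norm_le_iff_of_nonneg (by positivity)]
      intro l
      rw [Pi.sub_apply]
      unfold us
      rw [← (us_sum hd t x l).tsum_sub (us_sum hd t y l)]
      refine (tsum_of_norm_bounded (sm4.mul_right (‖x-y‖^α)) fun k => ?_).trans ?_
      · rw [← sub_mul, ← mul_sub]
        refine (mul3 (ηs_bd k t) (Fs_hol hd hα k x y) (ite_bd _ _)).trans (le_of_eq ?_)
        rw [← bb2 k]; ring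
      · gcongr; norm_num
    · have hts : |t - s| ≤ 1 := abs_le.2 ⟨by linarith [hs.2, ht.1], by linarith [hs.1, ht.2]⟩
      have hst : |t - s| ≤ |t - s|^α := by
        rcases (abs_nonneg (t-s)).eq_or_lt with h0 | h0
        · rw [← h0]; exact rpow_nonneg le_rfl _
        · calc |t-s| = |t-s|^(1:ℝ) := (rpow_one _).symm
            _ ≤ _ := rpow_le_rpow_of_exponent_ge h0 hts (by linarith [hα.2])
      refine le_trans ?_ (mul_le_mul_of_nonneg_left hst (by norm_num))
      rw [pi_norm_le_iff_of_nonneg (by positivity)]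
      intro l
      rw [Pi.sub_apply]
      unfold us
      rw [← (us_sum hd t x l).tsum_sub (us_sum hd s x l)]
      refine tsum_of_norm_bounded (sm2.mul_right (|t-s|)) fun k => ?_
      rw [← sub_mul, ← sub_mul]
      refine (mul3 (ηs_lip k s t) (Fs_bd hd k x) (ite_bd _ _)).trans ?_
      calc _ = (24 * as k * 4^(k+1) * (1/4)) * |t-s| := by ring
        _ ≤ _ := mul_le_mul_of_nonneg_right (bb3 k) (abs_nonneg _)

lemma pd_coord {d : ℕ} {ψ : ℝ → ℝ} (hψ : Differentiable ℝ ψ) (N : ℝ) (j l : Fin d) (x : Fin d → ℝ) :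
    pd (fun x : Fin d → ℝ => ψ (N * x j)) l x = deriv ψ (N * x j) * N * (if l = j then 1 else 0) := by
  unfold pd
  have h1 : HasFDerivAt (fun x : Fin d → ℝ => N * x j) (N • (ContinuousLinearMap.proj (R := ℝ) (φ := fun _ : Fin d => ℝ) j)) x :=
    (ContinuousLinearMap.proj (R := ℝ) (φ := fun _ : Fin d => ℝ) j).hasFDerivAt.const_mul N
  have h2 := (hψ (N * x j)).hasDerivAt.comp_hasFDerivAt x h1
  have h3 : HasFDerivAt (fun x : Fin d → ℝ => ψ (N * x j)) _ x := h2
  rw [h3.fderiv]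
  simp [Pi.single_apply, eq_comm]

lemma Fs_pd {d : ℕ} (hd : 2 ≤ d) (k : ℕ) (l : Fin d) (x : Fin d → ℝ) :
    pd (Fs hd k) l x = Hpr (ws k) (Ns k * x (ixs hd (k+1))) * Ns k * (if l = ixs hd (k+1) then 1 else 0) := by
  have := pd_coord (fun s => (fpr_der (ws_mem k) s).differentiableAt) (Ns k) (ixs hd (k+1)) l x
  rw [(fpr_der (ws_mem k) _).deriv] at this
  exact this

lemma Fs_pd_bd {d : ℕ} (hd : 2 ≤ d) (k : ℕ) (l : Fin d) (x : Fin d → ℝ) : |pd (Fs hd k) l x| ≤ Ns k := by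
  rw [Fs_pd]
  have := mul3 (Hpr_bd (ws_mem k) (Ns k * x (ixs hd (k+1)))) (abs_of_pos (Ns_pos k)).le (ite_bd l (ixs hd (k+1)))
  simpa using this

lemma tr_nr {d : ℕ} (hd : 2 ≤ d) (k : ℕ) (A : ℝ) {g : (Fin d → ℝ) → ℝ} (hg : Continuous g) (hp : SpacePeriodic g) :
    nr (tr g (Fs hd k) (ixs hd k) A) = nr g := by
  have hF := (Fs_C1 hd k).continuous
  refine nr_shear (ixs hd k) hg hp (c := fun x => -(A * Fs hd k x)) (by fun_prop) ?_ ?_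
  · have := sp_cmul (Fs_per hd k) (-A)
    simpa using this
  · intro x r; simp only [Fs_ind]

lemma tr_bI {d : ℕ} (hd : 2 ≤ d) (k : ℕ) (A : ℝ) {g : (Fin d → ℝ) → ℝ} (hg : Continuous g) (hp : SpacePeriodic g) :
    bI (tr g (Fs hd k) (ixs hd k) A) = bI g := by
  have hF := (Fs_C1 hd k).continuous
  refine bI_shear (ixs hd k) hg hp (c := fun x => -(A * Fs hd k x)) (by fun_prop) ?_ ?_
  · have := sp_cmul (Fs_per hd k) (-A)
    simpa using this
  · intro x r; simp only [Fs_ind]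

lemma tr_grad {d : ℕ} (hd : 2 ≤ d) (k : ℕ) {A : ℝ} {W : (Fin d → ℝ) → ℝ} (hW : ContDiff ℝ 1 W) (hp : SpacePeriodic W)
    {G : ℝ} (hA : |A| ≤ as k) (hG : ∀ l, nr (pd W l) ≤ G) (l : Fin d) :
    nr (pd (tr W (Fs hd k) (ixs hd k) A) l) ≤ G * (1 + bs k) := by
  have hF := (Fs_C1 hd k).continuous
  have e : pd (tr W (Fs hd k) (ixs hd k) A) l = fun x => tr (pd W l) (Fs hd k) (ixs hd k) A x
      - A * pd (Fs hd k) l x * tr (pd W (ixs hd k)) (Fs hd k) (ixs hd k) A x :=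
    funext fun x => tr_pd (hW.differentiable one_ne_zero) ((Fs_C1 hd k).differentiable one_ne_zero) _ _ l x
  have c1 := tr_cont (cp_pd hW l) hF (ixs hd k) A
  have c2 := tr_cont (cp_pd hW (ixs hd k)) hF (ixs hd k) A
  have c3 := cp_pd (Fs_C1 hd k) l
  have ha := as_pos k
  have hN := Ns_pos k
  rw [e]
  refine (nr_sub c1 (by fun_prop)).trans ?_
  rw [tr_nr hd k A (cp_pd hW l) (sp_pd hp l)]
  have : nr (fun x => A * pd (Fs hd k) l x * tr (pd W (ixs hd k)) (Fs hd k) (ixs hd k) A x) ≤ bs k * G := by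
    refine (nr_mono (g := fun x => bs k * |tr (pd W (ixs hd k)) (Fs hd k) (ixs hd k) A x|) (by fun_prop) (by fun_prop) ?_).trans ?_
    · intro x
      rw [abs_mul, abs_mul, ← as_Ns]
      gcongr
      exact Fs_pd_bd hd k l x
    · rw [nr_cmul, abs_of_pos (bs_pos k)]
      have : nr (fun x => |tr (pd W (ixs hd k)) (Fs hd k) (ixs hd k) A x|) = nr (tr (pd W (ixs hd k)) (Fs hd k) (ixs hd k) A) := by
        unfold nr; simp only [sq_abs]
      rw [this, tr_nr hd k A (cp_pd hW _) (sp_pd hp _)]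
      have := bs_pos k
      gcongr
      exact hG _
  have := hG l
  linarith

abbrev Wf {d : ℕ} (hd : 2 ≤ d) (w0 : (Fin d → ℝ) → ℝ) (k : ℕ) : (Fin d → ℝ) → ℝ := Wt (Fs hd) (ixs hd) as w0 k

lemma Wf_grad {d : ℕ} (hd : 2 ≤ d) {w0 : (Fin d → ℝ) → ℝ} (hW : ContDiff ℝ 1 w0) (hp : SpacePeriodic w0)
    {H : ℝ} (hH : ∀ l, nr (pd w0 l) ≤ H) (k : ℕ) : ∀ l, nr (pd (Wf hd w0 k) l) ≤ H * Xs k := by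
  induction k with
  | zero =>
    intro l
    have h0 : 0 ≤ H := (nr_nonneg _).trans (hH l)
    refine (hH l).trans (le_mul_of_one_le_right h0 ?_)
    norm_num [Xs]
  | succ k ih =>
    intro l
    rw [Xs_succ, ← mul_assoc]
    exact tr_grad hd k (Wt_c1 (Fs_C1 hd) hW k) (Wt_per (Fs_per hd) hp k) (abs_of_pos (as_pos k)).le ih l

lemma gradSq_bd {d : ℕ} {f : (Fin d → ℝ) → ℝ} (hf : ContDiff ℝ 1 f) {G : ℝ} (hG : ∀ l, nr (pd f l) ≤ G) :
    bI (gradSq f) ≤ d * G^2 := by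
  have : bI (gradSq f) = ∑ l, bI (fun x => (pd f l x)^2) := by
    unfold gradSq
    exact bI_sum Finset.univ (fun l => (cp_pd hf l).pow 2)
  rw [this]
  calc _ ≤ ∑ l : Fin d, G^2 := by
        gcongr with l
        rw [← nr_sq]
        have := nr_nonneg (pd f l)
        have := hG l
        gcongr
    _ = _ := by simp

/-- one step of the dual chain -/
def alp {d : ℕ} (hd : 2 ≤ d) (k : ℕ) (w : ℝ) (a : (Fin d → ℝ) → ℝ) (x : Fin d → ℝ) : ℝ :=
  Hpr w (Ns k * x (ixs hd (k+1))) * tr a (Fs hd k) (ixs hd k) (as k) x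

section
variable {d : ℕ} (hd : 2 ≤ d) (k : ℕ) {w : ℝ} (hw : w ∈ Set.Ioo 0 (π/2)) {a W : (Fin d → ℝ) → ℝ}

lemma alp_c1 (hw : w ∈ Set.Ioo 0 (π/2)) (ha : ContDiff ℝ 1 a) : ContDiff ℝ 1 (alp hd k w a) := by
  have h1 := Hpr_smooth hw
  have h2 := tr_c1 ha (Fs_C1 hd k) (ixs hd k) (as k)
  unfold alp; fun_prop
lemma alp_per (ha : SpacePeriodic a) : SpacePeriodic (alp hd k w a) :=
  sp_mul (sp_coord (Hpr_per w) _ _) (tr_per ha (Fs_per hd k) _ _)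
lemma alp_bd (hw : w ∈ Set.Ioo 0 (π/2)) {M : ℝ} (h : ∀ x, |a x| ≤ M) (x) : |alp hd k w a x| ≤ M := by
  unfold alp
  rw [abs_mul]
  have := Hpr_bd hw (Ns k * x (ixs hd (k+1)))
  calc _ ≤ 1 * M := mul_le_mul this (h _) (abs_nonneg _) (by norm_num)
    _ = M := one_mul M

lemma alp_grad (hw : w ∈ Set.Ioo 0 (π/2)) (ha : ContDiff ℝ 1 a) (hp : SpacePeriodic a) {M E : ℝ}
    (h : ∀ x, |a x| ≤ M) (hE : ∀ l, nr (pd a l) ≤ E) (l) :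
    nr (pd (alp hd k w a) l) ≤ E * (1 + bs k) + M * (π^2/w) * Ns k := by
  have h1 := Hpr_smooth hw
  have h2 := tr_c1 ha (Fs_C1 hd k) (ixs hd k) (as k)
  have hc : ContDiff ℝ 1 (fun x : Fin d → ℝ => Hpr w (Ns k * x (ixs hd (k+1)))) := by fun_prop
  have e : pd (alp hd k w a) l = fun x => Hpr w (Ns k * x (ixs hd (k+1))) * pd (tr a (Fs hd k) (ixs hd k) (as k)) l x
      + tr a (Fs hd k) (ixs hd k) (as k) x * pd (fun x : Fin d → ℝ => Hpr w (Ns k * x (ixs hd (k+1)))) l x :=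
    funext fun x => pd_mul (hc.differentiable one_ne_zero) (h2.differentiable one_ne_zero) l x
  have c1 := cp_pd h2 l
  have c2 := cp_pd hc l
  have c3 := h2.continuous
  have c4 := hc.continuous
  have hN := Ns_pos k
  rw [e]
  refine (nr_add (c4.mul c1) (c3.mul c2)).trans (add_le_add ?_ ?_)
  · refine le_trans ?_ (tr_grad hd k ha hp (abs_of_pos (as_pos k)).le hE l)
    have : nr (fun x => |pd (tr a (Fs hd k) (ixs hd k) (as k)) l x|) = nr (pd (tr a (Fs hd k) (ixs hd k) (as k)) l) := by
      unfold nr; simp only [sq_abs]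
    rw [← this]
    apply nr_mono (c4.mul c1) c1.abs
    intro x
    rw [Pi.mul_apply, abs_mul]
    exact mul_le_of_le_one_left (abs_nonneg _) (Hpr_bd hw _)
  · apply nr_le_sup (c3.mul c2)
    intro x
    rw [Pi.mul_apply, abs_mul, mul_assoc]
    have hM : 0 ≤ M := (abs_nonneg _).trans (h x)
    refine mul_le_mul (h _) ?_ (abs_nonneg _) hM
    rw [pd_coord (h1.differentiable one_ne_zero)]
    exact mul3 (Hpr_der hw _) (abs_of_pos hN).le (ite_bd _ _)

lemma alp_def (hw : w ∈ Set.Ioo 0 (π/2)) :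
    nr (fun x : Fin d → ℝ => 1 - Hpr w (Ns k * x (ixs hd (k+1))) * Hpr (ws k) (Ns k * x (ixs hd (k+1)))) ≤ √(ws k) + √w := by
  have c1 := (Hpr_smooth hw).continuous
  have c2 := (Hpr_smooth (ws_mem k)).continuous
  have h0 := hw.1
  have h0' := (ws_mem k).1
  have hpi := pi_gt_three
  refine le_of_sq_le_sq ?_ (by positivity)
  rw [nr_sq]
  have hms : 0 < ms k := by exact_mod_cast ms_pos k
  have key := bI_coord (d := d) (ixs hd (k+1)) (F := fun s => (1 - |Hpr w s|) + (1 - |Hpr (ws k) s|)) (by fun_prop)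
    (fun s => by simp only [Hpr_per w s, Hpr_per (ws k) s]) ((ms k)^3) (by positivity)
  rw [intervalIntegral.integral_add (by apply Continuous.intervalIntegrable; fun_prop) (by apply Continuous.intervalIntegrable; fun_prop),
    pr_int hw, pr_int (ws_mem k)] at key
  have le1 : bI (fun x : Fin d → ℝ => (1 - Hpr w (Ns k * x (ixs hd (k+1))) * Hpr (ws k) (Ns k * x (ixs hd (k+1))))^2)
      ≤ 2*w/π + 2*ws k/π := by
    rw [← key]
    apply bI_mono (by fun_prop) (by fun_prop)
    intro x
    exact pr_key hw (ws_mem k) _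
  refine le1.trans ?_
  have a1 : ∀ z, 0 < z → 2*z/π ≤ z := fun z hz => by rw [div_le_iff₀ pi_pos]; nlinarith
  have := a1 w h0
  have := a1 _ h0'
  have s1 := sq_sqrt h0.le
  have s2 := sq_sqrt h0'.le
  nlinarith [mul_nonneg (sqrt_nonneg w) (sqrt_nonneg (ws k))]

lemma alp_pair (hw : w ∈ Set.Ioo 0 (π/2)) (ha : ContDiff ℝ 1 a) (hp : SpacePeriodic a)
    (hW : ContDiff ℝ 1 W) (hWp : SpacePeriodic W) {M G : ℝ}
    (h : ∀ x, |a x| ≤ M) (hG : ∀ l, nr (pd W l) ≤ G) :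
    bs k * (|bI (fun x => a x * pd W (ixs hd k) x)| - M * G * (√(ws k) + √w)) - M * G ≤
    |bI (fun x => alp hd k w a x * pd (tr W (Fs hd k) (ixs hd k) (as k)) (ixs hd (k+1)) x)| := by
  have hF := (Fs_C1 hd k).continuous
  have c1 := (Hpr_smooth hw).continuous
  have c2 := (Hpr_smooth (ws_mem k)).continuous
  have c3 := (tr_c1 ha (Fs_C1 hd k) (ixs hd k) (as k)).continuous
  have c4 := tr_cont (cp_pd hW (ixs hd (k+1))) hF (ixs hd k) (as k)
  have c5 := tr_cont (cp_pd hW (ixs hd k)) hF (ixs hd k) (as k)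
  have c6 := (alp_c1 hd k hw ha).continuous
  have hb := bs_pos k
  have hM : 0 ≤ M := (abs_nonneg _).trans (h 0)
  have hG0 : 0 ≤ G := (nr_nonneg _).trans (hG (ixs hd k))
  set T1 := bI (fun x => alp hd k w a x * tr (pd W (ixs hd (k+1))) (Fs hd k) (ixs hd k) (as k) x) with hT1
  set T2 := bI (fun x => ((1 - Hpr w (Ns k * x (ixs hd (k+1))) * Hpr (ws k) (Ns k * x (ixs hd (k+1)))) * tr a (Fs hd k) (ixs hd k) (as k) x) * tr (pd W (ixs hd k)) (Fs hd k) (ixs hd k) (as k) x) with hT2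
  have b1 : |T1| ≤ M * G := by
    refine (bI_cs c6 c4).trans ?_
    rw [tr_nr hd k _ (cp_pd hW _) (sp_pd hWp _)]
    exact mul_le_mul (nr_le_sup c6 (alp_bd hd k hw h)) (hG _) (nr_nonneg _) hM
  have b2 : |T2| ≤ M * (√(ws k) + √w) * G := by
    refine (bI_cs (by fun_prop) c5).trans ?_
    rw [tr_nr hd k _ (cp_pd hW _) (sp_pd hWp _)]
    refine mul_le_mul ?_ (hG _) (nr_nonneg _) (by positivity)
    refine (nr_mono (g := fun x => M * |1 - Hpr w (Ns k * x (ixs hd (k+1))) * Hpr (ws k) (Ns k * x (ixs hd (k+1)))|) (by fun_prop) (by fun_prop) ?_).trans ?_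
    · intro x; rw [abs_mul, mul_comm]
      exact mul_le_mul_of_nonneg_right (h _) (abs_nonneg _)
    · rw [nr_cmul, abs_of_nonneg hM]
      apply mul_le_mul_of_nonneg_left _ hM
      have := alp_def hd k hw
      unfold nr at this ⊢
      simpa only [sq_abs] using this
  have e3 : bI (fun x => tr a (Fs hd k) (ixs hd k) (as k) x * tr (pd W (ixs hd k)) (Fs hd k) (ixs hd k) (as k) x) = bI (fun x => a x * pd W (ixs hd k) x) :=
    tr_bI hd k (as k) (ha.continuous.mul (cp_pd hW _)) (sp_mul hp (sp_pd hWp _))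
  have main : bI (fun x => alp hd k w a x * pd (tr W (Fs hd k) (ixs hd k) (as k)) (ixs hd (k+1)) x)
      = T1 - bs k * (bI (fun x => a x * pd W (ixs hd k) x) - T2) := by
    rw [← e3, hT1, hT2, ← bI_sub (by fun_prop) (by fun_prop), ← bI_mul, ← bI_sub (by fun_prop) (by fun_prop)]
    congr 1; ext x
    rw [tr_pd (hW.differentiable one_ne_zero) ((Fs_C1 hd k).differentiable one_ne_zero), Fs_pd, ← as_Ns]
    simp only [if_true, mul_one, alp]
    ring
  rw [main]
  set Q := bI (fun x => a x * pd W (ixs hd k) x)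
  have t1 : |Q| - |T2| ≤ |Q - T2| := abs_sub_abs_le_abs_sub Q T2
  have t2 : |bs k * (Q - T2)| - |T1| ≤ |T1 - bs k * (Q - T2)| := by
    rw [abs_sub_comm]; exact abs_sub_abs_le_abs_sub _ _
  rw [abs_mul, abs_of_pos hb] at t2
  have t3 : bs k * (|Q| - M * G * (√(ws k) + √w)) ≤ bs k * |Q - T2| := by
    gcongr
    have : M * (√(ws k) + √w) * G = M * G * (√(ws k) + √w) := by ring
    linarith
  linarith
end

lemma chain {d : ℕ} (hd : 2 ≤ d) {w0 : (Fin d → ℝ) → ℝ} (hW : ContDiff ℝ 1 w0) (hWp : SpacePeriodic w0)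
    {H M Q om : ℝ} (hH : ∀ l, nr (pd w0 l) ≤ H) (hH0 : 0 < H) (hM0 : 0 < M)
    (hom : 0 < om) (hom1 : om ≤ 1) (n : ℕ) {b : (Fin d → ℝ) → ℝ} (hb : ContDiff ℝ 1 b)
    (hbp : SpacePeriodic b) (hbM : ∀ x, |b x| ≤ M) (hbg : ∀ l, nr (pd b l) ≤ H * Xs n)
    (hQ : Q ≤ |bI (fun x => b x * pd (Wf hd w0 n) (ixs hd n) x)|)
    (c1 : 16 * (M * H * (1/8)^n) ≤ Q) (c2 : 8 * (M * H * √om * Xs n) ≤ Q) (m : ℕ) :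
    ∃ a : (Fin d → ℝ) → ℝ, ContDiff ℝ 1 a ∧ SpacePeriodic a ∧ (∀ x, |a x| ≤ M) ∧
      (∀ l, nr (pd a l) ≤ (H + 2 * (M * (π^2/om))) * Xs (n+m)) ∧
      Q / (2 * Xs n) * Xs (n+m) ≤ |bI (fun x => a x * pd (Wf hd w0 (n+m)) (ixs hd (n+m)) x)| := by
  have key : ∀ m, ∃ a : (Fin d → ℝ) → ℝ, ContDiff ℝ 1 a ∧ SpacePeriodic a ∧ (∀ x, |a x| ≤ M) ∧
      (∀ l, nr (pd a l) ≤ (H + 2 * (M * (π^2/om)) * ((1/4)^n - (1/4)^(n+m))) * Xs (n+m)) ∧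
      (Q / Xs n - M * H * (4 * ((1/8)^n - (1/8)^(n+m)) / Xs n + 2 * √om * ((1/2)^n - (1/2)^(n+m)))) * Xs (n+m)
        ≤ |bI (fun x => a x * pd (Wf hd w0 (n+m)) (ixs hd (n+m)) x)| := by
    intro m
    induction m with
    | zero =>
      refine ⟨b, hb, hbp, hbM, ?_, ?_⟩
      · intro l; simpa using hbg l
      · have := Xs_pos n
        refine le_trans (le_of_eq ?_) hQ
        simp
        field_simp
    | succ m ih =>
      obtain ⟨a, ha, hap, haM, hag, haQ⟩ := ih
      have eidx : n + (m+1) = (n+m)+1 := by ring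
      rw [eidx]
      have hnk : n ≤ n + m := Nat.le_add_right n m
      generalize n + m = k at *
      clear eidx
      have hX := Xs_pos k
      have hXn := Xs_pos n
      have hbp := bs_pos k
      have hw : om * (1/4)^k ∈ Set.Ioo 0 (π/2) := by
        refine ⟨by positivity, ?_⟩
        have : (1/4:ℝ)^k ≤ 1 := pow_le_one₀ (by norm_num) (by norm_num)
        have : om * (1/4)^k ≤ 1 := by nlinarith
        linarith [pi_gt_three]
      have hsw : √(om * (1/4)^k) = √om * (1/2)^k := by
        rw [sqrt_mul hom.le]
        congr 1
        rw [show (1/4:ℝ)^k = ((1/2)^k)^2 by rw [← pow_mul, mul_comm, pow_mul]; norm_num]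
        exact sqrt_sq (by positivity)
      have hWk := Wt_c1 (ix := ixs hd) (a := as) (Fs_C1 hd) hW k
      have hWkp := Wt_per (ix := ixs hd) (a := as) (Fs_per hd) hWp k
      have hG := Wf_grad hd hW hWp hH k
      refine ⟨alp hd k (om * (1/4)^k) a, alp_c1 hd k hw ha, alp_per hd k hap, alp_bd hd k hw haM, ?_, ?_⟩
      · intro l
        refine (alp_grad hd k hw ha hap haM hag l).trans ?_
        have hN : Ns k ≤ (1/16)^k * Xs (k+1) := by
          have h1 := as_Xs k
          have h2 := Ns_pos k
          have h3 : 16^k * Ns k ≤ Xs (k+1) := by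
            rw [Xs_succ, ← as_Ns]
            calc 16^k * Ns k ≤ as k * Xs k * Ns k := by gcongr
              _ ≤ _ := by nlinarith
          calc Ns k = (1/16)^k * (16^k * Ns k) := by rw [← mul_assoc, ← mul_pow]; norm_num
            _ ≤ _ := by gcongr
        have e4 : M * (π^2/(om * (1/4)^k)) * Ns k ≤ M * (π^2/om) * (1/4)^k * Xs (k+1) := by
          have e : π^2/(om * (1/4)^k) = π^2/om * 4^k := by rw [one_div, inv_pow]; field_simp
          calc M * (π^2/(om * (1/4)^k)) * Ns k ≤ M * (π^2/(om * (1/4)^k)) * ((1/16)^k * Xs (k+1)) := by gcongr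
            _ = M * (π^2/om) * (4^k * (1/16)^k) * Xs (k+1) := by rw [e]; ring
            _ = _ := by rw [← mul_pow]; norm_num
        have hC : 0 < M * (π^2/om) * (1/4)^k * Xs (k+1) := by have := Xs_pos (k+1); positivity
        have e5 : (H + 2 * (M * (π^2/om)) * ((1/4)^n - (1/4)^k)) * Xs k * (1 + bs k)
          = (H + 2 * (M * (π^2/om)) * ((1/4)^n - (1/4)^(k+1))) * Xs (k+1) - 3/2 * (M * (π^2/om) * (1/4)^k * Xs (k+1)) := by
          rw [Xs_succ, pow_succ]; ring
        rw [e5]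
        linarith
      · have hp := alp_pair hd k hw ha hap hWk hWkp haM hG
        refine le_trans ?_ hp
        rw [hsw]
        set R := |bI (fun x => a x * pd (Wt (Fs hd) (ixs hd) as w0 k) (ixs hd k) x)| with hR
        have hRb : R ≤ M * (H * Xs k) :=
          (bI_cs ha.continuous (cp_pd hWk _)).trans (mul_le_mul (nr_le_sup ha.continuous haM) (hG _) (nr_nonneg _) hM0.le)
        have hl := loss1 hnk
        have hl2 : 2/(1+bs k) + √(ws k) ≤ 4 * ((1/8)^k - (1/8)^(k+1)) / Xs n := by
          rw [le_div_iff₀ hXn, pow_succ]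
          have : (0:ℝ) < (1/8)^k := by positivity
          linarith
        have eX : Xs (k+1) = Xs k * (1 + bs k) := rfl
        set z := 4 * ((1/8)^k - (1/8)^(k+1)) / Xs n with hz
        have ez : 4 * ((1/8)^n - (1/8)^(k+1)) / Xs n = 4 * ((1/8)^n - (1/8)^k) / Xs n + z := by rw [hz]; ring
        have eo : 2 * √om * ((1/2)^n - (1/2)^(k+1)) = 2 * √om * ((1/2)^n - (1/2)^k) + √om * (1/2)^k := by rw [pow_succ]; ring
        rw [ez, eo, eX]
        set r := Q / Xs n - M * H * (4 * ((1/8)^n - (1/8)^k) / Xs n + 2 * √om * ((1/2)^n - (1/2)^k)) with hr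
        set s1 := √(ws k)
        set s2 := √om * (1/2)^k
        have hrX : r * Xs k ≤ R := haQ
        calc _ = r * Xs k * (1 + bs k) - M * H * Xs k * (1 + bs k) * (z + s2) := by rw [hr]; ring
          _ ≤ R * (1 + bs k) - M * H * Xs k * (1 + bs k) * ((2/(1+bs k) + s1) + s2) := by gcongr
          _ = R * (1 + bs k) - 2 * (M * H * Xs k) - M * H * Xs k * (1 + bs k) * (s1 + s2) := by field_simp; ring
          _ ≤ _ := by
            have hs : 0 ≤ M * H * Xs k * (s1 + s2) := by positivity
            nlinarith
  obtain ⟨a, ha, hap, haM, hag, haQ⟩ := key m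
  have hX := Xs_pos n
  have hXm := Xs_pos (n+m)
  refine ⟨a, ha, hap, haM, fun l => (hag l).trans ?_, le_trans ?_ haQ⟩
  · have h1 : (1/4:ℝ)^n ≤ 1 := pow_le_one₀ (by norm_num) (by norm_num)
    have h2 : (0:ℝ) ≤ (1/4)^(n+m) := by positivity
    have : (1/4:ℝ)^n - (1/4)^(n+m) ≤ 1 := by linarith
    have hC : 0 < 2 * (M * (π^2/om)) := by positivity
    refine mul_le_mul_of_nonneg_right ?_ hXm.le
    nlinarith
  · gcongr
    have h1 : (1/2:ℝ)^n ≤ 1 := pow_le_one₀ (by norm_num) (by norm_num)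
    have h2 : (0:ℝ) ≤ (1/2)^(n+m) := by positivity
    have h3 : (0:ℝ) ≤ (1/8)^(n+m) := by positivity
    have b1 : M * H * (4 * ((1/8)^n - (1/8)^(n+m)) / Xs n) ≤ Q / (4 * Xs n) := by
      calc M * H * (4 * ((1/8)^n - (1/8)^(n+m)) / Xs n) ≤ M * H * (4 * ((1/8)^n) / Xs n) := by gcongr; linarith
        _ = 16 * (M * H * (1/8)^n) / (4 * Xs n) := by field_simp; norm_num
        _ ≤ _ := by gcongr
    have b2 : M * H * (2 * √om * ((1/2)^n - (1/2)^(n+m))) ≤ Q / (4 * Xs n) := by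
      calc M * H * (2 * √om * ((1/2)^n - (1/2)^(n+m))) ≤ M * H * (2 * √om * 1) := by gcongr; linarith
        _ = 8 * (M * H * √om * Xs n) / (4 * Xs n) := by field_simp; norm_num
        _ ≤ _ := by gcongr
    have e : Q / (2 * Xs n) = Q / Xs n - Q / (4 * Xs n) - Q / (4 * Xs n) := by field_simp; norm_num; ring
    rw [e]; linarith

lemma Lc_fderiv {d : ℕ} {c : ℝ → ℝ} (hc : Continuous c) (i : Fin d) {W : (Fin d → ℝ) → ℝ}
    (hW : ContDiff ℝ 1 W) (x : Fin d → ℝ) :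
    HasFDerivAt (Lc c i W) (∫ r in (0:ℝ)..1, c r • fderiv ℝ W (x + r • ee i)) x := by
  have hfd : Continuous (fderiv ℝ W) := hW.continuous_fderiv (by norm_num)
  have hWc := hW.continuous
  obtain ⟨K, hK⟩ : ∃ K, ∀ p ∈ (Metric.closedBall x 1) ×ˢ (Set.Icc (0:ℝ) 1),
      ‖c p.2 • fderiv ℝ W (p.1 + p.2 • ee i)‖ ≤ K := by
    apply ((isCompact_closedBall x 1).prod isCompact_Icc).exists_bound_of_continuousOn
    apply Continuous.continuousOn
    fun_prop
  apply intervalIntegral.hasFDerivAt_integral_of_dominated_of_fderiv_le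
    (F := fun x r => c r * W (x + r • ee i))
    (F' := fun x r => c r • fderiv ℝ W (x + r • ee i)) (bound := fun _ => K)
    (Metric.closedBall_mem_nhds x one_pos)
  · exact Eventually.of_forall fun y => (Continuous.aestronglyMeasurable (by fun_prop))
  · exact Continuous.intervalIntegrable (by fun_prop) _ _
  · exact Continuous.aestronglyMeasurable (by fun_prop)
  · refine Eventually.of_forall fun r hr y hy => hK (y, r) ⟨hy, ?_⟩
    rw [Set.uIoc_of_le zero_le_one] at hr
    exact ⟨hr.1.le, hr.2⟩
  · simp
  · refine Eventually.of_forall fun r hr y hy => ?_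
    have h1 : HasFDerivAt (fun y : Fin d → ℝ => y + r • ee i) (ContinuousLinearMap.id ℝ _) y :=
      (hasFDerivAt_id y).add_const _
    have h2 := ((hW.differentiable (by norm_num)) (y + r • ee i)).hasFDerivAt.comp y h1
    have h3 := h2.const_smul (c r)
    rw [ContinuousLinearMap.comp_id] at h3
    exact h3

lemma Lc_c1 {d : ℕ} {c : ℝ → ℝ} (hc : Continuous c) (i : Fin d) {W : (Fin d → ℝ) → ℝ}
    (hW : ContDiff ℝ 1 W) : ContDiff ℝ 1 (Lc c i W) := by
  have hfd : Continuous (fderiv ℝ W) := hW.continuous_fderiv (by norm_num)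
  rw [contDiff_one_iff_fderiv]
  refine ⟨fun x => (Lc_fderiv hc i hW x).differentiableAt, ?_⟩
  have : fderiv ℝ (Lc c i W) = fun x => ∫ r in (0:ℝ)..1, c r • fderiv ℝ W (x + r • ee i) :=
    funext fun x => (Lc_fderiv hc i hW x).fderiv
  rw [this]
  exact intervalIntegral.continuous_parametric_intervalIntegral_of_continuous' (by fun_prop) 0 1

lemma Lc_pd {d : ℕ} {c : ℝ → ℝ} (hc : Continuous c) (i : Fin d) {W : (Fin d → ℝ) → ℝ}
    (hW : ContDiff ℝ 1 W) (l : Fin d) : pd (Lc c i W) l = Lc c i (pd W l) := by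
  have hfd : Continuous (fderiv ℝ W) := hW.continuous_fderiv (by norm_num)
  funext x
  rw [pd, (Lc_fderiv hc i hW x).fderiv, ContinuousLinearMap.intervalIntegral_apply
    (Continuous.intervalIntegrable (by fun_prop) _ _)]
  rfl

/-- line average -/
def Pa {d : ℕ} (i : Fin d) (f : (Fin d → ℝ) → ℝ) (x : Fin d → ℝ) : ℝ :=
  ∫ r in (0:ℝ)..1, f (x + r • ee i)

lemma Pa_Lc {d : ℕ} (i : Fin d) (f : (Fin d → ℝ) → ℝ) : Pa i f = Lc (fun _ => 1) i f := by
  funext x; simp [Pa, Lc]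

lemma Pa_cont {d : ℕ} (i : Fin d) {f : (Fin d → ℝ) → ℝ} (hf : Continuous f) :
    Continuous (Pa i f) := by
  rw [Pa_Lc]; exact Lc_cont continuous_const i hf

lemma Pa_per {d : ℕ} (i : Fin d) {f : (Fin d → ℝ) → ℝ} (hf : SpacePeriodic f) :
    SpacePeriodic (Pa i f) := by
  rw [Pa_Lc]; exact Lc_per i hf

lemma Pa_inv {d : ℕ} (i : Fin d) {f : (Fin d → ℝ) → ℝ} (hf : SpacePeriodic f) (x) (c : ℝ) :
    Pa i f (x + c • ee i) = Pa i f x := by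
  unfold Pa
  rw [← per_int hf i x c]
  congr 1; funext r; congr 1
  rw [add_smul]; abel

lemma Pa_orth {d : ℕ} (i : Fin d) {f : (Fin d → ℝ) → ℝ} (hf : Continuous f) (hp : SpacePeriodic f) :
    bI (fun x => Pa i f x * (f x - Pa i f x)) = 0 := by
  have hc := Pa_cont i hf
  have hpp := Pa_per i hp
  apply bI_avg_c i (by fun_prop) (sp_mul hpp (sp_sub hp hpp))
  intro x
  simp_rw [Pa_inv i hp]
  rw [intervalIntegral.integral_const_mul, intervalIntegral.integral_sub
    (Continuous.intervalIntegrable (by fun_prop) _ _) (by simp)]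
  simp [Pa]

lemma start {d : ℕ} (i : Fin d) {W : (Fin d → ℝ) → ℝ} (hW : ContDiff ℝ 1 W) (hp : SpacePeriodic W)
    {M G : ℝ} (hM : ∀ x, |W x| ≤ M) (hG : ∀ l, nr (pd W l) ≤ G) :
    ∃ b : (Fin d → ℝ) → ℝ, ContDiff ℝ 1 b ∧ SpacePeriodic b ∧ (∀ x, |b x| ≤ M) ∧
      (∀ l, nr (pd b l) ≤ G) ∧
      |bI (fun x => b x * pd W i x)| = nr (fun x => W x - Pa i W x) ^ 2 := by
  have hc : Continuous (fun r : ℝ => r - 1/2) := by fun_prop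
  have hWc := hW.continuous
  have habs : ∀ r ∈ Set.Icc (0:ℝ) 1, |r - 1/2| ≤ 1 := by
    intro r hr; rw [abs_le]; constructor <;> linarith [hr.1, hr.2]
  refine ⟨Lc (fun r => r - 1/2) i W, Lc_c1 hc i hW, Lc_per i hp, ?_, ?_, ?_⟩
  · intro x
    have := intervalIntegral.norm_integral_le_of_norm_le_const (a := (0:ℝ)) (b := 1) (C := M)
      (f := fun r => (r - 1/2) * W (x + r • ee i)) (by
        intro r hr
        rw [Set.uIoc_of_le zero_le_one] at hr
        rw [norm_mul, Real.norm_eq_abs, Real.norm_eq_abs]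
        have h1 := habs r ⟨hr.1.le, hr.2⟩
        have h2 := hM (x + r • ee i)
        have h3 := abs_nonneg (W (x + r • ee i))
        nlinarith [abs_nonneg (r - 1/2)])
    simpa [Lc] using this
  · intro l
    rw [Lc_pd hc i hW]
    exact (Lc_nr hc i (cp_pd hW l) (sp_pd hp l) habs).trans (hG l)
  · have hP := Pa_cont i hWc
    have hd1 : pd (Lc (fun r => r - 1/2) i W) i = fun x => W x - Pa i W x := by
      rw [Lc_pd hc i hW]
      funext x
      have hcp := cp_pd hW i
      have h := intervalIntegral.integral_mul_deriv_eq_deriv_mul (a := (0:ℝ)) (b := 1)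
        (u := fun r => r - 1/2) (u' := fun _ => 1) (v := fun r => W (x + r • ee i))
        (v' := fun r => pd W i (x + r • ee i))
        (fun r _ => (hasDerivAt_id r).sub_const _)
        (fun r _ => pd_line (hW.differentiable (by norm_num)) i x r)
        (by simp) (Continuous.intervalIntegrable (by fun_prop) _ _)
      unfold Lc Pa
      rw [h]
      have h1 := per_one hp i x 0
      rw [zero_add] at h1
      rw [h1]
      simp
      ring
    rw [bI_ibp (Lc_c1 hc i hW) hW (Lc_per i hp) hp i, hd1, abs_neg, nr_sq]
    have e : (fun x => W x * (W x - Pa i W x)) =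
        fun x => (W x - Pa i W x)^2 + Pa i W x * (W x - Pa i W x) := by funext x; ring
    rw [e, bI_add (by fun_prop) (by fun_prop), Pa_orth i hWc hp, add_zero, abs_of_nonneg]
    exact bI_nonneg fun x => sq_nonneg _

lemma shift_ind {d : ℕ} (P : (Fin d → ℝ) → Prop) (h0 : P 0)
    (hs : ∀ v i (c : ℝ), P v → P (v + c • ee i)) (v : Fin d → ℝ) : P v := by
  have h : ∀ s : Finset (Fin d), P (∑ i ∈ s, v i • ee i) := by
    intro s
    induction s using Finset.induction_on with
    | empty => simpa using h0
    | insert i s hi ih => rw [Finset.sum_insert hi, add_comm]; exact hs _ _ _ ih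
  have e : ∑ i, v i • (ee i : Fin d → ℝ) = v := by
    funext j
    simp [Finset.sum_apply, Pi.single_apply]
  rw [← e]; exact h _

lemma bI_trans {d : ℕ} {g : (Fin d → ℝ) → ℝ} (hg : Continuous g) (hp : SpacePeriodic g)
    (v : Fin d → ℝ) : bI (fun x => g (x + v)) = bI g := by
  refine shift_ind (fun v => bI (fun x => g (x + v)) = bI g) (by simp) ?_ v
  intro v i c h
  have := bI_shift1 i (g := fun x => g (x + v)) (by fun_prop) (sp_shift hp v) c
  rw [← h, ← this]
  congr 1; funext x; congr 1; abel

lemma weak_bd {d : ℕ} {f : (Fin d → ℝ) → ℝ} {g : (Fin d → ℝ) → Fin d → ℝ}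
    (hg : IntegrableOn (fun x => ∑ i, (g x i) ^ 2) (box d)) (hw : HasWeakGradient f g)
    {ψ : (Fin d → ℝ) → ℝ} (hψ : ContDiff ℝ (⊤ : ℕ∞) ψ) (hp : SpacePeriodic ψ) (i : Fin d) :
    |bI (fun x => f x * pd ψ i x)| ≤ √(bI (fun x => ∑ i, (g x i) ^ 2)) * nr ψ := by
  have hψc := hψ.continuous
  have h := hw (fun x j => if j = i then ψ x else 0)
    (by intro j; by_cases hj : j = i <;> simp only [hj, if_true, if_false]
        · exact hψ
        · exact contDiff_const)
    (by intro j; by_cases hj : j = i <;> simp only [hj, if_true, if_false]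
        · exact hp
        · exact sp_const 0)
  have e1 : ∀ x, ∑ j, pd (fun y => if j = i then ψ y else 0) j x = pd ψ i x := by
    intro x
    rw [Finset.sum_eq_single i]
    · simp
    · intro j _ hj
      simp [hj, pd]
    · simp
  have e2 : ∀ x, ∑ j, g x j * (if j = i then ψ x else 0) = g x i * ψ x := by
    intro x; simp
  simp_rw [e1, e2] at h
  have h' : bI (fun x => f x * pd ψ i x) = - bI (fun x => g x i * ψ x) := h
  rw [h', abs_neg]
  have hS0 : 0 ≤ bI (fun x => ∑ i, (g x i) ^ 2) := bI_nonneg fun x => Finset.sum_nonneg fun _ _ => sq_nonneg _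
  by_cases hi : IntegrableOn (fun x => g x i * ψ x) (box d)
  · have hd : ∀ t : ℝ, 0 ≤ bI (fun x => ∑ i, (g x i) ^ 2) * (t*t) + (-2 * bI (fun x => g x i * ψ x)) * t
        + bI (fun x => ψ x^2) := by
      intro t
      have i3 : IntegrableOn (fun x => ψ x^2) (box d) := box_int (by fun_prop)
      have e : bI (fun x => (∑ i, (g x i) ^ 2) * (t*t) + (g x i * ψ x) * (-2*t) + ψ x ^2) =
          bI (fun x => ∑ i, (g x i) ^ 2) * (t*t) + (-2 * bI (fun x => g x i * ψ x)) * t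
        + bI (fun x => ψ x^2) := by
        have j1 : IntegrableOn (fun x => (∑ i, (g x i) ^ 2) * (t*t)) (box d) := hg.mul_const _
        have j2 : IntegrableOn (fun x => (g x i * ψ x) * (-2*t)) (box d) := hi.mul_const _
        have j3 : IntegrableOn (fun x => (∑ i, (g x i) ^ 2) * (t*t) + (g x i * ψ x) * (-2*t)) (box d) :=
          j1.add j2
        simp only [bI]
        rw [integral_add j3 i3, integral_add j1 j2, integral_mul_const, integral_mul_const]
        ring
      rw [← e]
      apply bI_nonneg
      intro x
      have : (g x i)^2 ≤ ∑ i, (g x i) ^ 2 :=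
        Finset.single_le_sum (f := fun i => (g x i)^2) (fun _ _ => sq_nonneg _) (Finset.mem_univ i)
      nlinarith [sq_nonneg (g x i * t - ψ x), mul_self_nonneg t, mul_le_mul_of_nonneg_right this (mul_self_nonneg t)]
    have := discrim_le_zero hd
    unfold discrim at this
    rw [← nr_sq ψ] at this
    apply abs_le_of_sq_le_sq
    · rw [mul_pow, Real.sq_sqrt hS0]; nlinarith
    · exact mul_nonneg (Real.sqrt_nonneg _) (nr_nonneg _)
  · have : bI (fun x => g x i * ψ x) = 0 := integral_undef hi
    rw [this, abs_zero]
    exact mul_nonneg (Real.sqrt_nonneg _) (nr_nonneg _)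

lemma molly {d : ℕ} {f : (Fin d → ℝ) → ℝ} {g : (Fin d → ℝ) → Fin d → ℝ} (hf : Continuous f)
    (hp : SpacePeriodic f)
    (hg : IntegrableOn (fun x => ∑ i, (g x i) ^ 2) (box d)) (hw : HasWeakGradient f g)
    {ε : ℝ} (hε : 0 < ε) :
    ∃ w : (Fin d → ℝ) → ℝ, ContDiff ℝ (⊤ : ℕ∞) w ∧ SpacePeriodic w ∧ (∀ x, |w x - f x| ≤ ε) ∧
      ∀ i, nr (pd w i) ≤ √(bI (fun x => ∑ i, (g x i) ^ 2)) := by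
  -- uniform continuity
  have hloc : ∃ δ > 0, ∀ x y : Fin d → ℝ, dist y x < δ → dist (f y) (f x) ≤ ε := by
    have hu := (isCompact_closedBall (0 : Fin d → ℝ) 2).uniformContinuousOn_of_continuous hf.continuousOn
    rw [Metric.uniformContinuousOn_iff] at hu
    obtain ⟨δ, hδ, h⟩ := hu ε hε
    refine ⟨min δ 1, by positivity, fun x y hxy => ?_⟩
    let k : Fin d → ℤ := fun i => - ⌊x i⌋
    have hx0 : dist (x + fun i => (k i : ℝ)) 0 ≤ 1 := by
      rw [dist_zero_right, pi_norm_le_iff_of_nonneg zero_le_one]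
      intro i
      have h1 := Int.floor_le (x i)
      have h2 := Int.lt_floor_add_one (x i)
      simp only [k, Pi.add_apply, Int.cast_neg, Real.norm_eq_abs]
      rw [abs_le]; constructor <;> linarith
    have hxy' : dist (y + fun i => (k i : ℝ)) (x + fun i => (k i : ℝ)) = dist y x := dist_add_right _ _ _
    have := h (y + fun i => (k i : ℝ)) (by
      rw [Metric.mem_closedBall]
      have := dist_triangle (y + fun i => (k i : ℝ)) (x + fun i => (k i : ℝ)) 0
      have := min_le_right δ 1
      linarith) (x + fun i => (k i : ℝ)) (by rw [Metric.mem_closedBall]; linarith) (by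
        rw [hxy']; exact hxy.trans_le (min_le_left _ _))
    rw [hp, hp] at this
    exact this.le
  obtain ⟨δ, hδ, hclose⟩ := hloc
  let φ : ContDiffBump (0 : Fin d → ℝ) := ⟨δ/2, δ, by positivity, by linarith⟩
  let w := convolution (φ.normed volume) f (ContinuousLinearMap.lsmul ℝ ℝ) volume
  have hwx : ∀ x, w x = ∫ y in Metric.closedBall 0 δ, φ.normed volume y * f (x - y) := by
    intro x
    simp only [w, convolution_def, ContinuousLinearMap.lsmul_apply, smul_eq_mul]
    symm
    apply setIntegral_eq_integral_of_forall_compl_eq_zero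
    intro y hy
    have : φ.normed volume y = 0 := by
      by_contra h
      have : y ∈ Function.support (φ.normed volume) := h
      rw [φ.support_normed_eq] at this
      exact hy (Metric.ball_subset_closedBall this)
    rw [this, zero_mul]
  have hφc : Continuous (φ.normed volume) := φ.continuous_normed
  have hws : ContDiff ℝ (⊤ : ℕ∞) w :=
    φ.hasCompactSupport_normed.contDiff_convolution_left _ φ.contDiff_normed hf.locallyIntegrable
  have hwp : SpacePeriodic w := by
    intro x k
    rw [hwx, hwx]
    congr 1; funext y
    rw [← hp (x - y) k]
    congr 2; abel
  refine ⟨w, hws, hwp, ?_, ?_⟩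
  · intro x
    exact φ.dist_normed_convolution_le hf.aestronglyMeasurable fun y hy => hclose x y hy
  · intro i
    set S := √(bI (fun x => ∑ i, (g x i) ^ 2)) with hS
    have hv : ContDiff ℝ (⊤ : ℕ∞) (pd w i) := by
      unfold pd
      exact (hws.fderiv_right (m := (⊤ : ℕ∞)) (by norm_cast)).clm_apply contDiff_const
    have hv1 : ContDiff ℝ 1 (pd w i) := hv.of_le (by norm_cast)
    have hw1 : ContDiff ℝ 1 w := hws.of_le (by norm_cast)
    have hvp := sp_pd hwp i
    have hvc := hv1.continuous
    have hvd := cp_pd hv1 i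
    have hvdp := sp_pd hvp i
    have h1 : nr (pd w i)^2 = - bI (fun x => w x * pd (pd w i) i x) := by
      rw [bI_ibp hw1 hv1 hwp hvp i, neg_neg, nr_sq]
      congr 1; funext x; ring
    have h2 : bI (fun x => w x * pd (pd w i) i x) =
        ∫ y in Metric.closedBall (0 : Fin d → ℝ) δ, φ.normed volume y * bI (fun x => f (x - y) * pd (pd w i) i x) := by
      unfold bI
      simp_rw [hwx, ← integral_mul_const, ← integral_const_mul]
      rw [integral_integral_swap]
      · congr 1; funext y; congr 1; funext x; ring
      · rw [Measure.prod_restrict]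
        apply ContinuousOn.integrableOn_compact ((box_compact d).prod (isCompact_closedBall _ _))
        apply Continuous.continuousOn
        simp only [Function.uncurry_def]
        fun_prop
    have h3 : ∀ y, |bI (fun x => f (x - y) * pd (pd w i) i x)| ≤ S * nr (pd w i) := by
      intro y
      have e := bI_trans (g := fun x => f (x - y) * pd (pd w i) i x) (by fun_prop)
        (sp_mul (by simpa [sub_eq_add_neg] using sp_shift hp (-y)) hvdp) y
      simp only [add_sub_cancel_right] at e
      rw [← e]
      have h4 := weak_bd hg hw (ψ := fun x => pd w i (x + y)) (hv.comp (contDiff_id.add contDiff_const))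
        (sp_shift hvp y) i
      have e2 : ∀ x, pd (fun x => pd w i (x + y)) i x = pd (pd w i) i (x + y) := fun x => pd_shift _ _ _ _
      simp_rw [e2] at h4
      refine h4.trans (le_of_eq ?_)
      congr 1
      unfold nr
      rw [bI_trans (g := fun x => pd w i x^2) (by fun_prop) (sp_pow hvp 2) y]
    have h5 : |bI (fun x => w x * pd (pd w i) i x)| ≤ S * nr (pd w i) := by
      rw [h2]
      have h6 : ∀ y ∈ Metric.closedBall (0 : Fin d → ℝ) δ, ‖φ.normed volume y * bI (fun x => f (x - y) * pd (pd w i) i x)‖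
          ≤ φ.normed volume y * (S * nr (pd w i)) := by
        intro y _
        rw [norm_mul, Real.norm_eq_abs, Real.norm_eq_abs, abs_of_nonneg (φ.nonneg_normed y)]
        exact mul_le_mul_of_nonneg_left (h3 y) (φ.nonneg_normed y)
      have hi : IntegrableOn (fun y => φ.normed volume y * (S * nr (pd w i))) (Metric.closedBall (0 : Fin d → ℝ) δ) :=
        (φ.integrable_normed.mul_const _).integrableOn
      have h7 := norm_integral_le_of_norm_le hi ((ae_restrict_iff' Metric.isClosed_closedBall.measurableSet).2
        (Eventually.of_forall h6))
      rw [Real.norm_eq_abs] at h7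
      refine h7.trans ?_
      rw [integral_mul_const]
      have h8 : ∫ y in Metric.closedBall (0 : Fin d → ℝ) δ, φ.normed volume y ≤ 1 := by
        rw [← φ.integral_normed (μ := volume)]
        exact setIntegral_le_integral φ.integrable_normed (Eventually.of_forall φ.nonneg_normed)
      have := mul_nonneg (Real.sqrt_nonneg (bI (fun x => ∑ i, (g x i) ^ 2))) (nr_nonneg (pd w i))
      nlinarith
    have h9 : nr (pd w i)^2 ≤ S * nr (pd w i) := by
      rw [h1]; exact (neg_le_abs _).trans h5
    rcases (nr_nonneg (pd w i)).eq_or_lt with h | h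
    · rw [← h]; exact Real.sqrt_nonneg _
    · nlinarith

def Qn {d : ℕ} (i : Fin d) (f : (Fin d → ℝ) → ℝ) : ℝ := nr (fun x => f x - Pa i f x)

lemma Pa_nr {d : ℕ} (i : Fin d) {f : (Fin d → ℝ) → ℝ} (hf : Continuous f) (hp : SpacePeriodic f) :
    nr (Pa i f) ≤ nr f := by
  rw [Pa_Lc]; exact Lc_nr continuous_const i hf hp (by simp)

lemma Qn_le {d : ℕ} (i : Fin d) {f : (Fin d → ℝ) → ℝ} (hf : Continuous f) (hp : SpacePeriodic f) :
    Qn i f ≤ 2 * nr f := by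
  have h1 := nr_sub hf (Pa_cont i hf)
  have h2 := Pa_nr i hf hp
  unfold Qn
  linarith

lemma Qn_diff {d : ℕ} (i : Fin d) {f g : (Fin d → ℝ) → ℝ} (hf : Continuous f) (hp : SpacePeriodic f)
    (hg : Continuous g) (hgp : SpacePeriodic g) :
    Qn i f ≤ Qn i g + 2 * nr (fun x => f x - g x) := by
  have h1 := Qn_le i (f := fun x => f x - g x) (by fun_prop) (sp_sub hp hgp)
  have hgc := Pa_cont i hg
  have hfc := Pa_cont i hf
  have hfgc := Pa_cont i (f := fun x => f x - g x) (by fun_prop)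
  have e : (fun x => f x - Pa i f x) = fun x => (g x - Pa i g x) +
      ((f x - g x) - Pa i (fun x => f x - g x) x) := by
    funext x
    have : Pa i (fun x => f x - g x) x = Pa i f x - Pa i g x := by
      unfold Pa
      exact intervalIntegral.integral_sub (Continuous.intervalIntegrable (by fun_prop) _ _)
        (Continuous.intervalIntegrable (by fun_prop) _ _)
    rw [this]; ring
  have h2 := nr_add (f := fun x => g x - Pa i g x)
    (g := fun x => (f x - g x) - Pa i (fun x => f x - g x) x) (by fun_prop) (by fun_prop)
  rw [← e] at h2
  unfold Qn at *
  linarith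

lemma Qn_shear {d : ℕ} (i : Fin d) {g : (Fin d → ℝ) → ℝ} (hg : Continuous g)
    (hp : SpacePeriodic g) {c : (Fin d → ℝ) → ℝ} (hc : Continuous c) (hcp : SpacePeriodic c)
    (hci : ∀ x (r : ℝ), c (x + r • ee i) = c x) :
    nr (fun x => g (x + c x • ee i) - g x) ≤ 2 * Qn i g := by
  have hP := Pa_cont i hg
  have hq : Continuous (fun x => g x - Pa i g x) := by fun_prop
  have hqp := sp_sub hp (Pa_per i hp)
  have e : (fun x => g (x + c x • ee i) - g x) = fun x =>
      (g (x + c x • ee i) - Pa i g (x + c x • ee i)) - (g x - Pa i g x) := by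
    funext x
    rw [Pa_inv i hp]; ring
  rw [e]
  have h1 := nr_sub (f := fun x => g (x + c x • ee i) - Pa i g (x + c x • ee i)) (by fun_prop) hq
  have h2 := nr_shear i hq hqp hc hcp hci
  unfold Qn
  linarith

lemma nr_trans {d : ℕ} {g : (Fin d → ℝ) → ℝ} (hg : Continuous g) (hp : SpacePeriodic g)
    (v : Fin d → ℝ) : nr (fun x => g (x + v)) = nr g := by
  unfold nr
  rw [bI_trans (g := fun x => g x ^2) (by fun_prop) (sp_pow hp 2) v]

lemma Qn_trans {d : ℕ} {g : (Fin d → ℝ) → ℝ} (hg : Continuous g)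
    (hp : SpacePeriodic g) (v : Fin d → ℝ) :
    nr (fun x => g (x + v) - g x) ≤ ∑ i, 2 * Qn i g := by
  have h : ∀ s : Finset (Fin d), nr (fun x => g (x + ∑ i ∈ s, v i • ee i) - g x) ≤ ∑ i ∈ s, 2 * Qn i g := by
    intro s
    induction s using Finset.induction_on with
    | empty => simp [nr, bI]
    | insert i s hi ih =>
      rw [Finset.sum_insert hi, Finset.sum_insert hi]
      set w := ∑ i ∈ s, v i • (ee i : Fin d → ℝ) with hw
      have e : (fun x => g (x + (v i • ee i + w)) - g x) = fun x =>
          (g ((x + w) + v i • ee i) - g (x + w)) + (g (x + w) - g x) := by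
        funext x
        rw [show x + (v i • ee i + w) = (x + w) + v i • ee i by abel]; ring
      rw [e]
      have h1 := nr_add (f := fun x => g ((x + w) + v i • ee i) - g (x + w))
        (g := fun x => g (x + w) - g x) (by fun_prop) (by fun_prop)
      have h2 := nr_trans (g := fun x => g (x + v i • ee i) - g x) (by fun_prop)
        (sp_sub (sp_shift hp _) hp) w
      have h3 := Qn_shear i hg hp (c := fun _ => v i) continuous_const (sp_const _) (by simp)
      linarith
  have e : ∑ i, v i • (ee i : Fin d → ℝ) = v := by
    funext j
    simp [Finset.sum_apply, Pi.single_apply]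
  have := h Finset.univ
  rwa [e] at this

lemma Qn_sum {d : ℕ} {g : (Fin d → ℝ) → ℝ} (hg : Continuous g)
    (hp : SpacePeriodic g) (h0 : bI g = 0) : nr g ≤ ∑ i, 2 * Qn i g := by
  set S := ∑ i, 2 * Qn i g with hS
  have hS0 : 0 ≤ S := Finset.sum_nonneg fun i _ => mul_nonneg zero_le_two (nr_nonneg _)
  have hh : Continuous (fun v => bI (fun x => g x * g (x + v))) := by
    unfold bI
    exact continuous_parametric_integral_of_continuous (f := fun v x => g x * g (x + v))
      (by simp only [Function.uncurry_def]; fun_prop) (box_compact d)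
  have key : ∀ v, 2 * nr g ^ 2 - S^2 ≤ 2 * bI (fun x => g x * g (x + v)) := by
    intro v
    have h1 := Qn_trans hg hp v
    have h2 := pow_le_pow_left₀ (nr_nonneg _) h1 2
    rw [nr_sq] at h2
    have e : (fun x => (g (x + v) - g x)^2) = fun x => (g (x + v)^2 + g x^2) - 2 * (g x * g (x + v)) := by
      funext x; ring
    rw [e, bI_sub (by fun_prop) (by fun_prop), bI_add (by fun_prop) (by fun_prop), bI_mul,
      bI_trans (g := fun x => g x ^2) (by fun_prop) (sp_pow hp 2) v, ← nr_sq] at h2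
    linarith
  have h3 : bI (fun v => bI (fun x => g x * g (x + v))) = 0 := by
    unfold bI
    rw [integral_integral_swap]
    · have : ∀ y, ∫ x in box d, g y * g (y + x) = 0 := by
        intro y
        rw [integral_const_mul]
        have := bI_trans hg hp y
        rw [h0] at this
        simp_rw [add_comm y]
        unfold bI at this
        rw [this, mul_zero]
      simp [this]
    · rw [Measure.prod_restrict]
      apply ContinuousOn.integrableOn_compact ((box_compact d).prod (box_compact d))
      apply Continuous.continuousOn
      simp only [Function.uncurry_def]
      fun_prop
  have h4 := bI_mono continuous_const (by fun_prop) key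
  rw [bI_mul, h3, bI_const] at h4
  have h5 : nr g ^2 ≤ S^2 := by nlinarith [sq_nonneg (nr g)]
  exact abs_le_of_sq_le_sq' h5 hS0 |>.2

lemma Qn_tr {d : ℕ} (hd : 2 ≤ d) (k : ℕ) (A : ℝ) {g : (Fin d → ℝ) → ℝ} (hg : Continuous g)
    (hp : SpacePeriodic g) :
    nr (fun x => tr g (Fs hd k) (ixs hd k) A x - g x) ≤ 2 * Qn (ixs hd k) g := by
  have hF := (Fs_C1 hd k).continuous
  refine Qn_shear (ixs hd k) hg hp (c := fun x => -(A * Fs hd k x)) (by fun_prop) ?_ ?_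
  · have := sp_cmul (Fs_per hd k) (-A)
    simpa using this
  · intro x r; simp only [Fs_ind]

lemma Wf_cont {d : ℕ} (hd : 2 ≤ d) {f : (Fin d → ℝ) → ℝ} (hf : Continuous f) (k : ℕ) :
    Continuous (Wf hd f k) := Wt_cont (fun k => (Fs_C1 hd k).continuous) hf k

lemma Wf_per {d : ℕ} (hd : 2 ≤ d) {f : (Fin d → ℝ) → ℝ} (hf : SpacePeriodic f) (k : ℕ) :
    SpacePeriodic (Wf hd f k) := Wt_per (Fs_per hd) hf k

lemma Wf_nr {d : ℕ} (hd : 2 ≤ d) {f : (Fin d → ℝ) → ℝ} (hf : Continuous f) (hp : SpacePeriodic f) (k : ℕ) :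
    nr (Wf hd f k) = nr f := by
  induction k with
  | zero => rfl
  | succ k ih => rw [← ih]; exact tr_nr hd k _ (Wf_cont hd hf k) (Wf_per hd hp k)

lemma Wf_bI {d : ℕ} (hd : 2 ≤ d) {f : (Fin d → ℝ) → ℝ} (hf : Continuous f) (hp : SpacePeriodic f) (k : ℕ) :
    bI (Wf hd f k) = bI f := by
  induction k with
  | zero => rfl
  | succ k ih => rw [← ih]; exact tr_bI hd k _ (Wf_cont hd hf k) (Wf_per hd hp k)

lemma Wf_close {d : ℕ} (hd : 2 ≤ d) {f g : (Fin d → ℝ) → ℝ} {ε : ℝ} (h : ∀ x, |f x - g x| ≤ ε) (k : ℕ) :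
    ∀ x, |Wf hd f k x - Wf hd g k x| ≤ ε := by
  induction k with
  | zero => exact h
  | succ k ih => intro x; exact ih _

lemma Wf_sup {d : ℕ} (hd : 2 ≤ d) {f : (Fin d → ℝ) → ℝ} {ε : ℝ} (h : ∀ x, |f x| ≤ ε) (k : ℕ) :
    ∀ x, |Wf hd f k x| ≤ ε := by
  induction k with
  | zero => exact h
  | succ k ih => intro x; exact ih _

lemma window {d : ℕ} (hd : 2 ≤ d) {f : (Fin d → ℝ) → ℝ} (hf : Continuous f) (hp : SpacePeriodic f)
    (h0 : bI f = 0) (hr : 0 < nr f) (m : ℕ) :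
    ∃ k, m ≤ k ∧ 2 * (nr f / (40 * d^2)) ≤ Qn (ixs hd k) (Wf hd f k) := by
  set q := nr f / (40 * d^2) with hq
  have hdR : (2:ℝ) ≤ d := by exact_mod_cast hd
  have hq0 : 0 < q := by positivity
  have hqd : q * (40 * d^2) = nr f := by rw [hq]; field_simp
  by_contra hcon
  push Not at hcon
  have hc := Wf_cont hd hf
  have hpp := Wf_per hd hp
  have hdrift : ∀ j : ℕ, nr (fun x => Wf hd f (m+j) x - Wf hd f m x) ≤ 4 * q * j := by
    intro j
    induction j with
    | zero => simp [nr, bI]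
    | succ j ih =>
      have h1 := nr_add (f := fun x => Wf hd f (m+(j+1)) x - Wf hd f (m+j) x)
        (g := fun x => Wf hd f (m+j) x - Wf hd f m x) ((hc _).sub (hc _)) ((hc _).sub (hc _))
      have e : (fun x => Wf hd f (m+(j+1)) x - Wf hd f (m+j) x + (Wf hd f (m+j) x - Wf hd f m x))
        = fun x => Wf hd f (m+(j+1)) x - Wf hd f m x := by funext x; ring
      rw [e] at h1
      have h2 := Qn_tr hd (m+j) (as (m+j)) (hc (m+j)) (hpp (m+j))
      have h3 := hcon (m+j) (by omega)
      have h4 : nr (fun x => Wf hd f (m+(j+1)) x - Wf hd f (m+j) x) ≤ 2 * Qn (ixs hd (m+j)) (Wf hd f (m+j)) := h2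
      push_cast
      linarith
  have hQ : ∀ i, Qn i (Wf hd f m) ≤ 2 * q + 8 * q * d := by
    intro i
    obtain ⟨j, hj, hij⟩ : ∃ j, j < d ∧ ixs hd (m+j) = i := by
      refine ⟨(i + (d - m % d)) % d, Nat.mod_lt _ (by omega), ?_⟩
      apply Fin.ext
      simp only [ixs]
      have h1 : m % d < d := Nat.mod_lt _ (by omega)
      have h2 := i.2
      rw [Nat.add_mod_mod, ← Nat.mod_add_mod]
      rw [show m % d + ((i:ℕ) + (d - m % d)) = i + d by omega, Nat.add_mod_right, Nat.mod_eq_of_lt h2]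
    have h1 := Qn_diff i (hc m) (hpp m) (hc (m+j)) (hpp (m+j))
    have h2 := hdrift j
    have h3 := hcon (m+j) (by omega)
    rw [hij] at h3
    have h4 : nr (fun x => Wf hd f m x - Wf hd f (m+j) x) = nr (fun x => Wf hd f (m+j) x - Wf hd f m x) := by
      rw [← nr_neg]; congr 1; funext x; ring
    have h5 : q * (j:ℝ) ≤ q * d := by
      have : (j:ℝ) ≤ d := by exact_mod_cast hj.le
      gcongr
    rw [h4] at h1
    linarith
  have h1 := Qn_sum (hc m) (hpp m) (by rw [Wf_bI hd hf hp, h0])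
  rw [Wf_nr hd hf hp] at h1
  have h2 : ∑ i, 2 * Qn i (Wf hd f m) ≤ ∑ i : Fin d, 2 * (2 * q + 8 * q * d) :=
    Finset.sum_le_sum fun i _ => by linarith [hQ i]
  rw [Finset.sum_const, Finset.card_univ, Fintype.card_fin, nsmul_eq_mul] at h2
  nlinarith [mul_pos hq0 (by linarith : (0:ℝ) < d), mul_nonneg (mul_nonneg hq0.le (by linarith : (0:ℝ) ≤ d)) (by linarith : (0:ℝ) ≤ (d:ℝ) - 2)]

lemma closeness {d : ℕ} (hd : 2 ≤ d) {κ : ℝ} {θin : (Fin d → ℝ) → ℝ} {θ : ℝ → (Fin d → ℝ) → ℝ}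
    (sol : IsAdvDiffSol (us hd) κ θin θ) (hκ : 0 < κ) {w0 : (Fin d → ℝ) → ℝ} (hW : ContDiff ℝ 1 w0)
    (hWp : SpacePeriodic w0) {H : ℝ} (hH : ∀ l, nr (pd w0 l) ≤ H) {lam : ℝ} (hlam : 0 < lam) (n : ℕ)
    {s : ℝ} (hs : s ∈ Set.Icc (Ts n + (1/2)^(n+2)) (Ts (n+1))) :
    nr (fun x => θ s x - Wf hd w0 (n+1) x)^2 ≤ nr (fun x => θin x - w0 x) ^ 2
      + lam * (κ * dissip θ)
      + κ / lam * (d * H^2 * ∑ m ∈ Finset.range (n+1), Xs (m+1)^2 * (1/2)^(m+1)) := by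
  have ea : (fun k => As k (Ts (k+1))) = as := funext As_end
  have h := accum (us_Stg hd) As_zero sol hκ hW hWp (B := fun k => d * (H * Xs (k+1))^2)
    (fun k => by positivity) hlam (by
      rw [ea]
      intro k t ht
      have hWk := Wt_c1 (ix := ixs hd) (a := as) (Fs_C1 hd) hW k
      apply gradSq_bd (tr_c1 hWk (Fs_C1 hd k) _ _)
      intro l
      have := tr_grad hd k hWk (Wf_per hd hWp k) (As_bd ht.1) (Wf_grad hd hW hWp hH k) l
      rwa [mul_assoc, ← Xs_succ] at this) n s ⟨by
        have : (0:ℝ) < (1/2)^(n+2) := by positivity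
        linarith [hs.1], hs.2⟩
  rw [ea, As_rest hs.1] at h
  refine h.trans (le_of_eq ?_)
  congr 2
  rw [Finset.mul_sum]
  apply Finset.sum_congr rfl
  intro m _
  rw [Ts_succ]; ring

lemma grad_low {d : ℕ} {V W a : (Fin d → ℝ) → ℝ} (hV : ContDiff ℝ 1 V) (hVp : SpacePeriodic V)
    (hW : ContDiff ℝ 1 W) (hWp : SpacePeriodic W) (ha : ContDiff ℝ 1 a) (hap : SpacePeriodic a)
    {M K X c η : ℝ} (hM : ∀ x, |a x| ≤ M) (j : Fin d) (hK : nr (pd a j) ≤ K * X)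
    (hc : c * X ≤ |bI (fun x => a x * pd W j x)|) (hX : 0 < X) (hc0 : 0 < c)
    (hη : nr (fun x => V x - W x) ≤ η) (hKη : K * η ≤ c / 2) :
    (c * X / 2)^2 ≤ M^2 * bI (gradSq V) := by
  have hVc := hV.continuous
  have hWc := hW.continuous
  have hac := ha.continuous
  have hpa := cp_pd ha j
  have hpv := cp_pd hV j
  have hM0 : 0 ≤ M := (abs_nonneg _).trans (hM 0)
  have h1 := bI_cs hac hpv
  have h2 := nr_le_sup hac hM
  have h3 := bI_cs (f := fun x => V x - W x) (by fun_prop) hpa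
  have e : bI (fun x => (V x - W x) * pd a j x) =
      -bI (fun x => a x * pd V j x) + bI (fun x => a x * pd W j x) := by
    have : (fun x => (V x - W x) * pd a j x) = fun x => V x * pd a j x - W x * pd a j x := by
      funext x; ring
    rw [this, bI_sub (by fun_prop) (by fun_prop), bI_ibp hV ha hVp hap j, bI_ibp hW ha hWp hap j]
    ring
  rw [e] at h3
  have h4 : nr (fun x => V x - W x) * nr (pd a j) ≤ c / 2 * X := by
    calc nr (fun x => V x - W x) * nr (pd a j) ≤ η * (K * X) :=
          mul_le_mul hη hK (nr_nonneg _) ((nr_nonneg _).trans hη)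
      _ = (K * η) * X := by ring
      _ ≤ _ := by gcongr
  have h5 : nr a * nr (pd V j) ≤ M * nr (pd V j) := mul_le_mul_of_nonneg_right h2 (nr_nonneg _)
  have h6 : c * X / 2 ≤ M * nr (pd V j) := by
    have := abs_sub_abs_le_abs_sub (bI (fun x => a x * pd W j x)) (bI (fun x => a x * pd V j x))
    rw [neg_add_eq_sub] at h3
    linarith
  have h7 := pow_le_pow_left₀ (by positivity) h6 2
  rw [mul_pow, nr_sq] at h7
  refine h7.trans ?_
  gcongr
  apply bI_mono (by fun_prop)
  · unfold gradSq
    exact continuous_finsetSum _ fun l _ => (cp_pd hV l).pow 2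
  · intro x
    exact Finset.single_le_sum (f := fun i => (pd V i x)^2) (fun _ _ => sq_nonneg _) (Finset.mem_univ j)

lemma dissip_low {d : ℕ} (hd : 2 ≤ d) {κ : ℝ} {θin : (Fin d → ℝ) → ℝ} {θ : ℝ → (Fin d → ℝ) → ℝ}
    (sol : IsAdvDiffSol (us hd) κ θin θ) (hκ : 0 < κ) {c p q : ℝ} (hp : 0 ≤ p) (hpq : p ≤ q) (hq : q ≤ 1)
    (h : ∀ s ∈ Set.Icc p q, c ≤ bI (gradSq (θ s))) : (q - p) * c ≤ dissip θ := by
  obtain ⟨hi, -⟩ := energy (us_Stg hd) sol hκ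
  have hsub : Set.Icc p q ⊆ Set.Icc 0 1 := Set.Icc_subset_Icc hp hq
  have h1 : ∫ t in Set.Icc p q, bI (gradSq (θ t)) ≤ ∫ t in Set.Icc (0:ℝ) 1, bI (gradSq (θ t)) :=
    setIntegral_mono_set hi (Eventually.of_forall fun t => bI_nonneg fun x => gradSq_nonneg _ _)
      hsub.eventuallyLE
  have h2 : ∫ t in Set.Icc p q, c ≤ ∫ t in Set.Icc p q, bI (gradSq (θ t)) :=
    setIntegral_mono_on (by simp) (hi.mono_set hsub) measurableSet_Icc h
  rw [setIntegral_const, Real.volume_real_Icc_of_le hpq, smul_eq_mul] at h2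
  exact h2.trans h1

lemma dissip_nonneg {d : ℕ} (θ : ℝ → (Fin d → ℝ) → ℝ) : 0 ≤ dissip θ :=
  integral_nonneg fun t => bI_nonneg fun x => gradSq_nonneg _ _

set_option maxHeartbeats 1000000 in
lemma main_bd {d : ℕ} (hd : 2 ≤ d) {f : (Fin d → ℝ) → ℝ} {g : (Fin d → ℝ) → Fin d → ℝ} (hf : Continuous f)
    (hp : SpacePeriodic f)
    (hg : IntegrableOn (fun x => ∑ i, (g x i) ^ 2) (box d)) (hw : HasWeakGradient f g)
    (h0 : bI f = 0) (hr : 0 < nr f) :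
    ∃ ϱ : ℝ, 0 < ϱ ∧ ∀ κ : ℝ, (∃ j : ℕ, κ ∈ Set.Icc (κs j / 2) (2 * κs j)) →
      ∀ θ : ℝ → (Fin d → ℝ) → ℝ, IsAdvDiffSol (us hd) κ f θ → ϱ ≤ κ * dissip θ := by
  have hdR : (2:ℝ) ≤ d := by exact_mod_cast hd
  obtain ⟨M0, hM0, hfM⟩ := cp_bdd hf hp
  obtain ⟨M, hMdef⟩ : ∃ M, M = M0 + 1 := ⟨_, rfl⟩
  have hM : 0 < M := by linarith
  obtain ⟨H, hHdef⟩ : ∃ H, H = √(bI (fun x => ∑ i, (g x i) ^ 2)) + 1 := ⟨_, rfl⟩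
  have hH : 0 < H := by have := Real.sqrt_nonneg (bI (fun x => ∑ i, (g x i) ^ 2)); linarith
  obtain ⟨q, hqdef⟩ : ∃ q, q = nr f / (40 * d^2) := ⟨_, rfl⟩
  have hq : 0 < q := by rw [hqdef]; positivity
  obtain ⟨ns, hns⟩ : ∃ ns : ℕ, (1/8:ℝ)^ns < q^2 / (16 * (M * H)) :=
    exists_pow_lt_of_lt_one (by positivity) (by norm_num)
  obtain ⟨n0, hn0, hQ0⟩ := window hd hf hp h0 hr ns
  rw [← hqdef] at hQ0
  have c1 : 16 * (M * H * (1/8)^n0) ≤ q^2 := by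
    have h1 : (1/8:ℝ)^n0 ≤ (1/8)^ns := pow_le_pow_of_le_one (by norm_num) (by norm_num) hn0
    rw [lt_div_iff₀ (by positivity)] at hns
    have : M * H * (1/8)^n0 ≤ M * H * (1/8)^ns := by gcongr
    linarith
  have hX0 := Xs_pos n0
  obtain ⟨ro, hrodef⟩ : ∃ ro, ro = min 1 (q^2 / (8 * (M * H * Xs n0))) := ⟨_, rfl⟩
  have hro : 0 < ro := by rw [hrodef]; positivity
  have hro1 : ro ≤ 1 := by rw [hrodef]; exact min_le_left _ _
  obtain ⟨om, homdef⟩ : ∃ om, om = ro^2 := ⟨_, rfl⟩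
  have hom : 0 < om := by rw [homdef]; positivity
  have hom1 : om ≤ 1 := by rw [homdef]; exact pow_le_one₀ hro.le hro1
  have c2 : 8 * (M * H * √om * Xs n0) ≤ q^2 := by
    rw [homdef, Real.sqrt_sq hro.le]
    have : ro ≤ q^2 / (8 * (M * H * Xs n0)) := by rw [hrodef]; exact min_le_right _ _
    rw [le_div_iff₀ (by positivity)] at this
    linarith
  obtain ⟨c, hcdef⟩ : ∃ c, c = q^2 / (2 * Xs n0) := ⟨_, rfl⟩
  have hc : 0 < c := by rw [hcdef]; positivity
  obtain ⟨K, hKdef⟩ : ∃ K, K = H + 2 * (M * (π^2/om)) := ⟨_, rfl⟩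
  have hK : 0 < K := by rw [hKdef]; positivity
  obtain ⟨η, hηdef⟩ : ∃ η, η = c / (2 * K) := ⟨_, rfl⟩
  have hη : 0 < η := by rw [hηdef]; positivity
  have hKη : K * η ≤ c / 2 := by rw [hηdef]; apply le_of_eq; field_simp
  obtain ⟨ε, hεdef⟩ : ∃ ε, ε = min (min (q/2) (η/2)) 1 := ⟨_, rfl⟩
  have hε : 0 < ε := by rw [hεdef]; positivity
  have hε1 : ε ≤ 1 := by rw [hεdef]; exact min_le_right _ _
  have hεq : ε ≤ q/2 := by rw [hεdef]; exact (min_le_left _ _).trans (min_le_left _ _)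
  have hεη : ε ≤ η/2 := by rw [hεdef]; exact (min_le_left _ _).trans (min_le_right _ _)
  obtain ⟨w, hws, hwp, hwf, hwg⟩ := molly hf hp hg hw hε
  have hw1 : ContDiff ℝ 1 w := hws.of_le (by norm_cast)
  have hwc := hw1.continuous
  have hwH : ∀ l, nr (pd w l) ≤ H := fun l => by linarith [hwg l]
  have hwM : ∀ x, |w x| ≤ M := by
    intro x
    have h1 := abs_sub_abs_le_abs_sub (w x) (f x)
    linarith [hwf x, hfM x]
  have hWn1 := Wt_c1 (ix := ixs hd) (a := as) (Fs_C1 hd) hw1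
  have hQw : q ≤ Qn (ixs hd n0) (Wf hd w n0) := by
    have h1 := Qn_diff (ixs hd n0) (Wf_cont hd hf n0) (Wf_per hd hp n0) (Wf_cont hd hwc n0) (Wf_per hd hwp n0)
    have h2 : nr (fun x => Wf hd f n0 x - Wf hd w n0 x) ≤ ε :=
      nr_le_sup ((Wf_cont hd hf n0).sub (Wf_cont hd hwc n0))
        (Wf_close hd (fun x => by rw [abs_sub_comm]; exact hwf x) n0)
    linarith
  obtain ⟨b, hb, hbp, hbM, hbg, hbQ⟩ := start (ixs hd n0) (hWn1 n0) (Wf_per hd hwp n0)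
    (Wf_sup hd hwM n0) (Wf_grad hd hw1 hwp hwH n0)
  have hQ2 : q^2 ≤ |bI (fun x => b x * pd (Wf hd w n0) (ixs hd n0) x)| := by
    rw [hbQ]; exact pow_le_pow_left₀ hq.le hQw 2
  have hch := chain hd hw1 hwp hwH hH hM hom hom1 n0 hb hbp hbM hbg hQ2 c1 c2
  rw [← hKdef, ← hcdef] at hch
  have hsum0 : 0 ≤ ∑ m ∈ Finset.range (n0+1), Xs (m+1)^2 * (1/2)^(m+1) :=
    Finset.sum_nonneg fun m _ => by positivity
  obtain ⟨C1, hC1def⟩ : ∃ C1, C1 = 4 * (d * H^2) +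
    2 * κs 0 * (d * H^2 * ∑ m ∈ Finset.range (n0+1), Xs (m+1)^2 * (1/2)^(m+1)) := ⟨_, rfl⟩
  have hκ0 := κs_pos 0
  have hC1 : 0 < C1 := by rw [hC1def]; positivity
  obtain ⟨lam, hlamdef⟩ : ∃ lam, lam = 4 * C1 / η^2 := ⟨_, rfl⟩
  have hlam : 0 < lam := by rw [hlamdef]; positivity
  refine ⟨min (η^2 / (4 * lam)) (c^2 / (16 * M^2)), by positivity, ?_⟩
  rintro κ ⟨j, hj1, hj2⟩ θ sol
  have hκ : 0 < κ := by linarith [κs_pos j]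
  obtain ⟨n, hn0n, hκn, hsum⟩ : ∃ n, n0 ≤ n ∧ κs n / 2 ≤ κ ∧
      κ * (d * H^2 * ∑ m ∈ Finset.range (n+1), Xs (m+1)^2 * (1/2)^(m+1)) ≤ C1 := by
    rcases le_total n0 j with h | h
    · refine ⟨j, h, hj1, ?_⟩
      have h1 := κs_sum j
      have hs : 0 ≤ ∑ m ∈ Finset.range (j+1), Xs (m+1)^2 * (1/2)^(m+1) :=
        Finset.sum_nonneg fun m _ => by positivity
      calc κ * (d * H^2 * ∑ m ∈ Finset.range (j+1), Xs (m+1)^2 * (1/2)^(m+1))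
          ≤ (2 * κs j) * (d * H^2 * ∑ m ∈ Finset.range (j+1), Xs (m+1)^2 * (1/2)^(m+1)) := by gcongr
        _ = 2 * (d * H^2) * (κs j * ∑ m ∈ Finset.range (j+1), Xs (m+1)^2 * (1/2)^(m+1)) := by ring
        _ ≤ 2 * (d * H^2) * 2 := by gcongr
        _ ≤ C1 := by
          rw [hC1def]
          have : 0 ≤ 2 * κs 0 * (d * H^2 * ∑ m ∈ Finset.range (n0+1), Xs (m+1)^2 * (1/2)^(m+1)) := by positivity
          linarith
    · refine ⟨n0, le_rfl, ?_, ?_⟩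
      · linarith [κs_anti h]
      · have h1 : κ ≤ 2 * κs 0 := by linarith [κs_anti (Nat.zero_le j)]
        rw [hC1def]
        have h2 : 0 ≤ 4 * (d * H^2) := by positivity
        have h3 : κ * (d * H^2 * ∑ m ∈ Finset.range (n0+1), Xs (m+1)^2 * (1/2)^(m+1)) ≤
          2 * κs 0 * (d * H^2 * ∑ m ∈ Finset.range (n0+1), Xs (m+1)^2 * (1/2)^(m+1)) := by gcongr
        linarith
  by_cases hD : lam * (κ * dissip θ) ≤ η^2/4
  swap
  · push Not at hD
    refine (min_le_left _ _).trans ?_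
    rw [div_le_iff₀ (by positivity)]
    linarith
  refine (min_le_right _ _).trans ?_
  obtain ⟨m, hm⟩ : ∃ m, n0 + m = n + 1 := ⟨n + 1 - n0, by omega⟩
  obtain ⟨a, ha, hap, haM, hag, haQ⟩ := hch m
  rw [hm] at haQ hag
  have hX := Xs_pos (n+1)
  have hT0 : Ts 0 = 0 := by simp [Ts]
  have hTn : 0 ≤ Ts n := by rw [← hT0]; exact Ts_mono.monotone (Nat.zero_le n)
  have hTs := Ts_succ n
  have hhalf : (1/2:ℝ)^(n+1) = 2 * (1/2)^(n+2) := by rw [pow_succ (1/2:ℝ) (n+1)]; ring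
  have hpos : (0:ℝ) < (1/2)^(n+2) := by positivity
  have hT1 : Ts (n+1) ≤ 1 := by unfold Ts; have : (0:ℝ) < (1/2)^(n+1) := by positivity
                                linarith
  have hlow : ∀ s ∈ Set.Icc (Ts n + (1/2)^(n+2)) (Ts (n+1)), (c * Xs (n+1) / 2)^2 / M^2 ≤ bI (gradSq (θ s)) := by
    intro s hs
    have hs01 : s ∈ Set.Ioc (0:ℝ) 1 := ⟨by linarith [hs.1], hs.2.trans hT1⟩
    have h1 := closeness hd sol hκ hw1 hwp hwH hlam n hs
    have h2 : nr (fun x => f x - w x) ≤ η/2 := (nr_le_sup (f := fun x => f x - w x) (hf.sub hwc)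
      (fun x => by rw [abs_sub_comm]; exact hwf x)).trans hεη
    have h3 := pow_le_pow_left₀ (nr_nonneg _) h2 2
    have h4 : κ / lam * (d * H^2 * ∑ m ∈ Finset.range (n+1), Xs (m+1)^2 * (1/2)^(m+1)) ≤ η^2/4 := by
      rw [div_mul_eq_mul_div, div_le_iff₀ hlam]
      refine hsum.trans (le_of_eq ?_)
      rw [hlamdef]; field_simp
    have h5 : nr (fun x => θ s x - Wf hd w (n+1) x) ≤ η := by
      apply abs_le_of_sq_le_sq' _ hη.le |>.2
      have e1 : (η/2)^2 = η^2/4 := by ring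
      rw [e1] at h3
      have h10 := sq_nonneg η
      linarith only [h1, h3, h4, hD, h10]
    have h6 := grad_low ((sol.spaceC2 s hs01).of_le (by norm_num)) (sol.periodic s) (hWn1 (n+1))
      (Wf_per hd hwp (n+1)) ha hap haM (ixs hd (n+1)) (hag _) haQ hX hc h5 hKη
    rw [div_le_iff₀ (by positivity)]
    linarith
  have h7 := dissip_low hd sol hκ (by linarith) (by linarith) hT1 hlow
  have h8 : Ts (n+1) - (Ts n + (1/2)^(n+2)) = (1/2)^(n+2) := by linarith
  rw [h8] at h7
  have h9 : c^2 / (16 * M^2) = κs n / 2 * ((1/2)^(n+2) * ((c * Xs (n+1) / 2)^2 / M^2)) := by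
    have e := pow_half (n+2)
    have e2 : (2:ℝ)^(n+2) = 2 * 2^(n+1) := by ring
    unfold κs
    rw [e2] at e
    have e3 : (1/2:ℝ)^(n+2) = 1 / (2 * 2^(n+1)) := by
      rw [eq_div_iff (by positivity)]; exact e
    rw [e3]
    field_simp
    norm_num
  rw [h9]
  exact mul_le_mul hκn h7 (by positivity) hκ.le

/-- **Anomalous diffusion along a distinguished set of diffusivities.**
For the vector field `u` of the main anomalous-diffusion theorem there is a
sequence `κ_j → 0` of positive diffusivities, depending only on `α` and `d`,
such that with `𝒦 := ∪_{j≥1} [κ_j/2, 2κ_j]`, for every zero-mean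
`θ_in ∈ H¹(T^d)` there is `ϱ > 0` with
`inf_{κ ∈ 𝒦} κ ∫_0^1 ∫_{T^d} |∇θ^κ|² dx dt ≥ ϱ ‖θ_in‖²_{L²(T^d)}`. -/
theorem anomalous_diffusion_on_permissible_diffusivities
    (d : ℕ) (hd : 2 ≤ d) (α : ℝ) (hα : α ∈ Set.Ioo (0:ℝ) (1/3)) :
    ∃ u : ℝ → (Fin d → ℝ) → Fin d → ℝ,
      (∀ t i, SpacePeriodic fun x => u t x i) ∧
      HolderVF α u ∧ WeakDivFree u ∧
      ∃ κseq : ℕ → ℝ, (∀ j, 0 < κseq j) ∧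
        Filter.Tendsto κseq Filter.atTop (𝓝 0) ∧
        ∀ (θin : (Fin d → ℝ) → ℝ) (g : (Fin d → ℝ) → Fin d → ℝ),
          SpacePeriodic θin →
          IntegrableOn (fun x => (θin x) ^ 2) (box d) →
          IntegrableOn (fun x => ∑ i, (g x i) ^ 2) (box d) →
          HasWeakGradient θin g →
          (∫ x in box d, θin x) = 0 →
          ∃ ϱ : ℝ, 0 < ϱ ∧
            ∀ κ : ℝ, (∃ j : ℕ, 1 ≤ j ∧ κ ∈ Set.Icc (κseq j / 2) (2 * κseq j)) →
              ∀ θ : ℝ → (Fin d → ℝ) → ℝ, IsAdvDiffSol u κ θin θ →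
                ϱ * l2sq θin ≤ κ * dissip θ := by
  refine ⟨us hd, us_per hd, us_hol hd hα, us_div hd, κs, κs_pos, κs_lim, ?_⟩
  intro θin g hp _ hg hw h0
  have hl : l2sq θin = nr θin ^ 2 := (nr_sq θin).symm
  by_cases hc : Continuous θin
  swap
  · refine ⟨1, one_pos, ?_⟩
    intro κ _ θ sol
    exfalso
    apply hc
    have h1 : Continuous (fun x => θ 0 x) := by
      rw [← continuousOn_univ]
      exact sol.cont.comp (f := fun x => ((0:ℝ), x)) (by fun_prop) (fun x _ => ⟨by simp, trivial⟩)
    have h2 : (fun x => θ 0 x) = θin := funext sol.init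
    rwa [h2] at h1
  rcases (nr_nonneg θin).eq_or_lt with h | h
  · refine ⟨1, one_pos, ?_⟩
    rintro κ ⟨j, _, hj, _⟩ θ _
    rw [hl, ← h]
    have h1 : 0 ≤ κ := by linarith [κs_pos j]
    have h2 := mul_nonneg h1 (dissip_nonneg θ)
    simpa using h2
  · obtain ⟨r, hr, hb⟩ := main_bd hd hc hp hg hw h0 h
    refine ⟨r / nr θin ^ 2, by positivity, ?_⟩
    rintro κ ⟨j, _, hj⟩ θ sol
    rw [hl, div_mul_cancel₀ _ (by positivity)]
    exact hb κ ⟨j, hj⟩ θ sol
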